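/- arXiv:math/9207210 — 6 statements merged into one kernel-verified Lean document; each statement's English description precedes it below -/
import Mathlib

section
/- Let k be an algebraically closed field of characteristic 2, let a be a nonzero element of k, and let n, s, t be positive integers with gcd(n,t) = 1, 2 dividing n, t dividing s, and 1 < t < n - 3. Then the polynomial f = Y^n - a·Y^t + X^s over the rational function field k(X) has n distinct roots in a splitting field, and the image of its Galois group in the group of permutations of this set of roots is either the alternating group or the full symmetric group on those n roots. -/
open Polynomial
open scoped Classical

open MulAction Pointwise in
/-- `c` acts as a cycle with support `S`. -/
def IsCyc {G α : Type*} [Group G] [MulAction G α] (c : G) (S : Set α) : Prop :=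
  (∀ x, x ∉ S → c • x = x) ∧ ∀ x ∈ S, ∀ y ∈ S, ∃ i : ℤ, c ^ i • x = y

section grp
open MulAction Pointwise

lemma IsCyc.smul_mem {G α : Type*} [Group G] [MulAction G α] {c : G} {S : Set α}
    (h : IsCyc c S) {x : α} (hx : x ∈ S) : c • x ∈ S := by
  by_contra hc
  have := h.1 _ hc
  have h2 : c • x = x := smul_left_cancel c this
  exact hc (by rw [h2]; exact hx)

lemma IsCyc.smul_mem_iff {G α : Type*} [Group G] [MulAction G α] {c : G} {S : Set α}
    (h : IsCyc c S) {x : α} : c • x ∈ S ↔ x ∈ S := by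
  refine ⟨fun hx => ?_, h.smul_mem⟩
  by_contra hc
  rw [h.1 _ hc] at hx
  exact hc hx

lemma IsCyc.zpow_smul_mem {G α : Type*} [Group G] [MulAction G α] {c : G} {S : Set α}
    (h : IsCyc c S) {x : α} (hx : x ∈ S) (i : ℤ) : c ^ i • x ∈ S := by
  induction i with
  | zero => simpa
  | succ i ih =>
    have := h.smul_mem ih
    rwa [smul_smul, ← zpow_one_add, add_comm] at this
  | pred i ih =>
    rw [← h.smul_mem_iff, smul_smul, ← zpow_one_add]
    convert ih using 3
    ring

lemma IsCyc.conj {G α : Type*} [Group G] [MulAction G α] {c : G} {S : Set α}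
    (h : IsCyc c S) (g : G) : IsCyc (g * c * g⁻¹) (g • S) := by
  constructor
  · intro x hx
    rw [Set.mem_smul_set_iff_inv_smul_mem] at hx
    have := h.1 _ hx
    rw [mul_smul, mul_smul, this, smul_inv_smul]
  · intro x hx y hy
    rw [Set.mem_smul_set_iff_inv_smul_mem] at hx hy
    obtain ⟨i, hi⟩ := h.2 _ hx _ hy
    refine ⟨i, ?_⟩
    rw [conj_zpow, mul_smul, mul_smul, hi, smul_inv_smul]

lemma IsCyc.block {G α : Type*} [Group G] [MulAction G α] [Finite α] [IsPretransitive G α]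
    {c : G} {S : Set α} (h : IsCyc c S) (hS : S.Nonempty) {B : Set α} (hB : IsBlock G B)
    (hBn : B.Nonempty) : S.ncard ≤ B.ncard ∨ B.ncard ∣ S.ncard := by
  obtain ⟨x, hx⟩ := hS
  obtain ⟨b, hb⟩ := hBn
  obtain ⟨g, hg⟩ := exists_smul_eq G b x
  have hB' : IsBlock G (g • B) := hB.translate g
  have hcard : (g • B).ncard = B.ncard := Set.ncard_smul_set g B
  have hxB : x ∈ g • B := hg ▸ Set.smul_mem_smul_set hb
  rw [← hcard]
  generalize g • B = B' at *
  rcases hB'.smul_eq_or_disjoint c with hc | hc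
  · left
    apply Set.ncard_le_ncard _ (Set.toFinite _)
    intro y hy
    obtain ⟨i, rfl⟩ := h.2 x hx y hy
    have : c ∈ stabilizer G B' := hc
    have h2 : c ^ i ∈ stabilizer G B' := Subgroup.zpow_mem _ this i
    rw [mem_stabilizer_iff] at h2
    rw [← h2]
    exact Set.smul_mem_smul_set hxB
  · right
    have hsub : B' ⊆ S := by
      intro y hy
      by_contra hyS
      have h1 := h.1 y hyS
      have : y ∈ c • B' := by
        rw [← h1]; exact Set.smul_mem_smul_set hy
      exact Set.disjoint_left.mp hc this hy
    let C : SubMulAction (Subgroup.zpowers c) α :=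
      { carrier := S
        smul_mem' := by
          rintro ⟨_, ⟨i, rfl⟩⟩ y hy
          exact h.zpow_smul_mem hy i }
    have hBz : IsBlock (Subgroup.zpowers c) B' := hB'.subgroup
    have hBC : IsBlock (Subgroup.zpowers c) (Subtype.val ⁻¹' B' : Set C) :=
      hBz.subtype_val_preimage
    have : IsPretransitive (Subgroup.zpowers c) C := by
      constructor
      rintro ⟨u, hu⟩ ⟨v, hv⟩
      obtain ⟨i, hi⟩ := h.2 u hu v hv
      exact ⟨⟨c ^ i, ⟨i, rfl⟩⟩, Subtype.ext hi⟩
    have key := hBC.ncard_dvd_card ⟨⟨x, hx⟩, hxB⟩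
    have e1 : (Subtype.val ⁻¹' B' : Set C).ncard = B'.ncard := by
      rw [← Set.ncard_image_of_injective _ Subtype.val_injective]
      congr 1
      ext v
      constructor
      · rintro ⟨w, hw, rfl⟩; exact hw
      · intro hv; exact ⟨⟨v, hsub hv⟩, hv, rfl⟩
    have e2 : Nat.card C = S.ncard := rfl
    rwa [e1, e2] at key

lemma prim_of_cyc {G α : Type*} [Group G] [MulAction G α] [Finite α] [IsPretransitive G α]
    {c d : G} {S T : Set α} (hc : IsCyc c S) (hd : IsCyc d T) 
    (hco : Nat.Coprime S.ncard T.ncard) (h1 : 1 < S.ncard) (h2 : S.ncard < T.ncard)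
    (h3 : T.ncard < Nat.card α) (h4 : Nat.card α < S.ncard + T.ncard) : IsPreprimitive G α := by
  constructor
  intro B hB
  rcases B.eq_empty_or_nonempty with h0 | hBn
  · left; rw [h0]; exact Set.subsingleton_empty
  have hSn : S.Nonempty := by
    apply Set.nonempty_of_ncard_ne_zero; omega
  have hTn : T.Nonempty := by
    apply Set.nonempty_of_ncard_ne_zero; omega
  have hBd := hB.ncard_dvd_card hBn
  have hBpos : 0 < B.ncard := (Set.ncard_pos).mpr hBn
  rcases hc.block hSn hB hBn with hS | hS <;> rcases hd.block hTn hB hBn with hT | hT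
  · right
    rw [Set.eq_univ_iff_ncard]
    obtain ⟨m, hm⟩ := hBd
    have : m < 2 := by
      by_contra hm2
      have : B.ncard * 2 ≤ B.ncard * m := Nat.mul_le_mul_left _ (by omega)
      omega
    interval_cases m <;> omega
  · exfalso
    have h5 : B.ncard ∣ Nat.card α - T.ncard := Nat.dvd_sub hBd hT
    have := Nat.le_of_dvd (by omega) h5
    omega
  · exfalso
    have := Nat.le_of_dvd (by omega) hS
    omega
  · left
    have := Nat.eq_one_of_dvd_coprimes hco hS hT
    rw [← Set.ncard_le_one_iff_subsingleton]
    omega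

lemma trans_of_cyc (i : ℕ) : ∀ {G α : Type*} [Group G] [MulAction G α] [Finite α]
    [IsPretransitive G α]
    {c d : G} {S T : Set α} (_ : IsCyc c S) (_ : IsCyc d T) 
    (_ : Nat.Coprime S.ncard T.ncard) (_ : 1 < S.ncard) (_ : S.ncard < T.ncard)
    (_ : T.ncard + i ≤ Nat.card α) (_ : Nat.card α < S.ncard + T.ncard),
    IsMultiplyPretransitive G α (i + 1) := by
  induction i with
  | zero =>
    intros
    rw [zero_add, is_one_pretransitive_iff]
    assumption
  | succ i ih =>
    intro G α _ _ _ _ c d S T hc hd hco h1 h2 h3 h4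
    have hprim : IsPreprimitive G α := prim_of_cyc hc hd hco h1 h2 (by omega) h4
    have hcompl := Set.ncard_add_ncard_compl T
    have hT2 : IsPretransitive (fixingSubgroup G Tᶜ) (SubMulAction.ofFixingSubgroup G Tᶜ) := by
      constructor
      rintro ⟨x, hx⟩ ⟨y, hy⟩
      rw [SubMulAction.mem_ofFixingSubgroup_iff, Set.notMem_compl_iff] at hx hy
      obtain ⟨j, hj⟩ := hd.2 x hx y hy
      have hdm : d ∈ fixingSubgroup G Tᶜ := by
        rw [mem_fixingSubgroup_iff]
        intro y hy
        exact hd.1 y hy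
      exact ⟨⟨d ^ j, Subgroup.zpow_mem _ hdm j⟩, Subtype.ext hj⟩
    have h2t : IsMultiplyPretransitive G α 2 :=
      hprim.is_two_pretransitive (s := Tᶜ) (n := Tᶜ.ncard - 1) (by omega) (by omega) hT2
    obtain ⟨a, ha⟩ : Tᶜ.Nonempty := by
      apply Set.nonempty_of_ncard_ne_zero; omega
    have hcompl' := Set.ncard_add_ncard_compl S
    obtain ⟨b, hb⟩ : Sᶜ.Nonempty := by
      apply Set.nonempty_of_ncard_ne_zero; omega
    obtain ⟨g, hg⟩ := exists_smul_eq G b a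
    have hc' := hc.conj g
    have haS : a ∉ g • S := by
      rw [← hg, Set.smul_mem_smul_set_iff]; exact hb
    have hcS : (g • S).ncard = S.ncard := Set.ncard_smul_set g S
    rw [← hcS] at hco h1 h2 h4
    generalize g • S = S' at *
    generalize g * c * g⁻¹ = c' at *
    have key : ∀ {e : G} {U : Set α} (he : IsCyc e U) (haU : a ∉ U),
        ∃ e' : stabilizer G a, IsCyc e' (Subtype.val ⁻¹' U : Set (SubMulAction.ofStabilizer G a)) ∧
        (Subtype.val ⁻¹' U : Set (SubMulAction.ofStabilizer G a)).ncard = U.ncard := by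
      intro e U he haU
      refine ⟨⟨e, he.1 a haU⟩, ⟨?_, ?_⟩, ?_⟩
      · rintro ⟨x, hx⟩ hxU
        exact Subtype.ext (he.1 x hxU)
      · rintro ⟨x, hx⟩ hxU ⟨y, hy⟩ hyU
        obtain ⟨j, hj⟩ := he.2 x hxU y hyU
        exact ⟨j, Subtype.ext hj⟩
      · rw [← Set.ncard_image_of_injective _ Subtype.val_injective]
        congr 1
        ext v
        constructor
        · rintro ⟨w, hw, rfl⟩; exact hw
        · intro hv; exact ⟨⟨v, fun h => haU (by rw [← (show v = a from h)]; exact hv)⟩, hv, rfl⟩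
    obtain ⟨c₁, hc₁, hS₁⟩ := key hc' haS
    obtain ⟨d₁, hd₁, hT₁⟩ := key hd ha
    have hcard := SubMulAction.nat_card_ofStabilizer_add_one_eq G a
    have htr : IsPretransitive (stabilizer G a) (SubMulAction.ofStabilizer G a) := by
      rw [← is_one_pretransitive_iff]
      exact (SubMulAction.ofStabilizer.isMultiplyPretransitive (n := 1)).mp h2t
    exact (SubMulAction.ofStabilizer.isMultiplyPretransitive (n := i + 1)).mpr
      (ih hc₁ hd₁ (by rwa [hS₁, hT₁]) (by omega) (by omega) (by omega) (by omega))

/-- A permutation fixing everything outside a 3-element set, moving a 3-cycle. -/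
lemma alt_le_of_three {G α : Type*} [Group G] [MulAction G α] [Fintype α]
    (hprim : IsPreprimitive G α) {c : G} {x y z : α} (hxy : x ≠ y) (hyz : y ≠ z) (hxz : x ≠ z)
    (h1 : c • x = y) (h2 : c • y = z) (h3 : c • z = x)
    (h4 : ∀ w, w ≠ x → w ≠ y → w ≠ z → c • w = w) :
    alternatingGroup α ≤ (toPermHom G α).range := by
  have hp : IsPreprimitive (toPermHom G α).range α := by
    refine IsPreprimitive.of_surjective (M := G) (φ := (toPermHom G α).rangeRestrict)
      (f := ⟨id, ?_⟩) Function.surjective_id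
    intro m a; rfl
  refine Equiv.Perm.alternatingGroup_le_of_isPreprimitive_of_isThreeCycle_mem hp
    (g := toPermHom G α c) ?_ ⟨c, rfl⟩
  rw [← card_support_eq_three_iff]
  have : (toPermHom G α c).support = {x, y, z} := by
    ext w
    simp only [Equiv.Perm.mem_support, toPermHom_apply, toPerm_apply, Finset.mem_insert,
      Finset.mem_singleton]
    constructor
    · intro h; by_contra hcon; push Not at hcon; exact h (h4 w hcon.1 hcon.2.1 hcon.2.2)
    · rintro (rfl | rfl | rfl)
      · rw [h1]; exact hxy.symm
      · rw [h2]; exact hyz.symm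
      · rw [h3]; exact hxz
  rw [this]
  exact Finset.card_eq_three.mpr ⟨x, y, z, hxy, hxz, hyz, rfl⟩

lemma alt_le_of_cyc_aux {G α : Type*} [Group G] [MulAction G α] [Fintype α] [IsPretransitive G α]
    {c d : G} {S T : Set α} (hc : IsCyc c S) (hd : IsCyc d T) 
    (hco : Nat.Coprime S.ncard T.ncard) (h1 : 1 < S.ncard) (h2 : S.ncard < T.ncard)
    (h4 : Nat.card α + 1 = S.ncard + T.ncard) : 
    alternatingGroup α ≤ (toPermHom G α).range := by
  have hprim : IsPreprimitive G α := prim_of_cyc hc hd hco h1 h2 (by omega) (by omega)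
  have htr := trans_of_cyc (S.ncard - 1) hc hd hco h1 h2 (by omega) (by omega)
  rw [show S.ncard - 1 + 1 = S.ncard by omega] at htr
  have hcompl := Set.ncard_add_ncard_compl T
  obtain ⟨x, hx⟩ : T.Nonempty := by
    apply Set.nonempty_of_ncard_ne_zero; omega
  have hC' : (insert x Tᶜ).ncard = S.ncard := by
    rw [Set.ncard_insert_of_notMem (by simpa using hx)]; omega
  -- move S onto insert x Tᶜ
  obtain ⟨g, hg⟩ : ∃ g : G, g • S = insert x Tᶜ := by
    have e1 : Nonempty (Fin S.ncard ≃ S) := Finite.card_eq.mp (by rw [Nat.card_coe_set_eq]; simp)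
    have e2 : Nonempty (Fin S.ncard ≃ (insert x Tᶜ : Set α)) :=
      Finite.card_eq.mp (by rw [Nat.card_coe_set_eq, hC']; simp)
    obtain ⟨e1⟩ := e1
    obtain ⟨e2⟩ := e2
    obtain ⟨g, hg⟩ := (isMultiplyPretransitive_iff.mp htr)
      (e1.toEmbedding.trans (Function.Embedding.subtype _))
      (e2.toEmbedding.trans (Function.Embedding.subtype _))
    refine ⟨g, ?_⟩
    apply Set.eq_of_subset_of_ncard_le
    · rintro _ ⟨s, hs, rfl⟩
      have := DFunLike.congr_fun hg (e1.symm ⟨s, hs⟩)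
      simp at this
      show g • s ∈ _
      rw [this]
      exact (e2 _).2
    · rw [Set.ncard_smul_set, hC']
    · exact Set.toFinite _
  have hc' := hc.conj g
  rw [hg] at hc'
  generalize g * c * g⁻¹ = c' at *
  clear hc hg htr
  have mS : ∀ w, w ∈ insert x Tᶜ ↔ (w = x ∨ w ∉ T) := fun w => by simp
  have hxS : x ∈ insert x Tᶜ := by simp
  have hmov : ∀ {e : G} {U : Set α}, IsCyc e U → 1 < U.ncard → ∀ u ∈ U, e • u ≠ u := by
    intro e U he hU u hu hfix
    obtain ⟨v, hv, hvu⟩ := Set.exists_ne_of_one_lt_ncard hU u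
    obtain ⟨i, hi⟩ := he.2 u hu v hv
    have : e ∈ stabilizer G u := hfix
    have h2 : e ^ i ∈ stabilizer G u := Subgroup.zpow_mem _ this i
    rw [mem_stabilizer_iff] at h2
    exact hvu (hi ▸ h2)
  have cx := hmov hc' (by omega) x hxS
  have dx := hmov hd (by omega) x hx
  have cxS := hc'.smul_mem hxS
  have dxT := hd.smul_mem hx
  have fixc : ∀ w, w ∈ T → w ≠ x → c' • w = w := by
    intro w hw hwx
    apply hc'.1; rw [mS]; tauto
  have fixci : ∀ w, w ∈ T → w ≠ x → c'⁻¹ • w = w := by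
    intro w hw hwx
    rw [inv_smul_eq_iff, fixc w hw hwx]
  have fixdi : ∀ w, w ∉ T → d⁻¹ • w = w := by
    intro w hw; rw [inv_smul_eq_iff, hd.1 w hw]
  have cxT : c' • x ∉ T := by
    rw [mS] at cxS; tauto
  have dix : d⁻¹ • x ∈ T := by rw [← hd.smul_mem_iff, smul_inv_smul]; exact hx
  have dix' : d⁻¹ • x ≠ x := by rw [Ne, inv_smul_eq_iff]; exact fun h => dx h.symm
  have cix' : c'⁻¹ • x ≠ x := by rw [Ne, inv_smul_eq_iff]; exact fun h => cx h.symm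
  have cix : c'⁻¹ • x ∉ T := by
    have : c'⁻¹ • x ∈ insert x Tᶜ := by
      rw [← hc'.smul_mem_iff, smul_inv_smul]; exact hxS
    rw [mS] at this; tauto
  refine alt_le_of_three hprim (c := c' * d * c'⁻¹ * d⁻¹) (x := x) (y := c' • x) (z := d • x)
    cx.symm ?_ dx.symm ?_ ?_ ?_ ?_
  · intro h; exact cxT (h ▸ dxT)
  · rw [mul_smul, mul_smul, mul_smul, fixci _ dix dix', smul_inv_smul]
  · rw [mul_smul, mul_smul, mul_smul, fixdi _ cxT, inv_smul_smul, fixc _ dxT dx]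
  · rw [mul_smul, mul_smul, mul_smul, inv_smul_smul, hd.1 _ cix, smul_inv_smul]
  · intro w hw1 hw2 hw3
    rw [mul_smul, mul_smul, mul_smul]
    by_cases hwT : w ∈ T
    · have a1 : d⁻¹ • w ∈ T := by rw [← hd.smul_mem_iff, smul_inv_smul]; exact hwT
      have a2 : d⁻¹ • w ≠ x := by rw [Ne, inv_smul_eq_iff]; exact hw3
      rw [fixci _ a1 a2, smul_inv_smul, fixc w hwT hw1]
    · rw [fixdi w hwT]
      have a1 : c'⁻¹ • w ∈ insert x Tᶜ := by
        rw [← hc'.smul_mem_iff, smul_inv_smul, mS]; exact Or.inr hwT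
      have a2 : c'⁻¹ • w ≠ x := by rw [Ne, inv_smul_eq_iff]; exact hw2
      rw [mS] at a1
      rw [hd.1 _ (by tauto), smul_inv_smul]

lemma alt_le_of_cyc {G α : Type*} [Group G] [MulAction G α] [Fintype α] [IsPretransitive G α]
    {c d : G} {S T : Set α} (hc : IsCyc c S) (hd : IsCyc d T) 
    (hco : Nat.Coprime S.ncard T.ncard) (h1 : 1 < S.ncard) (h2 : 1 < T.ncard)
    (h4 : Nat.card α + 1 = S.ncard + T.ncard) : 
    alternatingGroup α ≤ (toPermHom G α).range := by
  rcases lt_trichotomy S.ncard T.ncard with h | h | h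
  · exact alt_le_of_cyc_aux hc hd hco h1 h h4
  · rw [h] at hco
    rw [Nat.coprime_self] at hco; omega
  · exact alt_le_of_cyc_aux hd hc hco.symm h2 h (by omega)

/-- commutators of elements acting by everything in Alt. -/
lemma alt_le_of_comm {G α : Type*} [Group G] [MulAction G α] [Fintype α]
    (h5 : 5 ≤ Nat.card α) (H : Subgroup G)
    (h : alternatingGroup α ≤ (toPermHom G α).range) (hH : ∀ g₁ g₂ : G, g₁ * g₂ * g₁⁻¹ * g₂⁻¹ ∈ H) :
    alternatingGroup α ≤ H.map (toPermHom G α) := by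
  rw [← commutator_alternatingGroup_eq_self h5]
  refine (Subgroup.commutator_mono h h).trans ?_
  rw [Subgroup.commutator_le]
  rintro _ ⟨a, rfl⟩ _ ⟨b, rfl⟩
  exact ⟨a * b * a⁻¹ * b⁻¹, hH a b, by rw [commutatorElement_def]; simp only [map_mul, map_inv]⟩
lemma alt_three {G α : Type*} [Group G] [MulAction G α] [Finite α] (htr : ∀ x y : α, ∃ g : G, g • x = y)
    {c d : G} {S T : Set α} (hc : IsCyc c S) (hd : IsCyc d T) 
    (hco : Nat.Coprime S.ncard T.ncard) (h1 : 1 < S.ncard) (h2 : 1 < T.ncard)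
    (h4 : Nat.card α + 1 = S.ncard + T.ncard) (h5 : 5 ≤ Nat.card α) (H : Subgroup G)
    (hH : ∀ g₁ g₂ : G, g₁ * g₂ * g₁⁻¹ * g₂⁻¹ ∈ H) (u v w : α) (huv : u ≠ v) (hvw : v ≠ w) (huw : u ≠ w) :
    ∃ g ∈ H, g • u = v ∧ g • v = w ∧ g • w = u ∧ ∀ r, r ≠ u → r ≠ v → r ≠ w → g • r = r := by
  have hft : Fintype α := Fintype.ofFinite _
  have : IsPretransitive G α := ⟨htr⟩
  have halt2 := alt_le_of_comm h5 H (alt_le_of_cyc hc hd hco h1 h2 h4) hH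
  obtain ⟨g, hg, hg2⟩ := halt2 (show Equiv.swap u v * Equiv.swap v w ∈ alternatingGroup α by
    rw [Equiv.Perm.mem_alternatingGroup]
    rw [map_mul, Equiv.Perm.sign_swap huv, Equiv.Perm.sign_swap hvw]; rfl)
  have hact : ∀ r : α, g • r = (Equiv.swap u v * Equiv.swap v w) r := by
    intro r
    rw [← hg2]; rfl
  refine ⟨g, hg, ?_, ?_, ?_, ?_⟩
  · rw [hact, Equiv.Perm.mul_apply, Equiv.swap_apply_of_ne_of_ne huv huw, Equiv.swap_apply_left]
  · rw [hact, Equiv.Perm.mul_apply, Equiv.swap_apply_left,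
      Equiv.swap_apply_of_ne_of_ne huw.symm hvw.symm]
  · rw [hact, Equiv.Perm.mul_apply, Equiv.swap_apply_right, Equiv.swap_apply_right]
  · intro r hru hrv hrw
    rw [hact, Equiv.Perm.mul_apply, Equiv.swap_apply_of_ne_of_ne hrv hrw,
      Equiv.swap_apply_of_ne_of_ne hru hrv]

lemma alt_final {G α : Type*} [Group G] [MulAction G α] {i1 : Fintype α} {i2 : DecidableEq α}
    (h5 : 5 ≤ Nat.card α)
    (htr : ∀ x y : α, ∃ g : G, g • x = y)
    (three : ∀ y u v w : α, u ≠ y → v ≠ y → w ≠ y → u ≠ v → v ≠ w → u ≠ w →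
      ∃ g : G, g • y = y ∧ g • u = v ∧ g • v = w ∧ g • w = u ∧
        ∀ r, r ≠ u → r ≠ v → r ≠ w → g • r = r) (H : Subgroup G)
    (hH : ∀ g₁ g₂ : G, g₁ * g₂ * g₁⁻¹ * g₂⁻¹ ∈ H) (π : Equiv.Perm α) (hπ : π ∈ alternatingGroup α) :
    ∃ g ∈ H, ∀ z, g • z = π z := by
  obtain rfl : i2 = fun a b => Classical.propDecidable _ := Subsingleton.elim _ _
  have third : ∀ F : Finset α, F.card ≤ 3 → ∃ w, w ∉ F := by
    intro F hF
    by_contra! hcon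
    have : F = Finset.univ := Finset.eq_univ_iff_forall.mpr hcon
    rw [this, Finset.card_univ, ← Nat.card_eq_fintype_card] at hF
    omega
  have htwo : IsMultiplyPretransitive G α 2 := by
    rw [is_two_pretransitive_iff]
    intro p q r l hpq hrl
    obtain ⟨g₁, hg₁⟩ := htr p r
    have hq : g₁ • q ≠ r := by
      rw [← hg₁]; exact fun h => hpq (smul_left_cancel g₁ h).symm
    by_cases hql : g₁ • q = l
    · exact ⟨g₁, hg₁, hql⟩
    obtain ⟨w, hw⟩ := third {r, l, g₁ • q} Finset.card_le_three
    simp only [Finset.mem_insert, Finset.mem_singleton, not_or] at hw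
    obtain ⟨σ, c1, c2, -⟩ := three r (g₁ • q) l w hq hrl.symm hw.1 hql (Ne.symm hw.2.1)
      (Ne.symm hw.2.2)
    refine ⟨σ * g₁, ?_, ?_⟩
    · rw [mul_smul, hg₁, c1]
    · rw [mul_smul, c2]
  have hprim : IsPreprimitive G α := isPreprimitive_of_is_two_pretransitive htwo
  obtain ⟨y, -⟩ := third ∅ (by simp)
  obtain ⟨u, hu⟩ := third {y} (by simp)
  obtain ⟨v, hv⟩ := third {y, u} (Finset.card_le_two.trans (by omega))
  obtain ⟨w, hw⟩ := third {y, u, v} Finset.card_le_three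
  simp only [Finset.mem_insert, Finset.mem_singleton, not_or] at hu hv hw
  obtain ⟨σ, c1, c2, c3, c4, c5⟩ := three y u v w hu hv.1 hw.1 (Ne.symm hv.2) (Ne.symm hw.2.2)
    (Ne.symm hw.2.1)
  have halt : alternatingGroup α ≤ (toPermHom G α).range :=
    alt_le_of_three hprim (c := σ) (x := u) (y := v) (z := w) (Ne.symm hv.2) (Ne.symm hw.2.2)
      (Ne.symm hw.2.1) c2 c3 c4 c5
  obtain ⟨g, hg, hg2⟩ := alt_le_of_comm h5 H halt hH hπ
  exact ⟨g, hg, fun z => by rw [← hg2]; rfl⟩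
end grp

section loc
open PowerSeries

lemma psAdic (k : Type*) [Field k] : IsAdicComplete (Ideal.span {(PowerSeries.X : k⟦X⟧)}) k⟦X⟧ := by
  have key : ∀ (m : ℕ) (x y : k⟦X⟧),
      x ≡ y [SMOD ((Ideal.span {(PowerSeries.X : k⟦X⟧)}) ^ m • ⊤ : Submodule k⟦X⟧ k⟦X⟧)] ↔
        ∀ i < m, PowerSeries.coeff i x = PowerSeries.coeff i y := by
    intro m x y
    rw [SModEq.sub_mem, Ideal.span_singleton_pow, smul_eq_mul, Ideal.mul_top,
      Ideal.mem_span_singleton, PowerSeries.X_pow_dvd_iff]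
    simp only [map_sub, sub_eq_zero]
  refine { haus' := ?_, prec' := ?_ }
  · intro x hx
    ext i
    exact (key (i + 1) x 0).mp (hx _) i (Nat.lt_succ_self i)
  · intro f hf
    refine ⟨PowerSeries.mk fun i => PowerSeries.coeff i (f (i + 1)), fun n => ?_⟩
    rw [key]
    intro i hi
    rw [PowerSeries.coeff_mk]
    exact ((key (i + 1) _ _).mp (hf hi) i (Nat.lt_succ_self i)).symm

lemma odd_cast_ne {k : Type*} [Field k] [CharP k 2] {i : ℕ} (hi : Odd i) : (i : k) ≠ 0 := by
  rw [Ne, CharP.cast_eq_zero_iff k 2]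
  exact hi.not_two_dvd_nat

lemma even_cast {k : Type*} [Field k] [CharP k 2] {i : ℕ} (hi : Even i) : (i : k) = 0 := by
  rw [CharP.cast_eq_zero_iff k 2]
  exact hi.two_dvd

lemma hensel_tri {k : Type*} [Field k] [CharP k 2] {n i : ℕ} (hn : Even n) (hi : Odd i)
    (hin : i < n) (b c : k⟦X⟧) (hb : constantCoeff b = 1) (hc : constantCoeff c = 0)
    (v : k) (hv : v ^ (n - i) = 1) :
    ∃ U : k⟦X⟧, U ^ n - b * U ^ i + c = 0 ∧ constantCoeff U = v := by
  have hv0 : v ≠ 0 := by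
    rintro rfl
    rw [zero_pow (by omega)] at hv
    exact zero_ne_one hv
  have := psAdic k
  have H := HenselianRing.is_henselian (R := k⟦X⟧) (I := Ideal.span {(PowerSeries.X : k⟦X⟧)})
  let f : Polynomial k⟦X⟧ := Polynomial.X ^ n - Polynomial.C b * Polynomial.X ^ i + Polynomial.C c
  have hf : f.Monic := by
    have : f = Polynomial.X ^ n + (Polynomial.C c - Polynomial.C b * Polynomial.X ^ i) := by
      simp only [f]; ring
    rw [this]
    apply Polynomial.monic_X_pow_add
    refine lt_of_le_of_lt (Polynomial.degree_sub_le _ _) ?_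
    rw [max_lt_iff]
    constructor
    · refine lt_of_le_of_lt Polynomial.degree_C_le ?_
      exact_mod_cast (by omega : 0 < n)
    · refine lt_of_le_of_lt (Polynomial.degree_C_mul_X_pow_le _ _) ?_
      exact_mod_cast hin
  obtain ⟨U, hU, hU2⟩ := H f hf (PowerSeries.C v) (by
    rw [Ideal.mem_span_singleton, PowerSeries.X_dvd_iff]
    simp only [f, Polynomial.eval_add, Polynomial.eval_sub, Polynomial.eval_mul,
      Polynomial.eval_pow, Polynomial.eval_X, Polynomial.eval_C, map_add, map_sub, map_mul,
      map_pow, hb, hc, constantCoeff_C]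
    rw [show n = (n - i) + i by omega, pow_add, hv]; ring) (by
    apply IsUnit.map
    rw [PowerSeries.isUnit_iff_constantCoeff, isUnit_iff_ne_zero]
    simp only [f, Polynomial.derivative_add, Polynomial.derivative_sub, Polynomial.derivative_C,
      Polynomial.derivative_X_pow, Polynomial.derivative_C_mul,
      Polynomial.eval_add, Polynomial.eval_sub, Polynomial.eval_mul,
      Polynomial.eval_pow, Polynomial.eval_X, Polynomial.eval_C, map_add, map_sub, map_mul,
      map_pow, hb, constantCoeff_C, Polynomial.eval_zero, map_zero, map_natCast]
    simp only [ne_eq]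
    simp [even_cast hn, odd_cast_ne hi, hv0])
  refine ⟨U, by simpa [f] using hU, ?_⟩
  rw [Ideal.mem_span_singleton, PowerSeries.X_dvd_iff, map_sub, constantCoeff_C, sub_eq_zero] at hU2
  exact hU2

lemma tri_unique {k : Type*} [Field k] [CharP k 2] {n i : ℕ} (hn : Even n) (hi : Odd i)
    (b c U V : k⟦X⟧) (hb : constantCoeff b = 1)
    (hU : U ^ n - b * U ^ i + c = 0) (hV : V ^ n - b * V ^ i + c = 0)
    (h : constantCoeff U = constantCoeff V) (h0 : constantCoeff U ≠ 0) : U = V := by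
  have e1 := Commute.geom_sum₂_mul (Commute.all U V) n
  have e2 := Commute.geom_sum₂_mul (Commute.all U V) i
  have h3 : ((∑ j ∈ Finset.range n, U ^ j * V ^ (n - 1 - j)) -
    b * (∑ j ∈ Finset.range i, U ^ j * V ^ (i - 1 - j))) * (U - V) = 0 := by
    rw [sub_mul, mul_assoc, e1, e2]
    linear_combination hU - hV
  have cc : ∀ m : ℕ, constantCoeff (∑ j ∈ Finset.range m, U ^ j * V ^ (m - 1 - j)) =
      m * constantCoeff U ^ (m - 1) := by
    intro m
    rw [map_sum, Finset.sum_congr rfl (g := fun _ => constantCoeff U ^ (m - 1))]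
    · simp
    · intro j hj
      rw [Finset.mem_range] at hj
      rw [map_mul, map_pow, map_pow, ← h, ← pow_add]
      congr 1; omega
  rcases mul_eq_zero.mp h3 with h4 | h4
  · exfalso
    have := congrArg (PowerSeries.constantCoeff (R := k)) h4
    rw [map_sub, map_mul, cc, cc, hb, even_cast hn, map_zero] at this
    simp [odd_cast_ne hi, h0] at this
  · exact sub_eq_zero.mp h4

noncomputable def rescaleEquiv {k : Type*} [Field k] (z : k) (hz : z ≠ 0) : k⟦X⟧ ≃ₐ[k] k⟦X⟧ :=
  AlgEquiv.ofAlgHom (rescaleAlgHom z) (rescaleAlgHom z⁻¹)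
    (by
      apply AlgHom.ext; intro f
      show rescaleAlgHom _ (rescaleAlgHom _ f) = f
      rw [← AlgHom.coe_toRingHom, ← AlgHom.coe_toRingHom]
      simp only [coe_rescaleAlgHom]
      ext j; simp [coeff_rescale, ← mul_assoc, ← mul_pow, hz])
    (by
      apply AlgHom.ext; intro f
      show rescaleAlgHom _ (rescaleAlgHom _ f) = f
      rw [← AlgHom.coe_toRingHom, ← AlgHom.coe_toRingHom]
      simp only [coe_rescaleAlgHom]
      ext j; simp [coeff_rescale, ← mul_assoc, ← mul_pow, hz])

lemma rescaleEquiv_apply {k : Type*} [Field k] (z : k) (hz : z ≠ 0) (f : k⟦X⟧) :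
    rescaleEquiv z hz f = rescale z f := by
  show rescaleAlgHom _ f = _
  rw [← AlgHom.coe_toRingHom, coe_rescaleAlgHom]

lemma ps_transc {k : Type*} [Field k] {t : ℕ} (ht : 0 < t) :
    Transcendental k (algebraMap k⟦X⟧ (FractionRing k⟦X⟧) (1 + PowerSeries.X ^ t)) := by
  rw [transcendental_algebraMap_iff (IsFractionRing.injective _ _)]
  intro h
  have h2 : IsAlgebraic k ((PowerSeries.X : k⟦X⟧) ^ t) := by
    have := h.sub (isAlgebraic_one)
    simpa using this
  have h3 : IsAlgebraic k (PowerSeries.X : k⟦X⟧) := h2.of_pow ht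
  obtain ⟨p, hp, hp2⟩ := h3
  apply hp
  rw [← Polynomial.coe_inj (R := k)] 
  rw [Polynomial.coe_zero, ← hp2, Polynomial.aeval_eq_sum_range]
  ext j
  simp [PowerSeries.coeff_X_pow]
  intro h
  rw [Polynomial.coeff_eq_zero_of_natDegree_lt h]

lemma local_cycle (k : Type*) [Field k] [IsAlgClosed k] [CharP k 2] (n t : ℕ)
    (hn : Even n) (ht : Odd t) (ht1 : 1 < t) (htn : t < n) :
    ∃ (w : FractionRing k⟦X⟧) (τ : FractionRing k⟦X⟧ ≃ₐ[k] FractionRing k⟦X⟧)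
      (x : FractionRing k⟦X⟧) (A : Finset (FractionRing k⟦X⟧)),
      Transcendental k w ∧ τ w = w ∧ x ^ n - w * x ^ t + (w - 1) = 0 ∧
      (∀ i < t, ∀ j < t, (τ ^ i) x = (τ ^ j) x → i = j) ∧ (τ ^ t) x = x ∧
      A.card = n - t ∧ ∀ v ∈ A, v ^ n - w * v ^ t + (w - 1) = 0 ∧ τ v = v := by
  have hm : Odd (n - t) := Nat.Even.sub_odd htn.le hn ht
  have : NeZero (t : k) := ⟨odd_cast_ne ht⟩
  have : NeZero ((n - t : ℕ) : k) := ⟨odd_cast_ne hm⟩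
  obtain ⟨ζ, hζ⟩ := HasEnoughRootsOfUnity.exists_primitiveRoot k t
  obtain ⟨η, hη⟩ := HasEnoughRootsOfUnity.exists_primitiveRoot k (n - t)
  have hζ0 : ζ ≠ 0 := hζ.ne_zero (by omega)
  let ι := algebraMap k⟦X⟧ (FractionRing k⟦X⟧)
  have hι : Function.Injective ι := IsFractionRing.injective _ _
  let τ : FractionRing k⟦X⟧ ≃ₐ[k] FractionRing k⟦X⟧ :=
    IsFractionRing.algEquivOfAlgEquiv (rescaleEquiv ζ hζ0)
  have hτ : ∀ f, τ (ι f) = ι (rescale ζ f) := by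
    intro f
    simp only [τ, ι]
    rw [IsFractionRing.algEquivOfAlgEquiv_algebraMap, rescaleEquiv_apply]
  have hτi : ∀ (i : ℕ) f, (τ ^ i) (ι f) = ι (rescale (ζ ^ i) f) := by
    intro i
    induction i with
    | zero => intro f; simp
    | succ i ih =>
      intro f
      rw [pow_succ, AlgEquiv.mul_apply, hτ, ih, rescale_rescale, pow_succ']
  have hX : ι PowerSeries.X ≠ 0 := by
    rw [Ne, map_eq_zero_iff _ hι]; exact PowerSeries.X_ne_zero
  -- roots with nonzero constant coefficient
  have hU := fun v : {v : k // v ^ (n - t) = 1} => hensel_tri hn ht htn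
    (1 + PowerSeries.X ^ t : k⟦X⟧) (PowerSeries.X ^ t)
    (by simp [show t ≠ 0 by omega]) (by simp [show t ≠ 0 by omega]) v.1 v.2
  choose U hU1 hU2 using hU
  obtain ⟨V, hV1, hV2⟩ := hensel_tri hn hm (by omega) (1 + PowerSeries.X ^ t : k⟦X⟧)
    (PowerSeries.X ^ (n - t)) (by simp [show t ≠ 0 by omega])
    (by simp [show n - t ≠ 0 by omega]) 1 (one_pow _)
  have hV0 : V ≠ 0 := by rintro rfl; simp at hV2
  have hιV : ι V ≠ 0 := by rwa [Ne, map_eq_zero_iff _ hι]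
  have hrt : rescale ζ (PowerSeries.X ^ t : k⟦X⟧) = PowerSeries.X ^ t := by
    rw [map_pow, rescale_X, mul_pow, ← map_pow, hζ.pow_eq_one, map_one, one_mul]
  have hτx : ∀ i, (τ ^ i) (ι PowerSeries.X / ι V) =
      ι (PowerSeries.C (ζ ^ i) * PowerSeries.X) / ι (rescale (ζ ^ i) V) := by
    intro i
    rw [map_div₀, hτi, hτi, rescale_X]
  refine ⟨ι (1 + PowerSeries.X ^ t), τ, ι PowerSeries.X / ι V,
    (Polynomial.nthRootsFinset (n - t) (1 : k)).attach.image
      (fun v => ι (U ⟨v.1, (Polynomial.mem_nthRootsFinset (by omega) _).mp v.2⟩)),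
      ps_transc (by omega), ?_, ?_, ?_, ?_, ?_, ?_⟩
  · rw [hτ, map_add, map_one, hrt]
  · have h1 := congrArg ι hV1
    simp only [map_add, map_sub, map_mul, map_pow, map_one, map_zero] at h1 ⊢
    generalize ι PowerSeries.X = z at *
    generalize ι V = y at *
    have e1 : z ^ n = z ^ t * z ^ (n - t) := by rw [← pow_add]; congr 1; omega
    have e2 : y ^ n = y ^ t * y ^ (n - t) := by rw [← pow_add]; congr 1; omega
    rw [div_pow, div_pow]
    rw [e1, e2]
    rw [e2] at h1
    field_simp
    linear_combination (z ^ t) * h1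
  · intro i hi j hj h
    rw [hτx, hτx, div_eq_div_iff] at h
    · rw [← map_mul, ← map_mul] at h
      have h2 := hι h
      have h3 : PowerSeries.X * (PowerSeries.C (ζ ^ i) * rescale (ζ ^ j) V) =
        PowerSeries.X * (PowerSeries.C (ζ ^ j) * rescale (ζ ^ i) V) := by
        linear_combination h2
      have h4 := mul_left_cancel₀ PowerSeries.X_ne_zero h3
      have h5 := congrArg (PowerSeries.constantCoeff (R := k)) h4
      simp only [map_mul, constantCoeff_C] at h5
      rw [← coeff_zero_eq_constantCoeff_apply, ← coeff_zero_eq_constantCoeff_apply, coeff_rescale,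
        coeff_rescale, coeff_zero_eq_constantCoeff_apply, hV2] at h5
      simp only [pow_zero, mul_one] at h5
      exact hζ.pow_inj hi hj h5
    · rw [Ne, map_eq_zero_iff _ hι, map_eq_zero_iff _ (rescale_injective (pow_ne_zero _ hζ0))]
      exact hV0
    · rw [Ne, map_eq_zero_iff _ hι, map_eq_zero_iff _ (rescale_injective (pow_ne_zero _ hζ0))]
      exact hV0
  · rw [hτx, hζ.pow_eq_one]; simp
  · rw [Finset.card_image_of_injective, Finset.card_attach, hη.card_nthRootsFinset]
    intro v v' h
    have h2 := congrArg (PowerSeries.constantCoeff (R := k)) (hι h)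
    rw [hU2, hU2] at h2
    exact Subtype.ext h2
  · intro v hv
    rw [Finset.mem_image] at hv
    obtain ⟨v, -, rfl⟩ := hv
    generalize (⟨v.1, _⟩ : {v : k // v ^ (n - t) = 1}) = v
    constructor
    · have h1 := congrArg ι (hU1 v)
      simp only [map_add, map_sub, map_mul, map_pow, map_one, map_zero] at h1 ⊢
      linear_combination h1
    · rw [hτ]
      congr 1
      have h1 := congrArg (rescale ζ) (hU1 v)
      rw [map_add, map_sub, map_mul, map_pow, map_pow, map_zero, map_add, map_one, hrt] at h1
      have hcc : constantCoeff (rescale ζ (U v)) = constantCoeff (U v) := by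
        rw [← coeff_zero_eq_constantCoeff_apply, coeff_rescale]; simp
      refine tri_unique hn ht _ _ _ _ (by simp [show t ≠ 0 by omega]) h1 (hU1 v) hcc ?_
      rw [hcc, hU2]
      intro h0
      have := v.2
      rw [h0, zero_pow (by omega)] at this
      exact zero_ne_one this
end loc

section fld

lemma trdeg_ratFunc (k : Type*) [Field k] : Algebra.trdeg k (RatFunc k) = 1 := by
  have := _root_.trdeg_add_eq k (S := k[X]) (A := RatFunc k)
  have h2 : Algebra.IsAlgebraic k[X] (RatFunc k) := IsLocalization.isAlgebraic _ (nonZeroDivisors k[X])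
  rw [← this, _root_.trdeg_eq_zero (R := k[X]), add_zero]
  simp

/-- the k-algebra map from k(X) to L sending X to x -/
noncomputable def ratHom {k L : Type*} [Field k] [Field L] [Algebra k L] (x : L)
    (hx : Transcendental k x) : RatFunc k →ₐ[k] L :=
  RatFunc.liftAlgHom (aeval x) (nonZeroDivisors_le_comap_nonZeroDivisors_of_injective _
    (transcendental_iff_injective.mp hx))

lemma ratHom_X {k L : Type*} [Field k] [Field L] [Algebra k L] (x : L)
    (hx : Transcendental k x) : ratHom x hx RatFunc.X = x := by
  rw [ratHom, RatFunc.liftAlgHom_apply]; simp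

lemma alg_of_trdeg {k F Ω : Type*} [Field k] [Field F] [Field Ω] [Algebra k F] [Algebra k Ω] [Algebra F Ω]
    [IsScalarTower k F Ω]
    (h1 : Algebra.trdeg k F = 1) (h2 : Algebra.trdeg k Ω ≤ 1) : Algebra.IsAlgebraic F Ω := by
  have := _root_.lift_trdeg_add_eq k F Ω
  rw [← _root_.trdeg_eq_zero_iff]
  rw [h1] at this
  have h3 := Cardinal.lift_le.mpr h2
  rw [← this, Cardinal.lift_one, Cardinal.lift_one] at h3
  by_contra h
  rw [← Ne, ← Cardinal.one_le_iff_ne_zero] at h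
  have h4 := Cardinal.lift_le.mpr h
  rw [Cardinal.lift_one] at h4
  have := (add_le_add_right h4 1).trans h3
  norm_num at this

lemma ext_trans {k Ω Ω' : Type*} [Field k] [Field Ω] [Algebra k Ω] [IsAlgClosed Ω]
    [Field Ω'] [Algebra k Ω'] [IsAlgClosed Ω']
    (h1 : Algebra.trdeg k Ω ≤ 1) (h2 : Algebra.trdeg k Ω' ≤ 1) (x : Ω) (x' : Ω')
    (hx : Transcendental k x) (hx' : Transcendental k x') : ∃ σ : Ω ≃ₐ[k] Ω', σ x = x' := by
  let : Algebra (RatFunc k) Ω := (ratHom x hx).toRingHom.toAlgebra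
  let : Algebra (RatFunc k) Ω' := (ratHom x' hx').toRingHom.toAlgebra
  have i1 : IsScalarTower k (RatFunc k) Ω :=
    IsScalarTower.of_algebraMap_eq fun r => ((ratHom x hx).commutes r).symm
  have i2 : IsScalarTower k (RatFunc k) Ω' :=
    IsScalarTower.of_algebraMap_eq fun r => ((ratHom x' hx').commutes r).symm
  have a1 : Algebra.IsAlgebraic (RatFunc k) Ω := alg_of_trdeg (trdeg_ratFunc k) h1
  have a2 : Algebra.IsAlgebraic (RatFunc k) Ω' := alg_of_trdeg (trdeg_ratFunc k) h2
  have c1 : IsAlgClosure (RatFunc k) Ω := ⟨inferInstance, a1⟩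
  have c2 : IsAlgClosure (RatFunc k) Ω' := ⟨inferInstance, a2⟩
  refine ⟨(IsAlgClosure.equiv (RatFunc k) Ω Ω').restrictScalars k, ?_⟩
  have e1 : algebraMap (RatFunc k) Ω RatFunc.X = x := ratHom_X x hx
  have e2 : algebraMap (RatFunc k) Ω' RatFunc.X = x' := ratHom_X x' hx'
  rw [← e1, ← e2]
  exact (IsAlgClosure.equiv (RatFunc k) Ω Ω').commutes _

lemma transfer_aux {F M Ω : Type*} [Field F] [Field M] [Field Ω] [Algebra F M] [Algebra F Ω]
    [IsAlgClosed Ω] [Algebra.IsAlgebraic F Ω] (τ : M ≃ₐ[F] M) :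
    ∃ (ι : algebraicClosure F M →ₐ[F] Ω) (σ : Ω ≃ₐ[F] Ω), ∀ (x y : algebraicClosure F M),
      τ x = y → σ (ι x) = ι y := by
  have : Algebra.IsAlgebraic F (algebraicClosure F M) := inferInstance
  let ι : algebraicClosure F M →ₐ[F] Ω := IsAlgClosed.lift
  let : Algebra (algebraicClosure F M) Ω := ι.toRingHom.toAlgebra
  have i1 : IsScalarTower F (algebraicClosure F M) Ω :=
    IsScalarTower.of_algebraMap_eq fun r => (ι.commutes r).symm
  have c1 : IsAlgClosure F Ω := ⟨inferInstance, inferInstance⟩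
  have nn : Normal F Ω := IsAlgClosure.normal F Ω
  refine ⟨ι, (algebraicClosure.algEquivOfAlgEquiv τ).liftNormal Ω, ?_⟩
  intro x y h
  refine (AlgEquiv.liftNormal_commutes (algebraicClosure.algEquivOfAlgEquiv τ) Ω x).trans ?_
  show ι _ = ι y
  congr 1
  exact Subtype.ext h

lemma transfer {k M Ω : Type*} [Field k] [Field M] [Field Ω] [Algebra k M] [Algebra k Ω]
    [IsAlgClosed Ω] (h1 : Algebra.trdeg k Ω ≤ 1) (w : M) (W : Ω)
    (hw : Transcendental k w) (hW : Transcendental k W) (τ : M ≃ₐ[k] M) (hτ : τ w = w)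
    (n t : ℕ) (htn : t < n) (ht : 0 < t) :
    ∃ (ι : M → Ω) (σ : Ω ≃ₐ[k] Ω), σ W = W ∧
      (∀ x, x ^ n - w * x ^ t + (w - 1) = 0 → ι x ^ n - W * ι x ^ t + (W - 1) = 0) ∧
      (∀ x y, x ^ n - w * x ^ t + (w - 1) = 0 → y ^ n - w * y ^ t + (w - 1) = 0 → ι x = ι y → x = y) ∧
      (∀ x, x ^ n - w * x ^ t + (w - 1) = 0 → σ (ι x) = ι (τ x)) := by
  let : Algebra (RatFunc k) Ω := (ratHom W hW).toRingHom.toAlgebra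
  let : Algebra (RatFunc k) M := (ratHom w hw).toRingHom.toAlgebra
  have i1 : IsScalarTower k (RatFunc k) Ω :=
    IsScalarTower.of_algebraMap_eq fun r => ((ratHom W hW).commutes r).symm
  have i2 : IsScalarTower k (RatFunc k) M :=
    IsScalarTower.of_algebraMap_eq fun r => ((ratHom w hw).commutes r).symm
  have a1 : Algebra.IsAlgebraic (RatFunc k) Ω := alg_of_trdeg (trdeg_ratFunc k) h1
  have e1 : algebraMap (RatFunc k) Ω RatFunc.X = W := ratHom_X W hW
  have e2 : algebraMap (RatFunc k) M RatFunc.X = w := ratHom_X w hw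
  let τ' : M ≃ₐ[RatFunc k] M := AlgEquiv.ofRingEquiv (f := τ.toRingEquiv) (by
    intro r
    have : ((τ : M →ₐ[k] M).comp (ratHom w hw)) = ratHom w hw := by
      apply AlgHom.coe_ringHom_injective
      apply IsFractionRing.injective_comp_algebraMap (A := k[X])
      show (RingHom.comp _ _ : k[X] →+* M) = RingHom.comp _ _
      apply Polynomial.ringHom_ext
      · intro c
        simp [← RatFunc.algebraMap_eq_C]
      · simp [ratHom_X, hτ]
    exact DFunLike.congr_fun this r)
  obtain ⟨ι, σ, H⟩ := transfer_aux (Ω := Ω) τ'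
  have hmem : ∀ x, x ^ n - w * x ^ t + (w - 1) = 0 → x ∈ algebraicClosure (RatFunc k) M := by
    intro x hx
    rw [mem_algebraicClosure_iff]
    refine ⟨X ^ n - C RatFunc.X * X ^ t + C (RatFunc.X - 1), ?_, ?_⟩
    · intro h
      have := congrArg (fun p => coeff p n) h
      simp [coeff_X_pow, htn.ne', coeff_C, Polynomial.coeff_one, show n ≠ 0 from (by omega)] at this
    · simp [e2, hx]
  refine ⟨fun x => if h : x ∈ algebraicClosure (RatFunc k) M then ι ⟨x, h⟩ else 0,
    σ.restrictScalars k, ?_, ?_, ?_, ?_⟩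
  · rw [← e1]; exact σ.commutes _
  · intro x hx
    simp only [hmem x hx, dif_pos]
    have hw' : W = ι (algebraMap (RatFunc k) (algebraicClosure (RatFunc k) M) RatFunc.X) := by rw [AlgHom.commutes, e1]
    rw [hw', ← map_one ι, ← map_pow, ← map_pow, ← map_mul, ← map_sub, ← map_sub, ← map_add,
      map_eq_zero]
    apply Subtype.ext
    simp only [ZeroMemClass.coe_zero]
    rw [← hx, ← e2]
    rfl
  · intro x y hx hy h
    simp only [hmem x hx, hmem y hy, dif_pos] at h
    exact congrArg Subtype.val (ι.toRingHom.injective h)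
  · intro x hx
    have hx' : (τ x) ^ n - w * (τ x) ^ t + (w - 1) = 0 := by
      have := congrArg τ hx
      simpa [hτ] using this
    simp only [hmem x hx, hmem _ hx', dif_pos]
    exact H _ _ rfl
end fld

section glob

def hroot {Ω : Type*} [Field Ω] (n t : ℕ) (W r : Ω) : Prop := r ^ n - W * r ^ t + (W - 1) = 0

lemma hroot_finset {Ω : Type*} [Field Ω] {n t : ℕ} (htn : t < n) (W : Ω) :
    ∃ P : Finset Ω, P.card ≤ n ∧ ∀ r, r ∈ P ↔ hroot n t W r := by
  let p : Polynomial Ω := X ^ n - C W * X ^ t + C (W - 1)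
  have hdeg : p.natDegree = n := by
    simp only [p]
    rw [natDegree_add_C, natDegree_sub_eq_left_of_natDegree_lt]
    · simp
    · refine lt_of_le_of_lt (natDegree_C_mul_X_pow_le _ _) ?_
      simpa using htn
  have hp : p ≠ 0 := by
    intro h; rw [h] at hdeg; simp at hdeg; omega
  refine ⟨p.roots.toFinset, (Multiset.toFinset_card_le _).trans ((card_roots' p).trans hdeg.le), ?_⟩
  intro r
  rw [Multiset.mem_toFinset, mem_roots hp, IsRoot.def]
  simp [p, hroot]

lemma cyc_omega {k Ω : Type*} [Field k] [IsAlgClosed k] [CharP k 2] [Field Ω] [Algebra k Ω]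
    [IsAlgClosed Ω] (h1 : Algebra.trdeg k Ω ≤ 1) (n t : ℕ)
    (hn : Even n) (ht : Odd t) (ht1 : 1 < t) (htn : t < n) (W : Ω) (hW : Transcendental k W) :
    ∃ σ : Ω ≃ₐ[k] Ω, σ W = W ∧ (∃ P : Finset Ω, P.card = n ∧ ∀ r, r ∈ P ↔ hroot n t W r) ∧
      ∃ S : Finset Ω, S.card = t ∧
      (∀ x ∈ S, hroot n t W x ∧ x ≠ 1) ∧ (∀ r, hroot n t W r → r ∉ S → σ r = r) ∧
      ∀ x ∈ S, ∀ y ∈ S, ∃ i : ℤ, (σ ^ i) x = y := by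
  obtain ⟨w, τ, x, A, hw, hτ, hx, hinj, -, hA, hA2⟩ := local_cycle k n t hn ht ht1 htn
  obtain ⟨ι, σ, hσ, g1, g2, g3⟩ := transfer h1 w W hw hW τ hτ n t htn (by omega)
  have hxi : ∀ i : ℕ, ((τ ^ i) x) ^ n - w * ((τ ^ i) x) ^ t + (w - 1) = 0 := by
    intro i
    induction i with
    | zero => simpa using hx
    | succ i ih =>
      have := congrArg τ ih
      rw [pow_succ', AlgEquiv.mul_apply]
      simpa [hτ] using this
  have hσi : ∀ i : ℕ, (σ ^ i) (ι x) = ι ((τ ^ i) x) := by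
    intro i
    induction i with
    | zero => simp
    | succ i ih => rw [pow_succ', AlgEquiv.mul_apply, ih, g3 _ (hxi i), pow_succ', AlgEquiv.mul_apply]
  let S : Finset Ω := (Finset.range t).image (fun i => ι ((τ ^ i) x))
  have hS : S.card = t := by
    rw [Finset.card_image_of_injOn, Finset.card_range]
    intro i hi j hj h
    simp only [Finset.coe_range, Set.mem_Iio] at hi hj
    exact hinj i hi j hj (g2 _ _ (hxi i) (hxi j) h)
  let B : Finset Ω := A.image ι
  have hB : B.card = n - t := by
    rw [Finset.card_image_of_injOn, hA]
    intro i hi j hj h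
    exact g2 _ _ (hA2 i hi).1 (hA2 j hj).1 h
  have hBf : ∀ r ∈ B, σ r = r := by
    intro r hr
    obtain ⟨v, hv, rfl⟩ := Finset.mem_image.mp hr
    rw [g3 _ (hA2 v hv).1, (hA2 v hv).2]
  have hSf : ∀ r ∈ S, σ r ≠ r := by
    intro r hr h
    obtain ⟨i, hi, rfl⟩ := Finset.mem_image.mp hr
    rw [g3 _ (hxi i), ← AlgEquiv.mul_apply, ← pow_succ'] at h
    have := g2 _ _ (hxi _) (hxi _) h
    rw [pow_succ, AlgEquiv.mul_apply] at this
    have := (τ ^ i).injective this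
    have := hinj 1 (by omega) 0 (by omega) (by simpa using this)
    omega
  have hdisj : Disjoint S B := by
    rw [Finset.disjoint_left]
    intro r hr hr2
    exact hSf r hr (hBf r hr2)
  obtain ⟨P, hP, hP2⟩ := hroot_finset htn W
  have hSr : ∀ r ∈ S, hroot n t W r := by
    intro r hr
    obtain ⟨i, hi, rfl⟩ := Finset.mem_image.mp hr
    exact g1 _ (hxi i)
  have hBr : ∀ r ∈ B, hroot n t W r := by
    intro r hr
    obtain ⟨v, hv, rfl⟩ := Finset.mem_image.mp hr
    exact g1 _ (hA2 v hv).1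
  have hsub : S ∪ B ⊆ P := by
    intro r hr
    rw [hP2]
    rcases Finset.mem_union.mp hr with h | h
    · exact hSr r h
    · exact hBr r h
  have hc : (S ∪ B).card = n := by
    rw [Finset.card_union_of_disjoint hdisj, hS, hB]; omega
  have heq : S ∪ B = P := Finset.eq_of_subset_of_card_le hsub (by omega)
  refine ⟨σ, hσ, ⟨P, by rw [← heq, hc], hP2⟩, S, hS, ?_, ?_, ?_⟩
  · intro r hr
    refine ⟨hSr r hr, ?_⟩
    rintro rfl
    exact hSf 1 hr (map_one σ)
  · intro r hr hrS
    rw [← hP2, ← heq, Finset.mem_union] at hr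
    exact hBf r (hr.resolve_left hrS)
  · intro r hr r' hr'
    obtain ⟨i, hi, rfl⟩ := Finset.mem_image.mp hr
    obtain ⟨j, hj, rfl⟩ := Finset.mem_image.mp hr'
    refine ⟨(j : ℤ) - i, ?_⟩
    rw [← hσi, ← hσi, ← AlgEquiv.mul_apply, ← zpow_natCast σ i, ← zpow_add, sub_add_cancel,
      zpow_natCast]

lemma cyc_omega' {k Ω : Type*} [Field k] [IsAlgClosed k] [CharP k 2] [Field Ω] [Algebra k Ω]
    [IsAlgClosed Ω] (h1 : Algebra.trdeg k Ω ≤ 1) (n t : ℕ)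
    (hn : Even n) (ht : Odd t) (htn : t + 1 < n) (W : Ω) (hW : Transcendental k W) :
    ∃ σ : Ω ≃ₐ[k] Ω, σ W = W ∧
      ∃ S : Finset Ω, S.card = n - t ∧
      (∀ x ∈ S, hroot n t W x ∧ x ≠ 1) ∧ (∀ r, hroot n t W r → r ∉ S → σ r = r) ∧
      ∀ x ∈ S, ∀ y ∈ S, ∃ i : ℤ, (σ ^ i) x = y := by
  have hW1 : W - 1 ≠ 0 := by
    intro h
    apply hW
    rw [sub_eq_zero.mp h]
    exact isAlgebraic_one
  have ht0 : 0 < t := ht.pos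
  have hW' : Transcendental k (W / (W - 1)) := by
    intro h
    apply hW
    have e : W = (W / (W - 1)) / (W / (W - 1) - 1) := by
      have : W / (W - 1) - 1 = 1 / (W - 1) := by field_simp; ring
      rw [this]
      field_simp
    rw [e, div_eq_mul_inv (W / (W - 1))]
    exact h.mul (h.sub isAlgebraic_one).inv
  obtain ⟨σ, hσ, -, S, hS, s1, s2, s3⟩ := cyc_omega h1 n (n - t) hn
    (Nat.Even.sub_odd (by omega) hn ht) (by omega) (by omega) _ hW'
  have hσW : σ W = W := by
    rw [map_div₀, map_sub, map_one] at hσ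
    have hW1' : σ W - 1 ≠ 0 := by
      rw [← map_one σ, ← map_sub, Ne, map_eq_zero]; exact hW1
    rw [div_eq_div_iff hW1' hW1] at hσ
    linear_combination -hσ
  have key : ∀ r, hroot n (n - t) (W / (W - 1)) r⁻¹ ↔ hroot n t W r := by
    intro r
    by_cases hr : r = 0
    · subst hr
      unfold hroot
      have : W / (W - 1) - 1 = 1 / (W - 1) := by field_simp; ring
      rw [this, inv_zero, zero_pow (by omega), zero_pow (by omega), zero_pow (by omega)]
      simp
    unfold hroot
    have e : r ^ n = r ^ (n - t) * r ^ t := by rw [← pow_add]; congr 1; omega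
    have e2 : r⁻¹ ^ n - W / (W - 1) * r⁻¹ ^ (n - t) + (W / (W - 1) - 1) =
       (r ^ n - W * r ^ t + (W - 1)) / (r ^ n * (W - 1)) := by
      rw [inv_pow, inv_pow, e]
      field_simp
      ring
    rw [e2, div_eq_zero_iff]
    simp [hr, hW1]
  refine ⟨σ, hσW, S.image (·⁻¹), ?_, ?_, ?_, ?_⟩
  · rw [Finset.card_image_of_injective _ inv_injective, hS]
  · intro x hx
    obtain ⟨y, hy, rfl⟩ := Finset.mem_image.mp hx
    refine ⟨by rw [← key, inv_inv]; exact (s1 y hy).1, ?_⟩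
    simpa using (s1 y hy).2
  · intro r hr hrS
    have := s2 r⁻¹ ((key r).mpr hr) (by
      intro h; apply hrS; exact Finset.mem_image.mpr ⟨_, h, inv_inv r⟩)
    rw [map_inv₀] at this
    exact inv_injective this
  · intro x hx y hy
    obtain ⟨x', hx', rfl⟩ := Finset.mem_image.mp hx
    obtain ⟨y', hy', rfl⟩ := Finset.mem_image.mp hy
    obtain ⟨i, hi⟩ := s3 x' hx' y' hy'
    exact ⟨i, by rw [map_inv₀, hi]⟩

lemma comm_fix {k Ω : Type*} [Field k] [IsAlgClosed k] [Field Ω] [Algebra k Ω] (m : ℕ) (hm : 0 < m)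
    (e : Ω) (σ ρ : Ω ≃ₐ[k] Ω) (hσ : σ (e ^ m) = e ^ m) (hρ : ρ (e ^ m) = e ^ m) :
    (σ * ρ * σ⁻¹ * ρ⁻¹) e = e := by
  have key : ∀ g : Ω ≃ₐ[k] Ω, g (e ^ m) = e ^ m → ∃ c : k, g e = algebraMap k Ω c * e := by
    intro g hg
    by_cases he : e = 0
    · exact ⟨0, by simp [he]⟩
    have h1 : (g e / e) ^ m = 1 := by
      rw [div_pow, ← map_pow, hg, div_self (pow_ne_zero _ he)]
    have h2 : IsIntegral k (g e / e) := by
      apply IsIntegral.of_pow hm; rw [h1]; exact isIntegral_one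
    obtain ⟨c, hc⟩ := h2.mem_range_algebraMap_of_minpoly_splits (K := k) (R := k) (IsAlgClosed.splits _)
    refine ⟨c, ?_⟩
    rw [hc, div_mul_cancel₀ _ he]
  have hinv : ∀ g : Ω ≃ₐ[k] Ω, g (e ^ m) = e ^ m → g⁻¹ (e ^ m) = e ^ m := by
    intro g hg
    conv_lhs => rw [← hg]
    rw [← AlgEquiv.mul_apply, inv_mul_cancel]; rfl
  obtain ⟨c, hc⟩ := key _ (hinv σ hσ)
  obtain ⟨d, hd⟩ := key _ (hinv ρ hρ)
  have : σ⁻¹ (ρ⁻¹ e) = ρ⁻¹ (σ⁻¹ e) := by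
    rw [hc, hd, map_mul, map_mul, hc, hd, AlgEquiv.commutes, AlgEquiv.commutes]; ring
  rw [AlgEquiv.mul_apply, AlgEquiv.mul_apply, this, ← AlgEquiv.mul_apply, ← AlgEquiv.mul_apply]
  simp [mul_assoc]

def actOn {k Ω : Type*} [Field k] [Field Ω] [Algebra k Ω] (H : Subgroup (Ω ≃ₐ[k] Ω)) (R : Set Ω)
    (h : ∀ σ ∈ H, ∀ x ∈ R, σ x ∈ R) : SubMulAction H Ω where
  carrier := R
  smul_mem' := fun c x hx => h c.1 c.2 x hx

lemma actOn_smul {k Ω : Type*} [Field k] [Field Ω] [Algebra k Ω] (H : Subgroup (Ω ≃ₐ[k] Ω)) (R : Set Ω)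
    (h : ∀ σ ∈ H, ∀ x ∈ R, σ x ∈ R) (g : H) (x : actOn H R h) :
    ((g • x : actOn H R h) : Ω) = g.1 x.1 := rfl

lemma cyc_lift {k Ω : Type*} [Field k] [Field Ω] [Algebra k Ω] (H : Subgroup (Ω ≃ₐ[k] Ω)) (R : Set Ω)
    (h : ∀ σ ∈ H, ∀ x ∈ R, σ x ∈ R) (σ : Ω ≃ₐ[k] Ω) (hσ : σ ∈ H) (S : Finset Ω) (hS : ∀ x ∈ S, x ∈ R)
    (s2 : ∀ r ∈ R, r ∉ S → σ r = r) (s3 : ∀ x ∈ S, ∀ y ∈ S, ∃ i : ℤ, (σ ^ i) x = y) :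
    ∃ S' : Set (actOn H R h), S'.ncard = S.card ∧ IsCyc (⟨σ, hσ⟩ : H) S' := by
  refine ⟨{x | x.1 ∈ S}, ?_, ?_, ?_⟩
  · rw [← Set.ncard_image_of_injective _ Subtype.val_injective, ← Set.ncard_coe_finset]
    congr 1
    ext x
    simp only [Set.mem_image, Set.mem_ofPred_eq, Finset.mem_coe]
    constructor
    · rintro ⟨y, hy, rfl⟩; exact hy
    · intro hx; exact ⟨⟨x, hS x hx⟩, hx, rfl⟩
  · intro x hx
    apply Subtype.ext
    exact s2 x.1 x.2 hx
  · intro x hx y hy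
    obtain ⟨i, hi⟩ := s3 _ hx _ hy
    refine ⟨i, ?_⟩
    apply Subtype.ext
    rw [actOn_smul]
    simpa using hi

lemma alt_W {k Ω : Type*} [Field k] [IsAlgClosed k] [CharP k 2] [Field Ω] [Algebra k Ω]
    [IsAlgClosed Ω] (h1 : Algebra.trdeg k Ω ≤ 1) (n t : ℕ)
    (hn : Even n) (ht : Odd t) (ht1 : 1 < t) (htn : t + 3 < n) (hco : Nat.gcd n t = 1)
    (W : Ω) (hW : Transcendental k W) (m : ℕ) (hm : 0 < m) (e : Ω)
    (he : ∀ σ : Ω ≃ₐ[k] Ω, σ W = W → σ (e ^ m) = e ^ m)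
    (u v w : Ω) (hu : hroot n t W u) (hv : hroot n t W v) (hw : hroot n t W w)
    (hu1 : u ≠ 1) (hv1 : v ≠ 1) (hw1 : w ≠ 1) (huv : u ≠ v) (hvw : v ≠ w) (huw : u ≠ w) :
    ∃ σ : Ω ≃ₐ[k] Ω, σ e = e ∧ σ W = W ∧ σ u = v ∧ σ v = w ∧ σ w = u ∧
      ∀ r, hroot n t W r → r ≠ 1 → r ≠ u → r ≠ v → r ≠ w → σ r = r := by
  obtain ⟨σ, hσ, ⟨P, hP, hP2⟩, S, hS, s1, s2, s3⟩ := cyc_omega h1 n t hn ht ht1 (by omega) W hW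
  obtain ⟨ρ, hρ, S', hS', r1, r2, r3⟩ := cyc_omega' h1 n t hn ht (by omega) W hW
  let R : Set Ω := {r | hroot n t W r ∧ r ≠ 1}
  let G : Subgroup (Ω ≃ₐ[k] Ω) := MulAction.stabilizer (Ω ≃ₐ[k] Ω) W
  have hG : ∀ g, g ∈ G ↔ g W = W := fun g => Iff.rfl
  have hst : ∀ g ∈ G, ∀ x ∈ R, g x ∈ R := by
    rintro g hg x ⟨hx, hx1⟩
    refine ⟨?_, ?_⟩
    · have := congrArg g hx
      rw [hG] at hg
      simpa [hroot, hg] using this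
    · rw [← map_one g]
      exact fun h => hx1 (g.injective h)
  let α := actOn G R hst
  have hone : hroot n t W 1 := by simp [hroot]
  have hRP : R = (P.erase 1 : Finset Ω) := by
    ext r
    simp only [R, Set.mem_ofPred_eq, Finset.coe_erase, Set.mem_sdiff, Finset.mem_coe, hP2,
      Set.mem_singleton_iff]
  have hcard : Nat.card α + 1 = n := by
    have : Nat.card α = R.ncard := rfl
    rw [this, hRP, Set.ncard_coe_finset, Finset.card_erase_of_mem ((hP2 1).mpr hone), hP]
    omega
  have hfin : Finite α := by
    have : Finite R := by rw [hRP]; infer_instance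
    exact this
  have htransc : ∀ r ∈ R, Transcendental k r := by
    rintro r ⟨hr, hr1⟩ hal
    have h0 : r ^ t - 1 ≠ 0 := by
      intro h0
      apply hr1
      have h2 : r ^ t = 1 := sub_eq_zero.mp h0
      have h3 : r ^ n = 1 := by
        have := hr
        rw [hroot, h2] at this
        linear_combination this
      have := orderOf_dvd_of_pow_eq_one h2
      have h5 := Nat.dvd_gcd (orderOf_dvd_of_pow_eq_one h3) this
      rw [hco, Nat.dvd_one, orderOf_eq_one_iff] at h5
      exact h5
    apply hW
    have : W = (r ^ n - 1) * (r ^ t - 1)⁻¹ := by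
      rw [eq_mul_inv_iff_mul_eq₀ h0]
      rw [hroot] at hr
      linear_combination -hr
    rw [this]
    exact ((hal.pow n).sub isAlgebraic_one).mul ((hal.pow t).sub isAlgebraic_one).inv
  have hpre : ∀ x y : α, ∃ g : G, g • x = y := by
    rintro ⟨x, hx⟩ ⟨y, hy⟩
    obtain ⟨g, hg⟩ := ext_trans h1 h1 x y (htransc x hx) (htransc y hy)
    have hy0 : y ^ t - 1 ≠ 0 := by
      intro h0
      apply htransc y hy
      refine IsAlgebraic.of_pow (n := t) (by omega) ?_
      rw [sub_eq_zero.mp h0]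
      exact isAlgebraic_one
    have hgW : g W = W := by
      have e1 := congrArg g hx.1
      simp only [map_add, map_sub, map_mul, map_pow, hg, map_one, map_zero] at e1
      have e2 := hy.1
      rw [hroot] at e2
      have e3 : (y ^ t - 1) * (g W - W) = 0 := by linear_combination e2 - e1
      exact sub_eq_zero.mp ((mul_eq_zero.mp e3).resolve_left hy0)
    exact ⟨⟨g, hgW⟩, Subtype.ext hg⟩
  obtain ⟨A, hA, hA2⟩ := cyc_lift G R hst σ hσ S s1 (fun r hr => s2 r hr.1) s3
  obtain ⟨B, hB, hB2⟩ := cyc_lift G R hst ρ hρ S' r1 (fun r hr => r2 r hr.1) r3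
  rw [hS] at hA
  rw [hS'] at hB
  have hcop : Nat.Coprime A.ncard B.ncard := by
    rw [hA, hB]
    have : Nat.Coprime t n := Nat.Coprime.symm hco
    rw [Nat.coprime_sub_self_right (by omega)]
    exact this
  let u' : α := ⟨u, hu, hu1⟩
  let v' : α := ⟨v, hv, hv1⟩
  let w' : α := ⟨w, hw, hw1⟩
  have huv' : u' ≠ v' := fun h => huv (congrArg Subtype.val h)
  have hvw' : v' ≠ w' := fun h => hvw (congrArg Subtype.val h)
  have huw' : u' ≠ w' := fun h => huw (congrArg Subtype.val h)
  obtain ⟨g, hg, c1, c2, c3, c4⟩ := alt_three hpre hA2 hB2 hcop (by omega) (by omega)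
    (by rw [hA, hB]; omega) (by omega) ((MulAction.stabilizer (Ω ≃ₐ[k] Ω) e).subgroupOf G) (by
    intro g₁ g₂
    rw [Subgroup.mem_subgroupOf]
    exact comm_fix m hm e g₁.1 g₂.1 (he _ g₁.2) (he _ g₂.2)) u' v' w' huv' hvw' huw'
  refine ⟨g.1, hg, g.2, congrArg Subtype.val c1, congrArg Subtype.val c2, congrArg Subtype.val c3, ?_⟩
  intro r hr hr1 hru hrv hrw
  have a1 : (⟨r, hr, hr1⟩ : α) ≠ u' := fun h => hru (congrArg Subtype.val h)
  have a2 : (⟨r, hr, hr1⟩ : α) ≠ v' := fun h => hrv (congrArg Subtype.val h)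
  have a3 : (⟨r, hr, hr1⟩ : α) ≠ w' := fun h => hrw (congrArg Subtype.val h)
  exact congrArg Subtype.val (c4 _ a1 a2 a3)

def zset {k Ω : Type*} [Field k] [Field Ω] [Algebra k Ω] (n t s : ℕ) (a : k) (x : Ω) : Set Ω :=
  {z | z ^ n - algebraMap k Ω a * z ^ t + x ^ s = 0}

lemma alt_Z {k Ω : Type*} [Field k] [IsAlgClosed k] [CharP k 2] [Field Ω] [Algebra k Ω]
    [IsAlgClosed Ω] (h1 : Algebra.trdeg k Ω ≤ 1) (n t s : ℕ)
    (hn : Even n) (ht : Odd t) (ht1 : 1 < t) (htn : t + 3 < n) (hs : 0 < s) (hco : Nat.gcd n t = 1)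
    (a : k) (ha : a ≠ 0) (x : Ω) (hx : Transcendental k x)
    [Fintype (zset n t s a x)] (hcard : Nat.card (zset n t s a x) = n)
    (π : Equiv.Perm (zset n t s a x)) (hπ : π ∈ alternatingGroup (zset n t s a x)) :
    ∃ σ : Ω ≃ₐ[k] Ω, σ x = x ∧ ∀ z : zset n t s a x, σ z = π z := by
  let Z := zset n t s a x
  let T := x ^ s
  have haΩ : algebraMap k Ω a ≠ 0 := by rwa [Ne, map_eq_zero]
  have hT : Transcendental k T := fun h => hx (h.of_pow hs)
  have hZ : ∀ z, z ∈ Z ↔ z ^ n - algebraMap k Ω a * z ^ t + T = 0 := fun z => Iff.rfl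
  let G : Subgroup (Ω ≃ₐ[k] Ω) := MulAction.stabilizer (Ω ≃ₐ[k] Ω) T
  have hG : ∀ g, g ∈ G ↔ g T = T := fun g => Iff.rfl
  have hst : ∀ g ∈ G, ∀ z ∈ Z, g z ∈ Z := by
    intro g hg z hz
    rw [hZ] at hz ⊢
    have := congrArg g hz
    rw [hG] at hg
    simpa only [map_add, map_sub, map_mul, map_pow, AlgEquiv.commutes, map_zero, hg] using this
  have htr : ∀ z ∈ Z, Transcendental k z := by
    intro z hz hal
    rw [hZ] at hz
    apply hT
    have : T = algebraMap k Ω a * z ^ t - z ^ n := by linear_combination hz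
    rw [this]
    exact ((isAlgebraic_algebraMap a).mul (hal.pow t)).sub (hal.pow n)
  have hne : ∀ z ∈ Z, z ≠ 0 := by
    rintro z hz rfl
    exact htr 0 hz isAlgebraic_zero
  have hTG : ∀ (g : Ω ≃ₐ[k] Ω) (z z' : Ω), z ∈ Z → z' ∈ Z → g z = z' → g ∈ G := by
    intro g z z' hz hz' h
    rw [hZ] at hz hz'
    rw [hG]
    have e1 := congrArg g hz
    simp only [map_add, map_sub, map_mul, map_pow, AlgEquiv.commutes, map_zero, h] at e1
    have e2 : g T = algebraMap k Ω a * z' ^ t - z' ^ n := by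
      linear_combination e1
    rw [e2]
    linear_combination -hz'
  have three : ∀ y ∈ Z, ∀ u ∈ Z, ∀ v ∈ Z, ∀ w ∈ Z, u ≠ y → v ≠ y → w ≠ y → u ≠ v → v ≠ w → u ≠ w →
      ∃ σ ∈ G, σ y = y ∧ σ u = v ∧ σ v = w ∧ σ w = u ∧
        ∀ r ∈ Z, r ≠ u → r ≠ v → r ≠ w → σ r = r := by
    intro y hy u hu v hv w hw huy hvy hwy huv hvw huw
    have hy0 := hne y hy
    have hyn := (hZ y).mp hy
    let W := algebraMap k Ω a / y ^ (n - t)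
    have hW : Transcendental k W := by
      intro hal
      apply htr y hy
      refine IsAlgebraic.of_pow (n := n - t) (by omega) ?_
      have : y ^ (n - t) = algebraMap k Ω a * W⁻¹ := by
        simp only [W]; field_simp
      rw [this]
      exact (isAlgebraic_algebraMap a).mul hal.inv
    have hWe : ∀ σ : Ω ≃ₐ[k] Ω, σ W = W → σ (y ^ (n - t)) = y ^ (n - t) := by
      intro σ h
      have : y ^ (n - t) = algebraMap k Ω a / W := by
        simp only [W]; field_simp
      rw [this, map_div₀, h, AlgEquiv.commutes]
    have en : ∀ z : Ω, z ^ n = z ^ (n - t) * z ^ t := fun z => by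
      rw [← pow_add]; congr 1; omega
    have hroots : ∀ z ∈ Z, hroot n t W (z / y) := by
      intro z hz
      rw [hZ] at hz
      have e : (z / y) ^ n - W * (z / y) ^ t + (W - 1) =
        ((z ^ n - algebraMap k Ω a * z ^ t + T) - (y ^ n - algebraMap k Ω a * y ^ t + T)) / y ^ n := by
        simp only [W]
        rw [div_pow, div_pow, en y]
        field_simp
        ring
      rw [hroot, e, hz, hyn]; simp
    have div1 : ∀ z, z ≠ y → z / y ≠ 1 := by
      intro z h h'
      exact h ((div_eq_one_iff_eq hy0).mp h')
    have div2 : ∀ z z' : Ω, z ≠ z' → z / y ≠ z' / y := by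
      intro z z' h h'
      exact h ((div_left_inj' hy0).mp h')
    obtain ⟨σ, g1, -, g3, g4, g5, g6⟩ := alt_W h1 n t hn ht ht1 htn hco W hW (n - t) (by omega) y hWe
      (u / y) (v / y) (w / y) (hroots u hu) (hroots v hv) (hroots w hw) (div1 u huy) (div1 v hvy)
      (div1 w hwy) (div2 _ _ huv) (div2 _ _ hvw) (div2 _ _ huw)
    have back : ∀ z z' : Ω, σ (z / y) = z' / y → σ z = z' := by
      intro z z' h
      rw [map_div₀, g1] at h
      exact (div_left_inj' hy0).mp h
    refine ⟨σ, hTG σ y y hy hy g1, g1, back _ _ g3, back _ _ g4, back _ _ g5, ?_⟩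
    intro r hr hru hrv hrw
    by_cases hry : r = y
    · rw [hry, g1]
    · exact back _ _ (g6 _ (hroots r hr) (div1 r hry) (div2 _ _ hru) (div2 _ _ hrv) (div2 _ _ hrw))
  let α := actOn G Z hst
  have hcα : Nat.card α = n := hcard
  have hpre : ∀ z z' : α, ∃ g : G, g • z = z' := by
    rintro ⟨z, hz⟩ ⟨z', hz'⟩
    obtain ⟨g, hg⟩ := ext_trans h1 h1 z z' (htr z hz) (htr z' hz')
    exact ⟨⟨g, hTG g z z' hz hz' hg⟩, Subtype.ext hg⟩
  have vne : ∀ z z' : α, z ≠ z' → z.1 ≠ z'.1 := fun z z' h h' => h (Subtype.ext h')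
  obtain ⟨g, hg, hg2⟩ := alt_final (G := G) (α := α) (by omega) hpre (by
    intro y u v w e1 e2 e3 e4 e5 e6
    obtain ⟨σ, hσ, c1, c2, c3, c4, c5⟩ := three y.1 y.2 u.1 u.2 v.1 v.2 w.1 w.2
      (vne _ _ e1) (vne _ _ e2) (vne _ _ e3) (vne _ _ e4) (vne _ _ e5) (vne _ _ e6)
    exact ⟨⟨σ, hσ⟩, Subtype.ext c1, Subtype.ext c2, Subtype.ext c3, Subtype.ext c4,
      fun r h1 h2 h3 => Subtype.ext (c5 r.1 r.2 (vne _ _ h1) (vne _ _ h2) (vne _ _ h3))⟩)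
    ((MulAction.stabilizer (Ω ≃ₐ[k] Ω) x).subgroupOf G) (by
    intro g₁ g₂
    rw [Subgroup.mem_subgroupOf]
    exact comm_fix s hs x g₁.1 g₂.1 g₁.2 g₂.2) π hπ
  exact ⟨g.1, hg, fun z => congrArg Subtype.val (hg2 z)⟩
end glob

section fin

lemma ratFunc_fix {k Ω : Type*} [Field k] [Field Ω] [Algebra k Ω] [Algebra (RatFunc k) Ω]
    [IsScalarTower k (RatFunc k) Ω] (σ : Ω ≃ₐ[k] Ω)
    (h : σ (algebraMap (RatFunc k) Ω RatFunc.X) = algebraMap (RatFunc k) Ω RatFunc.X) (r : RatFunc k) :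
    σ (algebraMap (RatFunc k) Ω r) = algebraMap (RatFunc k) Ω r := by
  have : ((σ : Ω →ₐ[k] Ω).comp (IsScalarTower.toAlgHom k (RatFunc k) Ω)) =
      IsScalarTower.toAlgHom k (RatFunc k) Ω := by
    apply AlgHom.coe_ringHom_injective
    apply IsFractionRing.injective_comp_algebraMap (A := k[X])
    show (RingHom.comp _ _ : k[X] →+* Ω) = RingHom.comp _ _
    apply Polynomial.ringHom_ext
    · intro c
      simp
      rw [← RatFunc.algebraMap_eq_C, ← IsScalarTower.algebraMap_apply, AlgEquiv.commutes]
    · simp [h]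
  exact DFunLike.congr_fun this r

lemma f_sep {k F : Type*} [Field k] [CharP k 2] [Field F] [Algebra k F] {n t : ℕ} (hn : Even n)
    (ht : Odd t) (hn0 : 0 < n) (a : k) (ha : a ≠ 0) (T : F) (hT : T ≠ 0) :
    (X ^ n - C (algebraMap k F a) * X ^ t + C T : F[X]).Separable := by
  have : CharP F 2 := charP_of_injective_algebraMap (algebraMap k F).injective 2
  have ht0 := ht.pos
  have ha' : algebraMap k F a ≠ 0 := by rwa [Ne, map_eq_zero]
  rw [separable_def]
  have hd : derivative (X ^ n - C (algebraMap k F a) * X ^ t + C T : F[X]) =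
      C (-(algebraMap k F a * t)) * X ^ (t - 1) := by
    simp only [derivative_add, derivative_sub, derivative_X_pow, derivative_C_mul, derivative_C,
      C_neg, C_mul, map_natCast]
    have : ((n : ℕ) : F[X]) = 0 := by
      rw [← map_natCast (C : F →+* F[X]), even_cast hn, C_0]
    rw [this]; ring
  rw [hd]
  have hu : IsUnit (C (-(algebraMap k F a * t))) := by
    rw [isUnit_C, isUnit_iff_ne_zero]
    exact neg_ne_zero.mpr (mul_ne_zero ha' (odd_cast_ne ht))
  rw [isCoprime_mul_unit_left_right hu]
  apply IsCoprime.pow_right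
  have e : (X ^ n - C (algebraMap k F a) * X ^ t + C T : F[X]) =
      C T + X * (X ^ (n - 1) - C (algebraMap k F a) * X ^ (t - 1)) := by
    obtain ⟨n', rfl⟩ : ∃ n', n = n' + 1 := ⟨n - 1, by omega⟩
    obtain ⟨t', rfl⟩ : ∃ t', t = t' + 1 := ⟨t - 1, by omega⟩
    simp only [Nat.add_sub_cancel]
    ring
  rw [e]
  rw [IsCoprime.add_mul_left_left_iff]
  exact ⟨C T⁻¹, 0, by rw [zero_mul, add_zero, ← C_mul, inv_mul_cancel₀ hT, C_1]⟩

lemma f_deg {F : Type*} [Field F] {n t : ℕ} (htn : t < n) (a T : F) :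
    (X ^ n - C a * X ^ t + C T : F[X]).natDegree = n := by
  rw [natDegree_add_C, natDegree_sub_eq_left_of_natDegree_lt]
  · simp
  · refine lt_of_le_of_lt (natDegree_C_mul_X_pow_le _ _) ?_
    simpa using htn

lemma alt_or_top {α : Type*} {i1 : Fintype α} {i2 : DecidableEq α} (H : Subgroup (Equiv.Perm α))
    (h : ∀ π ∈ alternatingGroup α, π ∈ H) : H = alternatingGroup α ∨ H = ⊤ := by
  by_cases hle : H ≤ alternatingGroup α
  · left; exact le_antisymm hle h
  · right
    rw [SetLike.not_le_iff_exists] at hle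
    obtain ⟨g, hg, hg2⟩ := hle
    rw [eq_top_iff]
    intro x _
    by_cases hx : x ∈ alternatingGroup α
    · exact h x hx
    · have : g⁻¹ * x ∈ alternatingGroup α := by
        rw [Equiv.Perm.mem_alternatingGroup] at *
        have a1 := (Int.units_eq_one_or (Equiv.Perm.sign g)).resolve_left hg2
        have a2 := (Int.units_eq_one_or (Equiv.Perm.sign x)).resolve_left hx
        rw [map_mul, map_inv, a1, a2]; rfl
      have := H.mul_mem hg (h _ this)
      simpa using this

lemma sign_transfer {α β : Type*} {i1 : Fintype α} {i2 : DecidableEq α} {i3 : Fintype β}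
    {i4 : DecidableEq β} (e : α ≃ β) (π : Equiv.Perm α) (hπ : π ∈ alternatingGroup α) :
    e.permCongr π ∈ alternatingGroup β := by
  rw [Equiv.Perm.mem_alternatingGroup] at *
  rw [Equiv.Perm.sign_permCongr, hπ]

end fin

lemma alt_gal (k : Type*) [Field k] [IsAlgClosed k] [CharP k 2]
    (n s t : ℕ) (hs : 0 < s) (ht1 : 1 < t)
    (hco : Nat.gcd n t = 1) (hn : Even n) (ht : Odd t) (htn : t + 3 < n)
    (a : k) (ha : a ≠ 0)
    (f : Polynomial (RatFunc k))
    (hf : f = X ^ n - C (algebraMap k (RatFunc k) a) * X ^ t + C (RatFunc.X ^ s))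
    (E : Type*) [Field E] [Algebra (RatFunc k) E] [Normal (RatFunc k) E]
    (hsplit : (f.map (algebraMap (RatFunc k) E)).Splits) (hsep : f.Separable)
    {i1 : Fintype (f.rootSet E)} {i2 : DecidableEq (f.rootSet E)}
    (π : Equiv.Perm (f.rootSet E)) (hπ : π ∈ alternatingGroup (f.rootSet E)) :
    ∃ g : E ≃ₐ[RatFunc k] E, ∀ z : f.rootSet E, g z = π z := by
  let Ω := AlgebraicClosure (RatFunc k)
  have hdeg : f.natDegree = n := by rw [hf]; exact f_deg (by omega) _ _
  have hf0 : f ≠ 0 := hsep.ne_zero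
  have htd : Algebra.trdeg k Ω ≤ 1 := by
    have := _root_.trdeg_add_eq k (S := RatFunc k) (A := Ω)
    rw [_root_.trdeg_eq_zero (R := RatFunc k) (A := Ω), add_zero, trdeg_ratFunc] at this
    exact this.ge
  let j : E →ₐ[RatFunc k] Ω := IsAlgClosed.lift
  let x : Ω := algebraMap (RatFunc k) Ω RatFunc.X
  have hx : Transcendental k x := by
    intro h
    have h2 : IsAlgebraic k (RatFunc.X : RatFunc k) :=
      (isAlgebraic_algebraMap_iff (algebraMap (RatFunc k) Ω).injective).mp h
    exact RatFunc.transcendental_X h2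
  have hZ : ∀ z : Ω, z ∈ zset n t s a x ↔ z ∈ f.rootSet Ω := by
    intro z
    rw [mem_rootSet, hf]
    simp only [zset, Set.mem_ofPred_eq, x]
    rw [and_iff_right (hf ▸ hf0)]
    simp
    rw [← RatFunc.algebraMap_eq_C, ← IsScalarTower.algebraMap_apply]
  have hjm : ∀ z : f.rootSet E, j z ∈ zset n t s a x := by
    intro z
    rw [hZ, mem_rootSet]
    refine ⟨hf0, ?_⟩
    rw [aeval_algHom_apply, aeval_eq_zero_of_mem_rootSet z.2, map_zero]
  have hfin : Finite (zset n t s a x) := by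
    have : zset n t s a x = f.rootSet Ω := Set.ext hZ
    rw [this]; infer_instance
  have hft : Fintype (zset n t s a x) := Fintype.ofFinite _
  have hcE : Nat.card (f.rootSet E) = n := by
    rw [Nat.card_eq_fintype_card, ← hdeg, ← card_rootSet_eq_natDegree hsep hsplit]
    convert rfl
  have hcΩ : Nat.card (zset n t s a x) = n := by
    have : zset n t s a x = f.rootSet Ω := Set.ext hZ
    rw [this, Nat.card_eq_fintype_card, ← hdeg,
      ← card_rootSet_eq_natDegree hsep (IsAlgClosed.splits (f.map (algebraMap (RatFunc k) Ω)))]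
  let e0 : f.rootSet E → zset n t s a x := fun z => ⟨j z, hjm z⟩
  have he0 : Function.Bijective e0 := by
    rw [Nat.bijective_iff_injective_and_card]
    refine ⟨?_, by rw [hcE, hcΩ]⟩
    intro z z' h
    exact Subtype.ext (j.toRingHom.injective (congrArg Subtype.val h))
  let e := Equiv.ofBijective e0 he0
  obtain ⟨σ, hσ, hσ2⟩ := alt_Z htd n t s hn ht ht1 htn hs hco a ha x hx hcΩ (e.permCongr π)
    (sign_transfer e π hπ)
  let σF : Ω ≃ₐ[RatFunc k] Ω := AlgEquiv.ofRingEquiv (f := σ.toRingEquiv) (ratFunc_fix σ hσ)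
  let : Algebra E Ω := j.toRingHom.toAlgebra
  have i1 : IsScalarTower (RatFunc k) E Ω :=
    IsScalarTower.of_algebraMap_eq fun r => (j.commutes r).symm
  refine ⟨σF.restrictNormal E, fun z => ?_⟩
  apply j.toRingHom.injective
  refine (σF.restrictNormal_commutes E z).trans ?_
  have h1 := hσ2 (e z)
  rw [Equiv.permCongr_apply, Equiv.symm_apply_apply] at h1
  exact h1

theorem stmt_8 (k : Type*) [Field k] [IsAlgClosed k] [CharP k 2]
    (n s t : ℕ) (hn : 0 < n) (hs : 0 < s) (ht1 : 1 < t)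
    (hco : Nat.gcd n t = 1) (h2n : 2 ∣ n) (hts : t ∣ s) (htn : t + 3 < n)
    (a : k) (ha : a ≠ 0)
    (f : Polynomial (RatFunc k))
    (hf : f = X ^ n - C (algebraMap k (RatFunc k) a) * X ^ t + C (RatFunc.X ^ s)) :
    haveI : Fact ((f.map (algebraMap (RatFunc k) f.SplittingField)).Splits) :=
      ⟨SplittingField.splits f⟩
    Fintype.card (f.rootSet f.SplittingField) = n ∧
      ((Polynomial.Gal.galActionHom f f.SplittingField).range =
          alternatingGroup (f.rootSet f.SplittingField) ∨
        (Polynomial.Gal.galActionHom f f.SplittingField).range = ⊤) := by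
  have hne : Even n := even_iff_two_dvd.mpr h2n
  have ht : Odd t := by
    rw [← Nat.not_even_iff_odd]
    intro h
    have := Nat.dvd_gcd h2n h.two_dvd
    rw [hco] at this
    omega
  have hsep : f.Separable := by
    rw [hf]
    exact f_sep hne ht hn a ha _ (pow_ne_zero _ RatFunc.X_ne_zero)
  have hdeg : f.natDegree = n := by rw [hf]; exact f_deg (by omega) _ _
  have hfact : Fact ((f.map (algebraMap (RatFunc k) f.SplittingField)).Splits) :=
    ⟨SplittingField.splits f⟩
  refine ⟨?_, ?_⟩
  · rw [← hdeg, ← card_rootSet_eq_natDegree hsep (SplittingField.splits f)]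
  · apply alt_or_top
    intro π hπ
    obtain ⟨g, hg⟩ := alt_gal k n s t hs ht1 hco hne ht htn a ha f hf f.SplittingField
      (SplittingField.splits f) hsep π hπ
    refine ⟨Polynomial.Gal.restrict f f.SplittingField g, ?_⟩
    ext z
    rw [Polynomial.Gal.galActionHom_restrict, hg]
end

section
/- Let k be a field, let a be a nonzero element of k, let n, s, t be positive integers with t < n and gcd(n,t) = 1, and let f = Y^n - a·Y^t + X^s, a monic polynomial of degree n in Y over the rational function field k(X). Let α_1, …, α_n be the roots of f (with multiplicity) in a splitting field of f over k(X), and let f_Y = n·Y^{n-1} - t·a·Y^{t-1} be the ordinary Y-derivative of f. Then the product f_Y(α_1)···f_Y(α_n) equals n^n·X^{s(n-1)} - (n-t)^{n-t}·t^t·a^n·X^{s(t-1)}, which is a nonzero element of k(X); in particular f has no multiple roots in any overfield of k(X). -/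
open Polynomial

theorem aux_prod_pow {L : Type*} [Field L] [IsAlgClosed L] (n t : ℕ) (ht : 0 < t)
    (hco : Nat.gcd n t = 1) (ht0 : (t : L) ≠ 0) (x y : L) :
    ∏ z ∈ nthRootsFinset t (1 : L), (x - z ^ n * y) = x ^ t - y ^ t := by
  classical
  have : NeZero (t : L) := ⟨ht0⟩
  obtain ⟨ζ, hζ⟩ := HasEnoughRootsOfUnity.exists_primitiveRoot L t
  rw [hζ.pow_sub_pow_eq_prod_sub_mul x y ht]
  have hinj : Set.InjOn (fun z : L => z ^ n) (nthRootsFinset t (1 : L) : Set L) := by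
    intro z hz w hw h
    simp only [Finset.mem_coe, mem_nthRootsFinset ht] at hz hw
    have hw0 : w ≠ 0 := by
      rintro rfl
      simp [ht.ne'] at hw
    have h1 : (z / w) ^ n = 1 := by
      rw [div_pow]; simp only at h; rw [h]; exact div_self (pow_ne_zero _ hw0)
    have h2 : (z / w) ^ t = 1 := by rw [div_pow, hz, hw, div_one]
    have h3 := pow_gcd_eq_one.2 ⟨h1, h2⟩
    rw [hco, pow_one] at h3
    exact (div_eq_one_iff_eq hw0).1 h3
  have himg : (nthRootsFinset t (1 : L)).image (fun z => z ^ n) = nthRootsFinset t (1 : L) := by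
    apply Finset.eq_of_subset_of_card_le
    · intro z hz
      obtain ⟨w, hw, rfl⟩ := Finset.mem_image.1 hz
      rw [mem_nthRootsFinset ht] at hw ⊢
      rw [← pow_mul, mul_comm, pow_mul, hw, one_pow]
    · rw [Finset.card_image_of_injOn hinj]
  conv_rhs => rw [← himg]
  rw [Finset.prod_image hinj]

theorem aux_core {L : Type*} [Field L] [IsAlgClosed L] (n t : ℕ) (ht : 0 < t) (htn : t < n)
    (hco : Nat.gcd n t = 1) (a c : L) (ha : a ≠ 0) (hc : c ≠ 0) (S : Multiset L)
    (hcard : S.card = n)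
    (hS : ∀ x, (S.map (fun α => x - α)).prod = x ^ n - a * x ^ t + c) :
    (S.map (fun α => (n : L) * α ^ (n - 1) - t * a * α ^ (t - 1))).prod =
      (n : L) ^ n * c ^ (n - 1) -
        ((n - t : ℕ) : L) ^ (n - t) * (t : L) ^ t * a ^ n * c ^ (t - 1) := by
  have hroot : ∀ α ∈ S, α ^ n - a * α ^ t + c = 0 := by
    intro α hα
    rw [← hS, Multiset.prod_eq_zero_iff, Multiset.mem_map]
    exact ⟨α, hα, sub_self _⟩
  have hneg : ∀ g : L → L, (S.map (fun α => - g α)).prod = (-1) ^ n * (S.map g).prod := by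
    intro g
    rw [← hcard, ← Multiset.card_map g S, ← Multiset.prod_map_neg, Multiset.map_map]
    rfl
  have hprod : S.prod = (-1) ^ n * c := by
    have h0 := hS 0
    simp only [zero_sub] at h0
    rw [hneg (fun α => α), Multiset.map_id', zero_pow (by omega), zero_pow (by omega)] at h0
    have : ((-1 : L) ^ n) * (-1) ^ n = 1 := by rw [← mul_pow]; simp
    linear_combination (-1) ^ n * h0 - S.prod * this
  obtain ⟨m, rfl⟩ : ∃ m, n = t + m := ⟨n - t, by omega⟩
  have hm : 0 < m := by omega
  obtain ⟨u, rfl⟩ : ∃ u, t = u + 1 := ⟨t - 1, by omega⟩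
  have e1 : u + 1 + m - 1 = u + m := by omega
  have e2 : u + 1 + m - (u + 1) = m := by omega
  have e3 : u + 1 - 1 = u := by omega
  rw [e1, e2, e3]
  have hpar : Even ((u + 1 + m + 1) * (u + 1 + 1)) := by
    rw [Nat.even_mul]
    by_contra! h
    simp only [Nat.not_even_iff_odd] at h
    have h1 : 2 ∣ u + 1 + m := by obtain ⟨⟨r, hr⟩, _⟩ := h; omega
    have h2 : 2 ∣ u + 1 := by obtain ⟨_, ⟨r, hr⟩⟩ := h; omega
    have := Nat.dvd_gcd h1 h2
    omega
  -- multiply by the product of the roots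
  have key : S.prod * (S.map (fun α => ((u + 1 + m : ℕ) : L) * α ^ (u + m)
      - ((u + 1 : ℕ) : L) * a * α ^ u)).prod
      = (S.map (fun α => (m : L) * a * α ^ (u + 1) - ((u + 1 + m : ℕ) : L) * c)).prod := by
    conv_lhs => rw [← Multiset.map_id' S, Multiset.map_map]
    rw [← Multiset.prod_map_mul]
    congr 1
    apply Multiset.map_congr rfl
    intro α hα
    have := hroot α hα
    simp only [Function.comp]
    push_cast
    have e : α ^ (u + 1 + m) = α * α ^ (u + m) := by ring
    rw [e] at this
    linear_combination ((u : L) + 1 + m) * this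
  have hSp : S.prod ≠ 0 := by rw [hprod]; simp [hc]
  apply mul_left_cancel₀ hSp
  rw [key, hprod]
  by_cases hm0 : (m : L) = 0
  · simp only [hm0, zero_mul, zero_sub, zero_pow hm.ne', sub_zero]
    rw [Multiset.map_const', Multiset.prod_replicate, hcard, neg_pow, mul_pow]
    have : c ^ (u + 1 + m) = c * c ^ (u + m) := by ring
    rw [this]; ring
  by_cases ht0 : ((u + 1 : ℕ) : L) = 0
  · -- `t = 0` in `L`
    rw [← hprod, ← key]
    simp only [ht0, zero_mul, sub_zero, zero_pow (Nat.succ_ne_zero u), mul_zero]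
    rw [Multiset.prod_map_mul, Multiset.map_const', Multiset.prod_replicate, hcard,
      Multiset.prod_map_pow, Multiset.map_id', hprod, mul_pow, ← pow_mul]
    have : Even ((u + 1 + m) * (u + m)) := by
      rw [show u + 1 + m = (u + m) + 1 by ring, mul_comm]; exact Nat.even_mul_succ_self _
    rw [this.neg_one_pow]; ring
  · have hv : (m : L) * a ≠ 0 := mul_ne_zero hm0 ha
    obtain ⟨w, hw⟩ := IsAlgClosed.exists_pow_nat_eq
      (((u + 1 + m : ℕ) : L) * c / (m * a)) (show 0 < u + 1 from Nat.succ_pos u)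
    have hw' : (m : L) * a * w ^ (u + 1) = ((u + 1 + m : ℕ) : L) * c := by
      rw [hw]; field_simp
    have : NeZero ((u + 1 : ℕ) : L) := ⟨ht0⟩
    obtain ⟨ζ, hζ⟩ := HasEnoughRootsOfUnity.exists_primitiveRoot L (u + 1)
    set N := nthRootsFinset (u + 1) (1 : L) with hN
    have hNc : N.card = u + 1 := hζ.card_nthRootsFinset
    have step1 : (S.map (fun α => (m : L) * a * α ^ (u + 1) - ((u + 1 + m : ℕ) : L) * c)).prod
        = (m * a) ^ (u + 1 + m) * ∏ z ∈ N, (S.map (fun α => α - z * w)).prod := by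
      have : ∀ α, (m : L) * a * α ^ (u + 1) - ((u + 1 + m : ℕ) : L) * c
          = (m * a) * ∏ z ∈ N, (α - z * w) := by
        intro α
        rw [← hζ.pow_sub_pow_eq_prod_sub_mul α w (show 0 < u + 1 from Nat.succ_pos u)]
        linear_combination hw'
      simp only [this]
      rw [Multiset.prod_map_mul, Multiset.map_const', Multiset.prod_replicate, hcard]
      congr 1
      exact Multiset.prod_map_prod
    have step2 : ∀ z ∈ N, (S.map (fun α => α - z * w)).prod
        = (-1) ^ (u + 1 + m + 1) * (((u + 1 : ℕ) : L) * c / m - z ^ (u + 1 + m) * w ^ (u + 1 + m)) := by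
      intro z hz
      have hz' : z ^ (u + 1) = 1 := (mem_nthRootsFinset (show 0 < u + 1 from Nat.succ_pos u) _).1 hz
      have h1 : (S.map (fun α => α - z * w)).prod
          = (-1) ^ (u + 1 + m) * (S.map (fun α => z * w - α)).prod := by
        rw [← hneg]; simp only [neg_sub]
      rw [h1, hS, mul_pow, mul_pow z w (u + 1), hz', one_mul]
      have : a * w ^ (u + 1) = ((u + 1 + m : ℕ) : L) * c / m := by
        rw [eq_div_iff hm0]; linear_combination hw'
      rw [this]
      push_cast
      field_simp
      ring
    rw [step1, Finset.prod_congr rfl step2, Finset.prod_mul_distrib, Finset.prod_const, hNc,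
      aux_prod_pow _ _ (show 0 < u + 1 from Nat.succ_pos u) hco ht0, ← pow_mul]
    have hww : (m * a) ^ (u + 1 + m) * (w ^ (u + 1 + m)) ^ (u + 1)
        = (((u + 1 + m : ℕ) : L) * c) ^ (u + 1 + m) := by
      rw [← hw', mul_pow (m * a) (w ^ (u + 1)), ← pow_mul, ← pow_mul, mul_comm (u + 1 + m) (u + 1)]
    have hmm : (m * a) ^ (u + 1 + m) * (((u + 1 : ℕ) : L) * c / m) ^ (u + 1)
        = (m : L) ^ m * ((u + 1 : ℕ) : L) ^ (u + 1) * a ^ (u + 1 + m) * c ^ (u + 1) := by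
      rw [div_pow, mul_pow, mul_pow, pow_add (m : L)]
      field_simp
    have hsgn : (-1 : L) ^ ((u + 1 + m + 1) * (u + 1)) = - (-1) ^ (u + 1 + m) := by
      have h1 : (-1 : L) ^ ((u + 1 + m + 1) * (u + 1)) * (-1) ^ (u + 1 + m + 1) = 1 := by
        rw [← pow_add, ← Nat.mul_succ]; exact hpar.neg_one_pow
      have h2 : ((-1 : L) ^ (u + 1 + m)) * (-1) ^ (u + 1 + m) = 1 := by rw [← mul_pow]; simp
      rw [pow_succ (-1 : L) (u + 1 + m)] at h1
      linear_combination -(-1) ^ (u + 1 + m) * h1 - (-1 : L) ^ ((u + 1 + m + 1) * (u + 1)) * h2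
    rw [hsgn]
    have hcc : c ^ (u + 1 + m) = c * c ^ (u + m) := by ring
    rw [mul_pow _ c, hcc] at hww
    linear_combination (-1) ^ (u + 1 + m) * hww - (-1) ^ (u + 1 + m) * hmm

theorem aux_ne {k : Type*} [Field k] (n s t : ℕ) (a : k) (ha : a ≠ 0) (hs : 0 < s) (ht : 0 < t)
    (htn : t < n) (hco : Nat.gcd n t = 1) :
    (n : RatFunc k) ^ n * RatFunc.X ^ (s * (n - 1)) -
      ((n - t : ℕ) : RatFunc k) ^ (n - t) * (t : RatFunc k) ^ t *
        (algebraMap k (RatFunc k) a) ^ n * RatFunc.X ^ (s * (t - 1)) ≠ 0 := by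
  have hlt : s * (t - 1) < s * (n - 1) := Nat.mul_lt_mul_of_pos_left (by omega) hs
  have e : (n : RatFunc k) ^ n * RatFunc.X ^ (s * (n - 1)) -
      ((n - t : ℕ) : RatFunc k) ^ (n - t) * (t : RatFunc k) ^ t *
        (algebraMap k (RatFunc k) a) ^ n * RatFunc.X ^ (s * (t - 1)) =
      algebraMap k[X] (RatFunc k) (C ((n : k) ^ n) * X ^ (s * (n - 1)) -
        C (((n - t : ℕ) : k) ^ (n - t) * (t : k) ^ t * a ^ n) * X ^ (s * (t - 1))) := by
    simp only [map_sub, map_mul, map_pow, RatFunc.algebraMap_X, RatFunc.algebraMap_C, map_natCast,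
      RatFunc.algebraMap_eq_C]
  rw [e]
  intro h0
  rw [map_eq_zero_iff _ (RatFunc.algebraMap_injective k)] at h0
  have c1 := congrArg (fun p => coeff p (s * (n - 1))) h0
  have c2 := congrArg (fun p => coeff p (s * (t - 1))) h0
  simp only [coeff_sub, coeff_C_mul, coeff_X_pow, coeff_zero, if_true, if_neg hlt.ne,
    if_neg hlt.ne'] at c1 c2
  have hn0 : (n : k) = 0 := by
    simp only [mul_one, mul_zero, sub_zero] at c1
    exact eq_zero_of_pow_eq_zero c1
  have ht0 : (t : k) ≠ 0 := by
    intro ht0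
    have := Nat.isCoprime_iff_coprime.2 hco
    obtain ⟨x, y, hxy⟩ := this
    have := congrArg (fun z : ℤ => (z : k)) hxy
    push_cast at this
    rw [hn0, ht0] at this
    simp at this
  have hnt : ((n - t : ℕ) : k) ≠ 0 := by
    rw [Nat.cast_sub htn.le, hn0, zero_sub]; exact neg_ne_zero.2 ht0
  simp [ha, ht0, hnt] at c2

/-- The `Y`-discriminant of `f = Y^n - a·Y^t + X^s`: the product of the values
of the `Y`-derivative `f_Y = n·Y^{n-1} - t·a·Y^{t-1}` at the roots of `f` (with
multiplicity, in a splitting field) equals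
`n^n·X^{s(n-1)} - (n-t)^{n-t}·t^t·a^n·X^{s(t-1)}`, a nonzero element of `k(X)`;
in particular `f` has no multiple roots in any overfield of `k(X)`. -/
theorem stmt_9 (k : Type*) [Field k] (a : k) (ha : a ≠ 0)
    (n s t : ℕ) (hn : 0 < n) (hs : 0 < s) (ht : 0 < t)
    (htn : t < n) (hco : Nat.gcd n t = 1)
    (f fY : Polynomial (RatFunc k))
    (hf : f = X ^ n - C (algebraMap k (RatFunc k) a) * X ^ t + C (RatFunc.X ^ s))
    (hfY : fY = C (n : RatFunc k) * X ^ (n - 1) -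
      C ((t : RatFunc k) * algebraMap k (RatFunc k) a) * X ^ (t - 1))
    (D : RatFunc k)
    (hD : D = (n : RatFunc k) ^ n * RatFunc.X ^ (s * (n - 1)) -
      ((n - t : ℕ) : RatFunc k) ^ (n - t) * (t : RatFunc k) ^ t *
        (algebraMap k (RatFunc k) a) ^ n * RatFunc.X ^ (s * (t - 1))) :
    ((f.aroots f.SplittingField).map (fun α => aeval α fY)).prod =
        algebraMap (RatFunc k) f.SplittingField D ∧
      D ≠ 0 ∧ f.Separable := by
  have hD0 : D ≠ 0 := hD ▸ aux_ne n s t a ha hs ht htn hco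
  have hder : derivative f = fY := by
    rw [hf, hfY]
    simp only [derivative_add, derivative_sub, derivative_X_pow, derivative_C_mul, derivative_C,
      map_mul]
    ring
  generalize hb : algebraMap k (RatFunc k) a = b at *
  have hb0 : b ≠ 0 := by rw [← hb]; simpa using ha
  have hdeg : (- (C b * X ^ t) + C (RatFunc.X ^ s : RatFunc k)).degree < (n : WithBot ℕ) := by
    refine lt_of_le_of_lt (degree_add_le _ _) (max_lt ?_ ?_)
    · rw [degree_neg]
      exact lt_of_le_of_lt (degree_C_mul_X_pow_le _ _) (by exact_mod_cast htn)
    · exact lt_of_le_of_lt degree_C_le (by exact_mod_cast hn)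
  have hf' : f = X ^ n + (- (C b * X ^ t) + C (RatFunc.X ^ s : RatFunc k)) := by rw [hf]; ring
  have hmonic : f.Monic := by rw [hf']; exact monic_X_pow_add hdeg
  have hnat : f.natDegree = n := by
    apply natDegree_eq_of_degree_eq_some
    rw [hf', degree_add_eq_left_of_degree_lt (by rwa [degree_X_pow]), degree_X_pow]
  have hsp : (f.map (algebraMap (RatFunc k) f.SplittingField)).Splits :=
    SplittingField.splits f
  let i : f.SplittingField →+* AlgebraicClosure f.SplittingField := algebraMap _ _
  have hprod : ((f.aroots f.SplittingField).map (fun α => aeval α fY)).prod =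
        algebraMap (RatFunc k) f.SplittingField D := by
    apply i.injective
    let j : RatFunc k →+* AlgebraicClosure f.SplittingField :=
      i.comp (algebraMap (RatFunc k) f.SplittingField)
    have hcore := aux_core n t ht htn hco (j b) (j (RatFunc.X ^ s))
      (by simpa using hb0) (by simp [RatFunc.X_ne_zero]) ((f.aroots f.SplittingField).map i)
      (by rw [Multiset.card_map, aroots, ← hsp.natDegree_eq_card_roots, natDegree_map, hnat])
      (by
        intro x
        rw [aroots, ← hsp.roots_map, map_map]
        have h := (IsAlgClosed.splits (f.map j)).eval_eq_prod_roots_of_monic (hmonic.map j) x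
        rw [← h]
        have h5 : f.map j = X ^ n - C (j b) * X ^ t + C (j (RatFunc.X ^ s)) := by
          conv_lhs => enter [2]; rw [hf]
          simp
        rw [h5]
        simp)
    rw [map_multiset_prod, Multiset.map_map]
    rw [Multiset.map_map] at hcore
    have e1 : i (algebraMap (RatFunc k) f.SplittingField D) = j D := rfl
    rw [e1, hD]
    simp only [map_sub, map_mul, map_pow, map_natCast, pow_mul] at hcore ⊢
    rw [← hcore]
    congr 1
    apply Multiset.map_congr rfl
    intro α _
    simp [hfY, j]
  refine ⟨hprod, hD0, ?_⟩
  rw [Separable, hder]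
  refine (isCoprime_iff_aeval_ne_zero_of_isAlgClosed (RatFunc k)
    (AlgebraicClosure f.SplittingField) f fY).2 ?_
  intro x
  by_contra! h
  obtain ⟨h1, h2⟩ := h
  have hx : x ∈ (f.aroots f.SplittingField).map i := by
    rw [aroots, ← hsp.roots_map, map_map, mem_roots (hmonic.map _).ne_zero, IsRoot, eval_map]
    exact h1
  obtain ⟨α, hα, rfl⟩ := Multiset.mem_map.1 hx
  have h3 : aeval α fY = 0 := by
    apply i.injective
    rw [map_zero, ← h2]
    exact (aeval_algebraMap_apply _ α fY).symm
  have : ((f.aroots f.SplittingField).map (fun α => aeval α fY)).prod = 0 :=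
    Multiset.prod_eq_zero (Multiset.mem_map.2 ⟨α, hα, h3⟩)
  rw [hprod] at this
  exact hD0 (by simpa using this)
end

section
/- Let k be a field of characteristic p > 0, let q = p^e for a positive integer e, let t be a positive integer not divisible by p, and let n = q + t. Then the polynomial f = Y^n - X·Y^t + 1 over the rational function field k(X) is irreducible in k(X)[Y], has n distinct roots in a splitting field, and its Galois group acts 2-transitively on the set of these n roots. -/
open Polynomial

namespace Abh

section
variable {k : Type*} [Field k]

/-- coefficient of `y^i Y^j`. -/
noncomputable def cf (P : k[X][X]) (a : ℕ × ℕ) : k := (P.coeff a.2).coeff a.1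

lemma cf_mul (P Q : k[X][X]) (a : ℕ × ℕ) :
    cf (P * Q) a = ∑ x ∈ Finset.HasAntidiagonal.antidiagonal a.2, ∑ y ∈ Finset.HasAntidiagonal.antidiagonal a.1,
      cf P (y.1, x.1) * cf Q (y.2, x.2) := by
  simp [cf, coeff_mul]

lemma exists_cf_mul (P Q : k[X][X]) (v : ℕ × ℕ) (h : cf (P * Q) v ≠ 0) :
    ∃ a b, a + b = v ∧ cf P a ≠ 0 ∧ cf Q b ≠ 0 := by
  rw [cf_mul] at h
  obtain ⟨x, hx, h⟩ := Finset.exists_ne_zero_of_sum_ne_zero h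
  obtain ⟨y, hy, h⟩ := Finset.exists_ne_zero_of_sum_ne_zero h
  rw [Finset.HasAntidiagonal.mem_antidiagonal] at hx hy
  refine ⟨(y.1, x.1), (y.2, x.2), ?_, left_ne_zero_of_mul h, right_ne_zero_of_mul h⟩
  ext <;> simp [hx, hy]

lemma exists_lead {B : Type*} [LinearOrder B] (D : ℕ × ℕ → B) (P : k[X][X]) (hP : P ≠ 0) :
    ∃ a, cf P a ≠ 0 ∧ ∀ b, cf P b ≠ 0 → D b ≤ D a := by
  have hfin : {a | cf P a ≠ 0}.Finite := by
    refine Set.Finite.subset (P.support.biUnion fun j =>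
      (P.coeff j).support.image fun i => (i, j)).finite_toSet ?_
    rintro ⟨i, j⟩ h
    simp only [cf, Set.mem_ofPred_eq] at h
    simp only [Finset.coe_biUnion, Finset.coe_image, Set.mem_iUnion, Set.mem_image,
      Finset.mem_coe, mem_support_iff]
    refine ⟨j, ?_, i, h, rfl⟩
    intro h0; simp [h0] at h
  have hne : {a | cf P a ≠ 0}.Nonempty := by
    refine ⟨((P.coeff P.natDegree).natDegree, P.natDegree), ?_⟩
    simp [cf, hP]
  obtain ⟨a, ha, h⟩ := hfin.exists_maximalFor D _ hne
  refine ⟨a, ha, fun b hb => ?_⟩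
  rcases le_total (D b) (D a) with h' | h'
  · exact h'
  · exact h hb h'

lemma lead_mul (D : ℕ × ℕ → ℤ ×ₗ ℤ) (hD : Function.Injective D)
    (hadd : ∀ a b, D (a + b) = D a + D b) (P Q : k[X][X]) (hP : P ≠ 0) (hQ : Q ≠ 0)
    (v : ℕ × ℕ) (hv : cf (P * Q) v ≠ 0) (hmax : ∀ w, cf (P * Q) w ≠ 0 → D w ≤ D v) :
    ∃ a b, a + b = v ∧ (cf P a ≠ 0 ∧ ∀ c, cf P c ≠ 0 → D c ≤ D a) ∧
      (cf Q b ≠ 0 ∧ ∀ c, cf Q c ≠ 0 → D c ≤ D b) := by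
  obtain ⟨a, ha, ha'⟩ := exists_lead D P hP
  obtain ⟨b, hb, hb'⟩ := exists_lead D Q hQ
  refine ⟨a, b, ?_, ⟨ha, ha'⟩, hb, hb'⟩
  apply hD
  apply le_antisymm
  · apply hmax
    have : cf (P * Q) (a + b) = cf P a * cf Q b := by
      have key : ∀ a' b', a' + b' = a + b → cf P a' * cf Q b' ≠ 0 → a' = a ∧ b' = b := by
        intro a' b' h h0
        have h1 := ha' a' (left_ne_zero_of_mul h0)
        have h2 := hb' b' (right_ne_zero_of_mul h0)
        have h3 : D a' + D b' = D a + D b := by rw [← hadd, ← hadd, h]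
        have h4 : D a' = D a := by
          by_contra hne
          exact absurd h3 (ne_of_lt (add_lt_add_of_lt_of_le (lt_of_le_of_ne h1 hne) h2))
        have h5 := hD h4
        subst h5
        exact ⟨rfl, add_left_cancel h⟩
      rw [cf_mul, Finset.sum_eq_single (a.2, b.2), Finset.sum_eq_single (a.1, b.1)]
      · rintro ⟨y1, y2⟩ hy hne
        by_contra h0
        rw [Finset.HasAntidiagonal.mem_antidiagonal] at hy
        have := key (y1, a.2) (y2, b.2) (Prod.ext hy rfl) h0
        apply hne
        simp only [Prod.ext_iff] at this ⊢
        exact ⟨this.1.1, this.2.1⟩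
      · intro h; simp at h
      · rintro ⟨x1, x2⟩ hx hne
        apply Finset.sum_eq_zero
        rintro ⟨y1, y2⟩ hy
        by_contra h0
        rw [Finset.HasAntidiagonal.mem_antidiagonal] at hx hy
        have := key (y1, x1) (y2, x2) (Prod.ext hy hx) h0
        apply hne
        simp only [Prod.ext_iff] at this ⊢
        exact ⟨this.1.2, this.2.2⟩
      · intro h; simp at h
    rw [this]
    exact mul_ne_zero ha hb
  · obtain ⟨a', b', h, h1, h2⟩ := exists_cf_mul P Q v hv
    rw [← h, hadd, hadd]
    exact add_le_add (ha' _ h1) (hb' _ h2)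

/-- lexicographic comparison with respect to two linear functionals -/
def Mx (u1 u2 w1 w2 : ℤ) (P : k[X][X]) (a : ℕ × ℕ) : Prop :=
  cf P a ≠ 0 ∧ ∀ c : ℕ × ℕ, cf P c ≠ 0 →
    (u1 * c.1 + u2 * c.2 < u1 * a.1 + u2 * a.2 ∨
      (u1 * c.1 + u2 * c.2 = u1 * a.1 + u2 * a.2 ∧ w1 * c.1 + w2 * c.2 ≤ w1 * a.1 + w2 * a.2))

lemma mx_mul (u1 u2 w1 w2 : ℤ) (hdet : u1 * w2 - u2 * w1 ≠ 0) (P Q : k[X][X])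
    (h0 : P * Q ≠ 0) (v : ℕ × ℕ) (hv : Mx u1 u2 w1 w2 (P * Q) v) :
    ∃ a b, a + b = v ∧ Mx u1 u2 w1 w2 P a ∧ Mx u1 u2 w1 w2 Q b := by
  let D : ℕ × ℕ → ℤ ×ₗ ℤ := fun a => toLex (u1 * a.1 + u2 * a.2, w1 * a.1 + w2 * a.2)
  have hle : ∀ c a : ℕ × ℕ, D c ≤ D a ↔ (u1 * c.1 + u2 * c.2 < u1 * a.1 + u2 * a.2 ∨
      (u1 * c.1 + u2 * c.2 = u1 * a.1 + u2 * a.2 ∧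
        w1 * c.1 + w2 * c.2 ≤ w1 * a.1 + w2 * a.2)) := by
    intro c a
    exact Prod.Lex.toLex_le_toLex
  have := lead_mul D ?_ ?_ P Q (left_ne_zero_of_mul h0) (right_ne_zero_of_mul h0) v hv.1
    (fun w hw => (hle _ _).2 (hv.2 w hw))
  · simpa only [hle, Mx] using this
  · rintro ⟨a1, a2⟩ ⟨b1, b2⟩ h
    have h' := toLex.injective h
    simp only [Prod.mk.injEq] at h'
    obtain ⟨h1, h2⟩ := h'
    have e1 : (u1 * w2 - u2 * w1) * ((a1 : ℤ) - b1) = 0 := by linear_combination w2 * h1 - u2 * h2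
    have e2 : (u1 * w2 - u2 * w1) * ((a2 : ℤ) - b2) = 0 := by linear_combination u1 * h2 - w1 * h1
    have e3 := (mul_eq_zero.1 e1).resolve_left hdet
    have e4 := (mul_eq_zero.1 e2).resolve_left hdet
    ext <;> simp <;> omega
  · intro a b
    simp only [D]
    rw [← toLex_add]
    apply congrArg toLex
    ext <;> simp <;> ring

/-- the twisted derivative -/
noncomputable def G (k : Type*) [Field k] (q t : ℕ) : k[X][X] :=
  (C X * X) ^ t * (∑ i ∈ Finset.range q, X ^ i * (C X) ^ (q - 1 - i))
    - ∑ i ∈ Finset.range t, X ^ i * (C X) ^ (t - 1 - i)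

lemma G_mul (q t : ℕ) : (X - C X) * G k q t =
    (C X * X) ^ t * (X ^ q - (C X) ^ q) - (X ^ t - (C X) ^ t) := by
  have h1 := (Commute.all (X : k[X][X]) (C X)).mul_geom_sum₂ q
  have h2 := (Commute.all (X : k[X][X]) (C X)).mul_geom_sum₂ t
  rw [G, ← h1, ← h2]; ring

lemma cf_XC (i j : ℕ) (a : ℕ × ℕ) : cf (X ^ j * (C X) ^ i : k[X][X]) a =
    if a = (i, j) then 1 else 0 := by
  rw [cf, ← C_pow, coeff_mul_C, coeff_X_pow]
  obtain ⟨a1, a2⟩ := a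
  simp only [Prod.mk.injEq]
  by_cases h : a2 = j <;> simp [h, coeff_X_pow]

lemma cf_sub (P Q : k[X][X]) (a) : cf (P - Q) a = cf P a - cf Q a := by simp [cf]
lemma cf_sum {ι : Type*} (s : Finset ι) (P : ι → k[X][X]) (a) :
    cf (∑ i ∈ s, P i) a = ∑ i ∈ s, cf (P i) a := by simp [cf]

lemma cf_geo (t m : ℕ) (i j : ℕ) :
    cf (∑ l ∈ Finset.range m, X ^ (t + l) * (C X) ^ (t + (m - 1 - l)) : k[X][X]) (i, j) =
    if t ≤ i ∧ t ≤ j ∧ i + j + 1 = 2 * t + m then 1 else 0 := by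
  rw [cf_sum]
  simp only [cf_XC, Prod.mk.injEq]
  split_ifs with h
  · rw [Finset.sum_eq_single (j - t)]
    · rw [if_pos (by omega)]
    · intro b hb hne
      rw [if_neg (by omega)]
    · intro hb
      rw [Finset.mem_range] at hb
      omega
  · apply Finset.sum_eq_zero
    intro b hb
    rw [Finset.mem_range] at hb
    rw [if_neg (by omega)]

lemma cf_G (q t i j : ℕ) : cf (G k q t) (i, j) =
    (if t ≤ i ∧ t ≤ j ∧ i + j + 1 = 2 * t + q then 1 else 0) -
      (if i + j + 1 = t then 1 else 0) := by
  have h1 := cf_geo (k := k) t q i j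
  have h2 := cf_geo (k := k) 0 t i j
  simp only [zero_le, true_and, zero_add, mul_zero] at h2
  rw [G, cf_sub, h2, ← h1]
  congr 2
  rw [Finset.mul_sum]
  apply Finset.sum_congr rfl
  intro l _
  ring

lemma cf_G_ne (q t i j : ℕ) (hq : 0 < q) : cf (G k q t) (i, j) ≠ 0 ↔
    (t ≤ i ∧ t ≤ j ∧ i + j + 1 = 2 * t + q) ∨ i + j + 1 = t := by
  rw [cf_G]
  split_ifs with h1 h2 h2
  · omega
  · simp [h1]
  · simp [h2]
  · simp [h1, h2]

/-- homogeneous factor or homogeneous cofactor -/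
lemma homog (q t : ℕ) (hq : 0 < q) (ht : 0 < t) (hqt : Nat.Coprime q t) (A B : k[X][X])
    (h : G k q t = A * B) :
    ∃ a b : ℕ × ℕ, a + b = (0, t - 1) ∧ cf A a ≠ 0 ∧ cf B b ≠ 0 ∧
     ((∀ c, cf A c ≠ 0 → c.1 + c.2 = a.1 + a.2) ∨ (∀ c, cf B c ≠ 0 → c.1 + c.2 = b.1 + b.2)) := by
  have hne : A * B ≠ 0 := by
    intro h0
    have := (cf_G_ne (k := k) q t 0 (t - 1) hq).2 (by omega)
    rw [h, h0] at this
    simp [cf] at this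
  have hn : (q : ℤ) + t ≠ 0 := by positivity
  have V1 : Mx (-q) t (-1) (-1) (A * B) (0, t - 1) := by
    rw [← h]
    refine ⟨(cf_G_ne q t _ _ hq).2 (by omega), ?_⟩
    rintro ⟨i, j⟩ hc
    rw [cf_G_ne q t _ _ hq] at hc
    have e : ((t - 1 : ℕ) : ℤ) = t - 1 := by omega
    simp only [e]
    obtain ⟨hi, hj, hs⟩ | hs := hc
    · have hj' : (j : ℤ) = 2 * t + q - 1 - i := by omega
      rcases hi.eq_or_lt with rfl | hi
      · right; constructor
        · rw [hj']; push_cast; ring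
        · push_cast; linarith
      · left
        have hi' : (0 : ℤ) < i - t := by omega
        have hq' : (0 : ℤ) < q + t := by omega
        have := mul_pos hq' hi'
        rw [hj']; push_cast; linarith
    · have hj' : (j : ℤ) = t - 1 - i := by omega
      rcases (Nat.zero_le i).eq_or_lt with rfl | hi
      · right; constructor
        · rw [hj']; push_cast; ring
        · push_cast; linarith
      · left
        have hi' : (0 : ℤ) < i := by omega
        have hq' : (0 : ℤ) < q + t := by omega
        have := mul_pos hq' hi'
        rw [hj']; push_cast; linarith
  have V2 : Mx (-q) t 1 1 (A * B) (t, t + q - 1) := by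
    rw [← h]
    refine ⟨(cf_G_ne q t _ _ hq).2 (by omega), ?_⟩
    rintro ⟨i, j⟩ hc
    rw [cf_G_ne q t _ _ hq] at hc
    have e : ((t + q - 1 : ℕ) : ℤ) = t + q - 1 := by omega
    simp only [e]
    obtain ⟨hi, hj, hs⟩ | hs := hc
    · have hj' : (j : ℤ) = 2 * t + q - 1 - i := by omega
      rcases hi.eq_or_lt with rfl | hi
      · right; constructor
        · rw [hj']; push_cast; ring
        · push_cast; linarith
      · left
        have hi' : (0 : ℤ) < i - t := by omega
        have hq' : (0 : ℤ) < q + t := by omega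
        have := mul_pos hq' hi'
        rw [hj']; push_cast; linarith
    · have hj' : (j : ℤ) = t - 1 - i := by omega
      rcases (Nat.zero_le i).eq_or_lt with rfl | hi
      · right; constructor
        · rw [hj']; push_cast; ring
        · push_cast; linarith
      · left
        have hi' : (0 : ℤ) < i := by omega
        have hq' : (0 : ℤ) < q + t := by omega
        have := mul_pos hq' hi'
        rw [hj']; push_cast; linarith
  have V3 : Mx (-1) (-1) 0 1 (A * B) (0, t - 1) := by
    rw [← h]
    refine ⟨(cf_G_ne q t _ _ hq).2 (by omega), ?_⟩
    rintro ⟨i, j⟩ hc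
    rw [cf_G_ne q t _ _ hq] at hc
    dsimp only
    omega
  have V4 : Mx 1 1 0 1 (A * B) (t, t + q - 1) := by
    rw [← h]
    refine ⟨(cf_G_ne q t _ _ hq).2 (by omega), ?_⟩
    rintro ⟨i, j⟩ hc
    rw [cf_G_ne q t _ _ hq] at hc
    dsimp only
    omega
  obtain ⟨a1, b1, s1, A1, B1⟩ := mx_mul _ _ _ _ (by intro h0; apply hn; linarith) A B hne _ V1
  obtain ⟨a2, b2, s2, A2, B2⟩ := mx_mul _ _ _ _ (by intro h0; apply hn; linarith) A B hne _ V2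
  obtain ⟨a3, b3, s3, A3, B3⟩ := mx_mul _ _ _ _ (by norm_num) A B hne _ V3
  obtain ⟨a4, b4, s4, A4, B4⟩ := mx_mul _ _ _ _ (by norm_num) A B hne _ V4
  refine ⟨a1, b1, s1, A1.1, B1.1, ?_⟩
  have key : ∀ (P : k[X][X]) (a b : ℕ × ℕ), Mx (-q) t (-1) (-1) P a → Mx (-q) t 1 1 P b →
      ∃ m : ℤ, 0 ≤ m ∧ (b.1 : ℤ) - a.1 = t * m ∧ (b.2 : ℤ) - a.2 = q * m := by
    intro P a b ha hb
    have e1 := ha.2 b hb.1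
    have e2 := hb.2 a ha.1
    have e3 : -(q : ℤ) * a.1 + t * a.2 = -q * b.1 + t * b.2 := by
      rcases e1 with e1 | e1 <;> rcases e2 with e2 | e2 <;> linarith
    have e4 : (q : ℤ) * ((b.1 : ℤ) - a.1) = t * ((b.2 : ℤ) - a.2) := by linarith
    have hc : IsCoprime (t : ℤ) (q : ℤ) := (Nat.isCoprime_iff_coprime.2 hqt).symm
    obtain ⟨m, hm⟩ : (t : ℤ) ∣ (b.1 : ℤ) - a.1 := hc.dvd_of_dvd_mul_left ⟨_, e4⟩
    have ht0 : (t : ℤ) ≠ 0 := by positivity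
    have hm2 : (b.2 : ℤ) - a.2 = q * m := by
      apply mul_left_cancel₀ ht0
      rw [← e4, hm]; ring
    refine ⟨m, ?_, hm, hm2⟩
    by_contra hneg
    have hm' : m ≤ -1 := by omega
    have e5 : (a.1 : ℤ) + a.2 ≤ b.1 + b.2 := by
      rcases e2 with e2 | e2 <;> linarith
    have : ((q : ℤ) + t) * m < 0 := mul_neg_of_pos_of_neg (by positivity) (by omega)
    nlinarith
  obtain ⟨m, hm0, hm1, hm2⟩ := key A a1 a2 A1 A2
  obtain ⟨l, hl0, hl1, hl2⟩ := key B b1 b2 B1 B2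
  simp only [Prod.ext_iff, Prod.fst_add, Prod.snd_add] at s1 s2 s3 s4
  have hml : m + l = 1 := by
    have ht0 : (t : ℤ) ≠ 0 := by positivity
    apply mul_left_cancel₀ ht0
    have : (a2.1 : ℤ) + b2.1 - (a1.1 + b1.1) = t := by omega
    linarith
  have p1 := A3.2 _ A1.1
  have p2 := B3.2 _ B1.1
  have p3 := A4.2 _ A2.1
  have p4 := B4.2 _ B2.1
  have hcase : m = 0 ∨ l = 0 := by omega
  rcases hcase with rfl | rfl
  · left
    intro c hc
    have q1 := A3.2 c hc
    have q2 := A4.2 c hc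
    simp only [mul_zero] at hm1 hm2
    omega
  · right
    intro c hc
    have q1 := B3.2 c hc
    have q2 := B4.2 c hc
    simp only [mul_zero] at hl1 hl2
    omega

noncomputable def psi : k[X][X] →+* k[X][X] := eval₂RingHom (mapRingHom C) (C X * X)

lemma psi_homog (A : k[X][X]) (d : ℕ) (hA : ∀ c, cf A c ≠ 0 → c.1 + c.2 = d) :
    ∃ a : k[X], psi A = C a * X ^ d ∧ ∀ j, a.coeff j = cf A (d - j, j) := by
  refine ⟨∑ j ∈ A.support, C (cf A (d - j, j)) * X ^ j, ?_, ?_⟩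
  · rw [psi, coe_eval₂RingHom, eval₂_eq_sum, Polynomial.sum, map_sum, Finset.sum_mul]
    apply Finset.sum_congr rfl
    intro j hj
    rw [mem_support_iff] at hj
    have h1 : A.coeff j = C (cf A (d - j, j)) * X ^ (d - j) := by
      ext i
      rw [coeff_C_mul, coeff_X_pow]
      by_cases hc : (A.coeff j).coeff i = 0
      · rw [hc]
        split_ifs with h
        · subst h; simp [cf, hc]
        · simp
      · have := hA (i, j) hc
        dsimp only at this
        have h2 : i = d - j := by omega
        subst h2
        simp [cf]
    have hjd : j ≤ d := by
      by_contra hlt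
      apply hj
      rw [h1]
      have : cf A (d - j, j) = 0 := by
        by_contra h0
        have := hA _ h0
        dsimp only at this
        omega
      simp [this]
    obtain ⟨e, rfl⟩ := Nat.exists_eq_add_of_le hjd
    rw [h1]
    simp only [coe_mapRingHom, Polynomial.map_mul, map_C, Polynomial.map_pow, map_X, C_mul, C_pow,
      Nat.add_sub_cancel_left]
    ring
  · intro j
    rw [finsetSum_coeff]
    simp only [coeff_C_mul, coeff_X_pow]
    rw [Finset.sum_eq_single j]
    · simp
    · intro b _ hb
      rw [if_neg (Ne.symm hb), mul_zero]
    · intro hj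
      rw [notMem_support_iff] at hj
      simp [cf, hj]

lemma psi_G (q t : ℕ) (hq : 0 < q) (ht : 0 < t) : psi (G k q t) =
    C (X ^ t * ∑ i ∈ Finset.range q, X ^ i) * X ^ (2 * t + q - 1)
     - C (∑ i ∈ Finset.range t, X ^ i) * X ^ (t - 1) := by
  have hX : psi (C X : k[X][X]) = X := by simp [psi]
  have hY : psi (X : k[X][X]) = C X * X := by simp [psi]
  simp only [G, map_sub, map_mul, map_pow, map_sum, hX, hY]
  congr 1
  · rw [Finset.mul_sum, Finset.mul_sum, Finset.sum_mul]
    apply Finset.sum_congr rfl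
    intro i hi
    rw [Finset.mem_range] at hi
    have : 2 * t + q - 1 = t + t + i + (q - 1 - i) := by omega
    rw [this]; ring
  · rw [Finset.sum_mul]
    apply Finset.sum_congr rfl
    intro i hi
    rw [Finset.mem_range] at hi
    have : t - 1 = i + (t - 1 - i) := by omega
    rw [this, Nat.add_sub_cancel_left]; ring

lemma coprime_aux (p : ℕ) (hp : p.Prime) [CharP k p] (e : ℕ) (t : ℕ) (ht : 0 < t)
    (hpt : ¬ p ∣ t) :
    IsCoprime (X ^ t * ∑ i ∈ Finset.range (p ^ e), X ^ i : k[X])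
      (∑ i ∈ Finset.range t, X ^ i) := by
  haveI := Fact.mk hp
  have hg : (∑ i ∈ Finset.range (p ^ e), X ^ i : k[X]) = (X - C 1) ^ (p ^ e - 1) := by
    have hX : (X - C 1 : k[X]) ≠ 0 := X_sub_C_ne_zero 1
    apply mul_left_cancel₀ hX
    rw [← pow_succ', Nat.sub_add_cancel (Nat.pow_pos hp.pos), sub_pow_char_pow, C_1, one_pow,
      mul_geom_sum]
  rw [hg]
  apply IsCoprime.mul_left
  · apply IsCoprime.pow_left
    rw [irreducible_X.coprime_iff_not_dvd, X_dvd_iff, coeff_zero_eq_eval_zero, eval_geom_sum,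
      zero_geom_sum]
    simp [ht.ne']
  · apply IsCoprime.pow_left
    rw [(irreducible_X_sub_C (1 : k)).coprime_iff_not_dvd, dvd_iff_isRoot, IsRoot.def,
      eval_geom_sum]
    simpa [CharP.cast_eq_zero_iff k p] using hpt

lemma unit_of_homog (p : ℕ) (hp : p.Prime) [CharP k p] (e : ℕ) (t : ℕ) (ht : 0 < t)
    (hpt : ¬ p ∣ t) (A : k[X][X]) (hdvd : A ∣ G k (p ^ e) t) (a : ℕ × ℕ) (ha : cf A a ≠ 0)
    (ha0 : a.1 = 0) (hA : ∀ c, cf A c ≠ 0 → c.1 + c.2 = a.1 + a.2) : IsUnit A := by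
  obtain ⟨d, s⟩ := a
  dsimp only at ha0
  subst ha0
  simp only [zero_add] at hA
  have hq := Nat.pow_pos (n := e) hp.pos
  obtain ⟨r, hr, hrc⟩ := psi_homog A s hA
  have h1 : C r ∣ psi (G k (p ^ e) t) :=
    (Dvd.intro _ hr.symm).trans (map_dvd psi hdvd)
  rw [C_dvd_iff_dvd_coeff, psi_G _ _ hq ht] at h1
  have h2 := h1 (2 * t + p ^ e - 1)
  have h3 := h1 (t - 1)
  have n1 : 2 * t + p ^ e - 1 ≠ t - 1 := by omega
  simp only [coeff_sub, coeff_C_mul, coeff_X_pow, if_pos, if_neg n1, if_neg n1.symm, mul_one,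
    mul_zero, sub_zero, zero_sub, dvd_neg] at h2 h3
  have hu : IsUnit r := (coprime_aux p hp e t ht hpt).isUnit_of_dvd' h2 h3
  have hs : s = 0 := by
    by_contra hs
    apply ha
    have := hrc s
    rw [Nat.sub_self] at this
    rw [← this]
    exact coeff_eq_zero_of_natDegree_lt (by rw [natDegree_eq_zero_of_isUnit hu]; omega)
  subst hs
  have : A = C (C (cf A (0, 0))) := by
    ext j i
    by_cases hc : (A.coeff j).coeff i = 0
    · rw [hc]
      by_cases hj : j = 0
      · subst hj
        by_cases hi : i = 0
        · subst hi; exact absurd hc ha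
        · simp [coeff_C, hi]
      · simp [coeff_C, hj]
    · have := hA (i, j) hc
      dsimp only at this
      have hi : i = 0 := by omega
      have hj : j = 0 := by omega
      subst hi hj
      simp [cf]
  rw [this]
  exact ((isUnit_iff_ne_zero.2 ha).map C).map C

lemma irr_G (p : ℕ) (hp : p.Prime) [CharP k p] (e : ℕ) (t : ℕ) (ht : 0 < t)
    (hpt : ¬ p ∣ t) : Irreducible (G k (p ^ e) t) := by
  have hq := Nat.pow_pos (n := e) hp.pos
  constructor
  · intro hu
    have h1 := (cf_G_ne (k := k) (p ^ e) t t (t + p ^ e - 1) hq).2 (by omega)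
    apply h1
    rw [cf, coeff_eq_zero_of_natDegree_lt (p := G k (p ^ e) t)]
    · simp
    · rw [natDegree_eq_zero_of_isUnit hu]; dsimp only; omega
  · intro A B h
    obtain ⟨a, b, hab, ha, hb, hh⟩ := homog (p ^ e) t hq ht
      (Nat.Coprime.pow_left e ((hp.coprime_iff_not_dvd).2 hpt)) A B h
    have h1 : a.1 + b.1 = 0 := congrArg Prod.fst hab
    rcases hh with hh | hh
    · left
      exact unit_of_homog p hp e t ht hpt A (Dvd.intro _ h.symm) a ha (by omega) hh
    · right
      exact unit_of_homog p hp e t ht hpt B (Dvd.intro_left _ h.symm) b hb (by omega) hh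

lemma irr_G_map (p : ℕ) (hp : p.Prime) [CharP k p] (e : ℕ) (t : ℕ) (ht : 0 < t)
    (hpt : ¬ p ∣ t) : Irreducible ((G k (p ^ e) t).map (algebraMap k[X] (RatFunc k))) := by
  have hq := Nat.pow_pos (n := e) hp.pos
  by_cases h1 : t + p ^ e = 1
  · omega
  have hi := irr_G (k := k) p hp e t ht hpt
  refine (IsPrimitive.irreducible_iff_irreducible_map_fraction_map ?_).1 hi
  apply hi.isPrimitive
  intro h0
  have h1 := (cf_G_ne (k := k) (p ^ e) t t (t + p ^ e - 1) hq).2 (by omega)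
  apply h1
  rw [cf, coeff_eq_zero_of_natDegree_lt (p := G k (p ^ e) t)]
  · simp
  · rw [h0]; dsimp only; omega

lemma irr_f (n t : ℕ) (htn : t < n) (ht : 0 < t) :
    Irreducible (X ^ n - C RatFunc.X * X ^ t + 1 : (RatFunc k)[X]) := by
  have hi : Irreducible (X ^ n - C X * X ^ t + 1 : k[X][X]) := by
    rw [← MulEquiv.irreducible_iff (Bivariate.swap (R := k))]
    have : Bivariate.swap (X ^ n - C X * X ^ t + 1 : k[X][X]) =
        C (-X ^ t) * X + C (X ^ n + 1) := by
      simp only [map_add, map_sub, map_mul, map_pow, map_one, Bivariate.swap_X, Bivariate.swap_Y,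
        C_neg, C_pow]
      ring
    rw [this]
    apply irreducible_C_mul_X_add_C
    · simp
    · apply IsCoprime.isRelPrime
      refine ⟨X ^ (n - t), 1, ?_⟩
      have : n = (n - t) + t := by omega
      nth_rw 2 [this]
      ring
  have hm : (X ^ n - C X * X ^ t + 1 : k[X][X]).Monic := by
    have : (X ^ n - C X * X ^ t + 1 : k[X][X]) = X ^ n + (C 1 - C X * X ^ t) := by
      rw [C_1]; ring
    rw [this]
    apply monic_X_pow_add
    refine lt_of_le_of_lt (degree_sub_le _ _) (max_lt ?_ ?_)
    · exact lt_of_le_of_lt degree_C_le (by exact_mod_cast (by omega : 0 < n))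
    · exact lt_of_le_of_lt (degree_C_mul_X_pow_le _ _) (by exact_mod_cast htn)
  have := (hm.isPrimitive.irreducible_iff_irreducible_map_fraction_map (K := RatFunc k)).1 hi
  simpa using this

lemma sep_f (p : ℕ) [CharP k p] (e : ℕ) (he : 0 < e) (t : ℕ) (ht : 0 < t) (hpt : ¬ p ∣ t) :
    (X ^ (p ^ e + t) - C RatFunc.X * X ^ t + 1 : (RatFunc k)[X]).Separable := by
  have hcp : CharP (RatFunc k) p :=
    (RingHom.charP_iff (algebraMap k (RatFunc k)) (algebraMap k (RatFunc k)).injective p).1 ‹_›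
  have hq : ((p ^ e : ℕ) : RatFunc k) = 0 := by
    rw [Nat.cast_pow, CharP.cast_eq_zero, zero_pow he.ne']
  have ht0 : (t : RatFunc k) ≠ 0 := by
    rwa [Ne, CharP.cast_eq_zero_iff (RatFunc k) p]
  obtain ⟨s, rfl⟩ : ∃ s, t = s + 1 := ⟨t - 1, by omega⟩
  refine ⟨1, -(C ((s + 1 : ℕ) : RatFunc k)⁻¹ * X), ?_⟩
  have h1 : (C ((s + 1 : ℕ) : RatFunc k)⁻¹ : (RatFunc k)[X]) * C ((s + 1 : ℕ) : RatFunc k) = 1 := by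
    rw [← C_mul, inv_mul_cancel₀ ht0, C_1]
  have h2 : derivative (X ^ (p ^ e + (s + 1)) - C RatFunc.X * X ^ (s + 1) + 1 : (RatFunc k)[X]) =
      C ((s + 1 : ℕ) : RatFunc k) * (X ^ (p ^ e + s) - C RatFunc.X * X ^ s) := by
    rw [derivative_add, derivative_sub, derivative_X_pow, derivative_C_mul_X_pow, derivative_one,
      Nat.cast_add, hq, zero_add, ← add_assoc, Nat.add_sub_cancel, Nat.add_sub_cancel, C_mul]
    ring
  rw [h2]
  linear_combination (-X * (X ^ (p ^ e + s) - C RatFunc.X * X ^ s)) * h1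

lemma exists_auto (p : ℕ) (hp : p.Prime) [CharP k p] (e : ℕ) (t : ℕ) (ht : 0 < t)
    (hpt : ¬ p ∣ t) (L : Type*) [Field L] [Algebra (RatFunc k) L] [Normal (RatFunc k) L]
    (γ x y : L) (hx : x ≠ γ) (hy : y ≠ γ)
    (h : ∀ z ∈ ({γ, x, y} : Set L),
      z ^ (p ^ e + t) - algebraMap (RatFunc k) L RatFunc.X * z ^ t + 1 = 0) :
    ∃ σ : L ≃ₐ[RatFunc k] L, σ γ = γ ∧ σ x = y := by
  have hγ := h γ (by simp)
  have hγ0 : γ ≠ 0 := by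
    rintro rfl
    simp [ht.ne'] at hγ
  have hXγ : algebraMap (RatFunc k) L RatFunc.X = (γ ^ (p ^ e + t) + 1) / γ ^ t := by
    field_simp
    linear_combination -hγ
  let K := IntermediateField.adjoin (RatFunc k) {γ}
  let g : K := IntermediateField.AdjoinSimple.gen (RatFunc k) γ
  have hg : algebraMap K L g = γ := IntermediateField.AdjoinSimple.algebraMap_gen _ _
  let i : k →+* K := (algebraMap (RatFunc k) K).comp RatFunc.C
  let φ : k[X] →+* K := eval₂RingHom i g
  have hLX : algebraMap (RatFunc k) K RatFunc.X = (g ^ (p ^ e + t) + 1) / g ^ t := by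
    apply (algebraMap K L).injective
    rw [← IsScalarTower.algebraMap_apply, hXγ]
    simp only [map_div₀, map_add, map_pow, map_one, hg]
  have hφ : Function.Injective φ := by
    rw [injective_iff_map_eq_zero]
    intro P hP
    by_contra hP0
    letI : Algebra k K := i.toAlgebra
    haveI : IsScalarTower k (RatFunc k) K := IsScalarTower.of_algebraMap_eq' (by
      rw [RingHom.algebraMap_toAlgebra]; rfl)
    have halg : IsAlgebraic k g := ⟨P, hP0, hP⟩
    have h1 : IsAlgebraic k (algebraMap (RatFunc k) K RatFunc.X) := by
      rw [hLX, div_eq_mul_inv]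
      exact ((halg.pow _).add isAlgebraic_one).mul (halg.pow _).inv
    have h2 := (isAlgebraic_algebraMap_iff (algebraMap (RatFunc k) K).injective).1 h1
    exact RatFunc.transcendental_X h2
  let ψ : RatFunc k →+* K := IsFractionRing.lift hφ
  have hψ : ∀ P, ψ (algebraMap k[X] (RatFunc k) P) = φ P := IsFractionRing.lift_algebraMap hφ
  have hψX : ψ (algebraMap k[X] (RatFunc k) X) = g := by rw [hψ]; simp [φ]
  let S : Subfield L := ((algebraMap K L).comp ψ).fieldRange
  have hSγ : γ ∈ S := ⟨algebraMap k[X] (RatFunc k) X, by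
    rw [RingHom.comp_apply, hψX, hg]⟩
  have hSp : ∀ P : k[X], algebraMap (RatFunc k) L (algebraMap k[X] (RatFunc k) P) ∈ S := by
    intro P
    induction P using Polynomial.induction_on' with
    | add P Q hP hQ => rw [map_add, map_add]; exact add_mem hP hQ
    | monomial m a =>
      rw [← C_mul_X_pow_eq_monomial]
      simp only [map_mul, map_pow]
      refine mul_mem ?_ (pow_mem ?_ _)
      · refine ⟨algebraMap k[X] (RatFunc k) (C a), ?_⟩
        rw [RingHom.comp_apply, hψ]
        simp only [φ, coe_eval₂RingHom, eval₂_C, i, RingHom.comp_apply]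
        rw [← IsScalarTower.algebraMap_apply, RatFunc.algebraMap_C]
      · rw [RatFunc.algebraMap_X, hXγ]
        exact div_mem (add_mem (pow_mem hSγ _) (one_mem _)) (pow_mem hSγ _)
  have hS : ∀ z ∈ K, z ∈ S := by
    intro z hz
    induction hz using IntermediateField.adjoin_induction with
    | mem z hz => rw [Set.mem_singleton_iff] at hz; rw [hz]; exact hSγ
    | algebraMap r =>
      induction r using RatFunc.induction_on with
      | f P Q hQ => rw [map_div₀]; exact div_mem (hSp P) (hSp Q)
    | add a b _ _ ha hb => exact add_mem ha hb
    | inv a _ ha => exact inv_mem ha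
    | mul a b _ _ ha hb => exact mul_mem ha hb
  have hsurj : Function.Surjective ψ := by
    intro z
    obtain ⟨r, hr⟩ := hS z z.2
    exact ⟨r, Subtype.ext hr⟩
  let E : RatFunc k ≃+* K := RingEquiv.ofBijective ψ ⟨ψ.injective, hsurj⟩
  have hirr : Irreducible ((G k (p ^ e) t).map φ) := by
    have h1 := irr_G_map (k := k) p hp e t ht hpt
    rw [← MulEquiv.irreducible_iff (Polynomial.mapEquiv E)] at h1
    have h2 : Polynomial.mapEquiv E ((G k (p ^ e) t).map (algebraMap k[X] (RatFunc k))) =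
        (G k (p ^ e) t).map φ := by
      rw [Polynomial.mapEquiv_apply, Polynomial.map_map]
      congr 1
      ext P
      · exact congrArg _ (hψ _)
      · exact congrArg _ (hψ _)
    rwa [h2] at h1
  have hroot : ∀ z : L, z ≠ γ →
      z ^ (p ^ e + t) - algebraMap (RatFunc k) L RatFunc.X * z ^ t + 1 = 0 →
      aeval z ((G k (p ^ e) t).map φ) = 0 := by
    intro z hz hz0
    have h1 := congrArg (fun P => aeval z (P.map φ)) (G_mul (k := k) (p ^ e) t)
    have hφX : φ X = g := by simp [φ]
    simp only [Polynomial.map_mul, Polynomial.map_sub, Polynomial.map_pow, map_X, map_C, hφX,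
      map_mul, map_sub, map_pow, aeval_X, aeval_C, hg] at h1
    have h2 : (γ * z) ^ t * (z ^ p ^ e - γ ^ p ^ e) - (z ^ t - γ ^ t) = 0 := by
      rw [mul_pow]
      linear_combination γ ^ t * hz0 - z ^ t * hγ
    rw [h2] at h1
    exact (mul_eq_zero.1 h1).resolve_left (sub_ne_zero.2 hz)
  have rx := hroot x hx (h x (by simp))
  have ry := hroot y hy (h y (by simp))
  have hmin : minpoly K y = minpoly K x := by
    rw [← minpoly.eq_of_irreducible hirr rx, ← minpoly.eq_of_irreducible hirr ry]
  obtain ⟨σ, hσ⟩ := (Normal.minpoly_eq_iff_mem_orbit (F := K) L).1 hmin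
  refine ⟨AlgEquiv.restrictScalars (RatFunc k) σ, ?_, hσ⟩
  have := σ.commutes g
  rwa [hg] at this
end
end Abh

theorem stmt_10 (p : ℕ) (hp : p.Prime) (e : ℕ) (he : 0 < e)
    (k : Type*) [Field k] [CharP k p]
    (q : ℕ) (hq : q = p ^ e)
    (t : ℕ) (ht : 0 < t) (hpt : ¬ p ∣ t)
    (n : ℕ) (hn : n = q + t)
    (f : Polynomial (RatFunc k))
    (hf : f = X ^ n - C RatFunc.X * X ^ t + 1) :
    haveI : Fact (f.map (algebraMap (RatFunc k) f.SplittingField)).Splits :=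
      ⟨SplittingField.splits f⟩
    Irreducible f ∧
      Fintype.card (f.rootSet f.SplittingField) = n ∧
      ∀ α β γ δ : f.rootSet f.SplittingField, α ≠ β → γ ≠ δ →
        ∃ σ : f.Gal, Polynomial.Gal.galActionHom f f.SplittingField σ α = γ ∧
          Polynomial.Gal.galActionHom f f.SplittingField σ β = δ := by
  have hFact : Fact (f.map (algebraMap (RatFunc k) f.SplittingField)).Splits :=
    ⟨SplittingField.splits f⟩
  have hq0 : 0 < q := by rw [hq]; exact Nat.pow_pos hp.pos
  have hirr : Irreducible f := by rw [hf]; exact Abh.irr_f n t (by omega) ht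
  have hdeg : f.natDegree = n := by
    have h1 : (X ^ n : (RatFunc k)[X]).natDegree = n := natDegree_X_pow n
    have h2 : (C RatFunc.X * X ^ t - 1 : (RatFunc k)[X]).natDegree ≤ t := by
      refine (natDegree_sub_le _ _).trans (max_le (natDegree_C_mul_X_pow_le _ _) ?_)
      simp
    rw [hf, sub_add, natDegree_sub_eq_left_of_natDegree_lt, h1]
    rw [h1]; omega
  have hsep : f.Separable := by
    rw [hf, hn, hq]; exact Abh.sep_f p e he t ht hpt
  refine ⟨hirr, ?_, ?_⟩
  · rw [card_rootSet_eq_natDegree hsep (SplittingField.splits f), hdeg]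
  intro α β γ δ hαβ hγδ
  have hroot : ∀ z : f.rootSet f.SplittingField, aeval (z : f.SplittingField) f = 0 :=
    fun z => (mem_rootSet.1 z.2).2
  have hmin : minpoly (RatFunc k) (γ : f.SplittingField) =
      minpoly (RatFunc k) (α : f.SplittingField) := by
    rw [← minpoly.eq_of_irreducible hirr (hroot γ), ← minpoly.eq_of_irreducible hirr (hroot α)]
  obtain ⟨τ, hτ⟩ := (Normal.minpoly_eq_iff_mem_orbit (F := RatFunc k) f.SplittingField).1 hmin
  have hτ' : τ (α : f.SplittingField) = γ := hτ
  have hf' : ∀ z : f.SplittingField, aeval z f = 0 →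
      z ^ (p ^ e + t) - algebraMap (RatFunc k) f.SplittingField RatFunc.X * z ^ t + 1 = 0 := by
    intro z hz
    rw [← hq, ← hn]
    have h1 : aeval z (X ^ n - C RatFunc.X * X ^ t + 1 : (RatFunc k)[X]) = 0 := by
      rw [← hf]; exact hz
    simpa using h1
  have hτβ : aeval (τ (β : f.SplittingField)) f = 0 := by
    have := aeval_algHom_apply (τ : f.SplittingField →ₐ[RatFunc k] f.SplittingField)
      (β : f.SplittingField) f
    rw [hroot β, map_zero] at this
    exact this
  obtain ⟨σ, hσ1, hσ2⟩ := Abh.exists_auto p hp e t ht hpt f.SplittingField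
    (γ : f.SplittingField) (τ (β : f.SplittingField)) δ
    (by
      intro h
      rw [← hτ'] at h
      exact hαβ (Subtype.ext (τ.injective h).symm))
    (fun h => hγδ (Subtype.ext h.symm))
    (by
      rintro z (rfl | rfl | rfl)
      · exact hf' _ (hroot γ)
      · exact hf' _ hτβ
      · exact hf' _ (hroot δ))
  refine ⟨Polynomial.Gal.restrict f f.SplittingField (τ.trans σ), ?_, ?_⟩
  · apply Subtype.ext
    rw [Polynomial.Gal.galActionHom_restrict, AlgEquiv.trans_apply, hτ', hσ1]
  · apply Subtype.ext
    rw [Polynomial.Gal.galActionHom_restrict, AlgEquiv.trans_apply, hσ2]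
end

section
/- Let k be a field of characteristic p > 0, let t be a positive integer not divisible by p, and let n = p + t. Then the Galois group of the polynomial f = Y^n - X·Y^t + 1 over the rational function field k(X) contains an element whose induced permutation of the n roots of f (in a splitting field) is a cycle of length p. -/
open Polynomial

open scoped Classical


lemma aux_hensel {k' : Type*} [Field k'] (p t : ℕ) (hp : p.Prime) [CharP k' p] (ht : 0 < t)
    (hpt : ¬ p ∣ t) (ζ : k') (hζ : ζ ^ t = 1) :
    ∃ U : PowerSeries k', U ^ (p + t) - U ^ p + PowerSeries.X ^ (p + t) = 0 ∧
      PowerSeries.constantCoeff U = ζ := by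
  have hp0 := hp.pos
  have hζ0 : ζ ≠ 0 := by
    rintro rfl
    rw [zero_pow ht.ne'] at hζ
    exact zero_ne_one hζ
  have ht0 : (t : k') ≠ 0 := by rwa [Ne, CharP.cast_eq_zero_iff k' p]
  have hpk : (p : k') = 0 := CharP.cast_eq_zero k' p
  let q : Polynomial (PowerSeries k') := X ^ (p + t) - X ^ p + C (PowerSeries.X ^ (p + t))
  have hq : q = X ^ (p + t) + (C (PowerSeries.X ^ (p + t)) - X ^ p) := by simp only [q]; ring
  have hm : q.Monic := by
    rw [hq]
    apply monic_X_pow_add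
    refine lt_of_le_of_lt (degree_sub_le _ _) (max_lt ?_ ?_)
    · refine lt_of_le_of_lt degree_C_le ?_
      exact_mod_cast (by omega : 0 < p + t)
    · rw [degree_X_pow]
      exact_mod_cast (by omega : p < p + t)
  obtain ⟨U, hU, hU2⟩ := HenselianRing.is_henselian (I := Ideal.span {(PowerSeries.X : PowerSeries k')})
    q hm (PowerSeries.C ζ) (by
      rw [Ideal.mem_span_singleton, PowerSeries.X_dvd_iff]
      have : p + t ≠ 0 := by omega
      simp [q, pow_add, hζ, ht.ne', hp0.ne']) (by
      apply IsUnit.map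
      rw [PowerSeries.isUnit_iff_constantCoeff]
      simp only [q, derivative_add, derivative_sub, derivative_C, derivative_X_pow]
      simp [ht0, hζ0])
  refine ⟨U, ?_, ?_⟩
  · simpa [q, IsRoot] using hU
  · rw [Ideal.mem_span_singleton, PowerSeries.X_dvd_iff] at hU2
    simpa [sub_eq_zero] using hU2

lemma aux_val {R Ω : Type*} [CommRing R] [IsLocalRing R] [Field Ω] (φ : R →+* Ω) 
    (hφ : Function.Injective φ) :
    ∃ A : ValuationSubring Ω, (∀ u : R, IsUnit u → A.valuation (φ u) = 1) ∧
      (∀ x : R, ¬ IsUnit x → A.valuation (φ x) < 1) := by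
  obtain ⟨A, hA⟩ := (LocalSubring.range φ).exists_le_valuationSubring
  obtain ⟨h, h2⟩ := LocalSubring.le_def.1 hA
  have hmem : ∀ x, φ x ∈ A := fun x => h (show φ x ∈ φ.range from ⟨x, rfl⟩)
  refine ⟨A, fun u hu => ?_, fun x hx => ?_⟩
  · obtain ⟨v, hv⟩ := hu.exists_right_inv
    have h1 : A.valuation (φ u) ≤ 1 := (A.valuation_le_one_iff _).2 (hmem u)
    have h1' : A.valuation (φ v) ≤ 1 := (A.valuation_le_one_iff _).2 (hmem v)
    have h3 : A.valuation (φ u) * A.valuation (φ v) = 1 := by rw [← map_mul, ← map_mul, hv]; simp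
    refine le_antisymm h1 ?_
    rw [← h3]
    exact mul_le_of_le_one_right' h1'
  · have := (A.valuation_lt_one_iff ⟨φ x, hmem x⟩).1
    refine (A.valuation_lt_one_iff ⟨φ x, hmem x⟩).1 ?_
    rw [IsLocalRing.mem_maximalIdeal, mem_nonunits_iff]
    intro hu
    apply hx
    have := h2.map_nonunit ⟨φ x, ⟨x, rfl⟩⟩ hu
    obtain ⟨⟨_, ⟨v, rfl⟩⟩, hv⟩ := this.exists_right_inv
    have hv' : φ x * φ v = 1 := congrArg Subtype.val hv
    rw [← map_mul, ← map_one φ] at hv'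
    exact IsUnit.of_mul_eq_one _ (hφ hv')

lemma aux_transfer {F K Ω : Type*} [Field F] [Field K] [Field Ω] [Algebra F K] [Algebra F Ω]
    [Algebra K Ω] [IsScalarTower F K Ω] (f : F[X]) [hs : IsSplittingField K Ω (f.map (algebraMap F K))]
    (p : ℕ) (hp : p.Prime)
    (hdiv : p ∣ Nat.card Gal(Ω/K)) (H : Finset Ω) (hH : f.natDegree < H.card + 2 * p)
    (hHr : ∀ z ∈ H, z ∈ f.rootSet Ω ∧ z ∈ Set.range (algebraMap K Ω)) :
    haveI : Fact ((f.map (algebraMap F f.SplittingField)).Splits) :=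
      ⟨SplittingField.splits f⟩
    ∃ σ : f.Gal,
      (Polynomial.Gal.galActionHom f f.SplittingField σ).IsCycle ∧
      (Polynomial.Gal.galActionHom f f.SplittingField σ).support.card = p := by
  have i1 : Fact ((f.map (algebraMap F f.SplittingField)).Splits) := ⟨SplittingField.splits f⟩
  have i2 : Fact ((f.map (algebraMap F Ω)).Splits) := ⟨by
    have := hs.splits
    rwa [Polynomial.map_map, ← IsScalarTower.algebraMap_eq] at this⟩
  have : FiniteDimensional K Ω := IsSplittingField.finiteDimensional Ω (f.map (algebraMap F K))
  have := Fact.mk hp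
  obtain ⟨σ, hσ⟩ := exists_prime_orderOf_dvd_card' (G := Gal(Ω/K)) p hdiv
  let σ' : Gal(Ω/F) := σ.restrictScalars F
  have hpow : σ' ^ p = 1 := by
    have h : σ ^ p = 1 := by rw [← hσ]; exact pow_orderOf_eq_one σ
    have h2 : ∀ m : ℕ, ∀ x, (σ' ^ m) x = (σ ^ m) x := by
      intro m
      induction m with
      | zero => intro x; rfl
      | succ m ih => intro x; rw [pow_succ, pow_succ, AlgEquiv.mul_apply, AlgEquiv.mul_apply, ih]; rfl
    ext x
    rw [h2, h]; rfl
  let τ : f.Gal := Gal.restrict f Ω σ'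
  have hact : ∀ x : f.rootSet Ω, ((Gal.galActionHom f Ω τ x : f.rootSet Ω) : Ω) = σ x := fun x => 
    Gal.galActionHom_restrict f Ω σ' x
  have hτ1 : τ ≠ 1 := by
    intro h1
    have : σ = 1 := by
      apply AlgEquiv.coe_toAlgHom_injective
      refine AlgHom.ext_of_adjoin_eq_top hs.adjoin_rootSet ?_
      intro x hx
      have hx' : x ∈ f.rootSet Ω := by
        rw [mem_rootSet'] at hx ⊢
        simpa [Polynomial.map_map, ← IsScalarTower.algebraMap_eq] using hx
      have := hact ⟨x, hx'⟩
      rw [h1, map_one] at this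
      exact this.symm
    rw [this, orderOf_one] at hσ
    exact hp.one_lt.ne hσ
  have hτo : orderOf τ = p := by
    refine orderOf_eq_prime ?_ hτ1
    simp only [τ]
    rw [← map_pow, hpow, map_one]
  set π := Gal.galActionHom f f.SplittingField τ with hπ
  have hπo : orderOf π = p := by
    rw [hπ, orderOf_injective _ (Gal.galActionHom_injective f f.SplittingField), hτo]
  let ψ : f.rootSet f.SplittingField ≃ f.rootSet Ω :=
    (Gal.rootsEquivRoots f f.SplittingField).symm.trans (Gal.rootsEquivRoots f Ω)
  have hsm : ∀ x : f.rootSet f.SplittingField, ∀ z ∈ H, (ψ x : Ω) = z → π x = x := by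
    intro x z hz hxz
    apply ψ.injective
    apply Subtype.ext
    rw [hxz]
    have h1 : ψ (π x) = τ • ψ x := by
      change ψ (τ • x) = τ • ψ x
      rw [Gal.smul_def, Gal.smul_def]
      simp only [ψ, Equiv.trans_apply, Equiv.symm_apply_apply]
    rw [h1]
    have h2 := hact (ψ x)
    obtain ⟨c, rfl⟩ := (hHr z hz).2
    rw [hxz, AlgEquiv.commutes] at h2
    exact h2
  have hcard : π.support.card + H.card ≤ f.natDegree := by
    have e1 : (π.support.map (ψ.toEmbedding.trans (Function.Embedding.subtype _))).card = π.support.card := Finset.card_map _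
    rw [← e1, ← Finset.card_union_of_disjoint]
    · refine le_trans (Finset.card_le_card (t := (f.map (algebraMap F Ω)).roots.toFinset) ?_) ?_
      · intro z hz
        rw [Finset.mem_union] at hz
        have : z ∈ f.rootSet Ω := by
          rcases hz with hz | hz
          · obtain ⟨x, -, rfl⟩ := Finset.mem_map.1 hz
            exact (ψ x).2
          · exact (hHr z hz).1
        rw [rootSet, aroots] at this
        exact_mod_cast this
      · refine (Multiset.toFinset_card_le _).trans ((card_roots' _).trans natDegree_map_le)
    · rw [Finset.disjoint_left]
      intro z hz hzH
      obtain ⟨x, hx, rfl⟩ := Finset.mem_map.1 hz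
      exact (Equiv.Perm.mem_support.1 hx) (hsm x _ hzH rfl)
  have hc : π.IsCycle := by
    apply Equiv.Perm.isCycle_of_prime_order
    · rwa [hπo]
    · rw [hπo]; omega
  exact ⟨τ, hc, by rw [← hc.orderOf, hπo]⟩

lemma aux_root {Ω Γ : Type*} [Field Ω] [LinearOrderedCommGroupWithZero Γ] (w : Valuation Ω Γ)
    (p t : ℕ) (hp : 0 < p) (ht : 0 < t) (s z : Ω) (hs0 : s ≠ 0) (hs1 : w s < 1)
    (hz : z ^ (p + t) - (s ^ t)⁻¹ * z ^ t + 1 = 0) : 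
    w z ^ p * w s ^ t = 1 ∨ w z = w s := by
  have hst : s ^ t ≠ 0 := pow_ne_zero _ hs0
  have h1 : z ^ t * (s ^ t * z ^ p - 1) = - s ^ t := by
    field_simp at hz
    linear_combination hz
  have h2 : w z ^ t * w (s ^ t * z ^ p - 1) = w s ^ t := by
    have := congrArg w h1
    simpa using this
  have hws : 0 < w s ^ t := by
    have : w s ≠ 0 := (Valuation.ne_zero_iff w).2 hs0
    exact pow_pos (zero_lt_iff.2 this) t
  rcases lt_trichotomy (w (s ^ t * z ^ p)) 1 with h | h | h
  · right
    rw [Valuation.map_sub_eq_of_lt_right _ (by simpa using h), map_one, mul_one] at h2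
    exact (pow_left_inj₀ zero_le zero_le ht.ne').1 h2
  · left
    rw [map_mul, map_pow, map_pow] at h
    rw [mul_comm]; exact h
  · exfalso
    rw [Valuation.map_sub_eq_of_lt_left _ (by simpa using h), map_mul, map_pow, map_pow] at h2
    have h3 : w z ^ (p + t) = 1 := by
      apply mul_left_cancel₀ hws.ne'
      rw [mul_one, pow_add]
      conv_rhs => rw [← h2]
      ac_rfl
    have h4 : w z = 1 := (pow_eq_one_iff_of_nonneg zero_le (by omega)).1 h3
    rw [map_mul, map_pow, map_pow, h4, one_pow, mul_one] at h
    exact absurd h (not_lt.2 (pow_le_one₀ zero_le hs1.le))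

lemma aux_zpow_prod {Ω Γ : Type*} [Field Ω] [LinearOrderedCommGroupWithZero Γ] (w : Valuation Ω Γ)
    (γ : Γ) (hγ : γ ≠ 0) (p : ℕ) (e : Ω → ℤ) (M : Multiset Ω) (h : ∀ z ∈ M, w z ^ p = γ ^ e z) :
    w M.prod ^ p = γ ^ (M.map e).sum := by
  induction M using Multiset.induction_on with
  | empty => simp
  | cons a M ih =>
    rw [Multiset.prod_cons, Multiset.map_cons, Multiset.sum_cons, map_mul, mul_pow, zpow_add₀ hγ,
      h a (Multiset.mem_cons_self _ _), ih (fun z hz => h z (Multiset.mem_cons_of_mem hz))]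

lemma aux_card {K Ω Γ : Type*} [Field K] [Field Ω] [Algebra K Ω] [LinearOrderedCommGroupWithZero Γ]
    (w : Valuation Ω Γ) (p t : ℕ) (hp : p.Prime) [CharP K p] (ht : 0 < t) (hpt : ¬ p ∣ t) (s : K)
    (hs0 : s ≠ 0) (hs1 : w (algebraMap K Ω s) < 1)
    (hw : ∀ c : K, c ≠ 0 → ∃ m : ℤ, w (algebraMap K Ω c) = w (algebraMap K Ω s) ^ m)
    (f : K[X]) (hf : f = X ^ (p + t) - C (s ^ t)⁻¹ * X ^ t + 1) [hs : IsSplittingField K Ω f]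
    (H : Finset Ω) (hH : H.card = t)
    (hHr : ∀ z ∈ H, z ∈ f.rootSet Ω ∧ z ∈ Set.range (algebraMap K Ω) ∧ w z = w (algebraMap K Ω s)) :
    p ∣ Nat.card Gal(Ω/K) := by
  have hp0 := hp.pos
  have htK : (t : K) ≠ 0 := by rwa [Ne, CharP.cast_eq_zero_iff K p]
  have hpK : (p : K) = 0 := CharP.cast_eq_zero K p
  have hsep : f.Separable := by
    refine ⟨1, - C ((t : K)⁻¹) * X, ?_⟩
    have h1 : C ((t : K)⁻¹) * (t : K[X]) = 1 := by
      rw [← C_eq_natCast, ← C_mul, inv_mul_cancel₀ htK, C_1]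
    have hd : X * derivative f = (t : K[X]) * (X ^ (p + t) - C (s ^ t)⁻¹ * X ^ t) := by
      obtain ⟨r, rfl⟩ : ∃ r, t = r + 1 := ⟨t - 1, by omega⟩
      have hpX : (p : K[X]) = 0 := by rw [← C_eq_natCast, hpK, C_0]
      rw [hf]
      simp only [derivative_add, derivative_sub, derivative_X_pow, derivative_C_mul, derivative_one,
        C_add, C_eq_natCast, C_1, Nat.cast_add, hpX, Nat.cast_one, Nat.add_sub_cancel, ← add_assoc]
      ring
    have : (1:K[X]) * f + -C ((t:K)⁻¹) * X * derivative f = f - C ((t : K)⁻¹) * (X * derivative f) := by ring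
    rw [this, hd, ← mul_assoc, h1, hf]
    ring
  have hgal : IsGalois K Ω := IsGalois.of_separable_splitting_field hsep
  have : FiniteDimensional K Ω := IsSplittingField.finiteDimensional Ω f
  have hf' : f = X ^ (p + t) + (1 - C (s ^ t)⁻¹ * X ^ t) := by rw [hf]; ring
  have hdeg1 : (1 - C (s ^ t)⁻¹ * X ^ t : K[X]).degree < (p + t : ℕ) := by
    refine lt_of_le_of_lt (degree_sub_le _ _) (max_lt ?_ ?_)
    · refine lt_of_le_of_lt degree_one_le ?_
      exact_mod_cast (by omega : 0 < p + t)
    · refine lt_of_le_of_lt (degree_C_mul_X_pow_le _ _) ?_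
      exact_mod_cast (by omega : t < p + t)
  have hmon : f.Monic := by rw [hf']; exact monic_X_pow_add hdeg1
  have hnd : f.natDegree = p + t := by
    rw [hf', natDegree_eq_of_degree_eq_some]
    rw [degree_add_eq_left_of_degree_lt, degree_X_pow]
    rwa [degree_X_pow]
  have hc0 : f.coeff 0 = 1 := by
    rw [hf]
    simp [ht.ne', hp0.ne', coeff_zero_eq_eval_zero]
  set γ := w (algebraMap K Ω s) with hγdef
  have hsΩ : algebraMap K Ω s ≠ 0 := by simpa using hs0
  have hγ0 : γ ≠ 0 := (Valuation.ne_zero_iff w).2 hsΩ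
  have hinj : ∀ a b : ℤ, γ ^ a = γ ^ b → a = b := fun a b h =>
    zpow_right_injective₀ (zero_lt_iff.2 hγ0) hs1.ne h
  have hroot : ∀ z : Ω, aeval z f = 0 → w z ^ p = γ ^ (-(t : ℤ)) ∨ w z = γ := by
    intro z hz
    rcases aux_root w p t hp0 ht (algebraMap K Ω s) z hsΩ hs1 (by simpa [hf] using hz) with h | h
    · left
      rw [zpow_neg, zpow_natCast]
      exact eq_inv_of_mul_eq_one_left h
    · exact Or.inr h
  have hne : ∀ z : Ω, w z ^ p = γ ^ (-(t : ℤ)) → w z ≠ γ := by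
    intro z h1 h2
    rw [h2, ← zpow_natCast] at h1
    have := hinj _ _ h1
    omega
  let e : Ω → ℤ := fun z => if w z = γ then (p : ℤ) else -t
  have he : ∀ z : Ω, aeval z f = 0 → w z ^ p = γ ^ e z := by
    intro z hz
    by_cases h : w z = γ
    · simp only [e, h, if_true, zpow_natCast]
    · simp only [e, h, if_false]
      exact (hroot z hz).resolve_right h
  have hfs : (f.map (algebraMap K Ω)).Splits := hs.splits
  set S := (f.map (algebraMap K Ω)).roots with hS
  have hSn : S.Nodup := nodup_roots hsep.map
  have hScard : Multiset.card S = p + t := by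
    rw [hS, ← hfs.natDegree_eq_card_roots, natDegree_map, hnd]
  have hSmem : ∀ z, z ∈ S ↔ aeval z f = 0 := by
    intro z
    rw [hS, mem_roots (hmon.map _).ne_zero, IsRoot, eval_map_algebraMap]
  have hSprod : w S.prod = 1 := by
    have h := hfs.coeff_zero_eq_prod_roots_of_monic (hmon.map _)
    rw [coeff_map, hc0, map_one] at h
    have := congrArg w h
    simpa using this.symm
  have hsum : (S.map e).sum = 0 := by
    have := aux_zpow_prod w γ hγ0 p e S (fun z hz => he z ((hSmem z).1 hz))
    rw [hSprod, one_pow, ← zpow_zero γ] at this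
    exact (hinj _ _ this).symm
  let T := S.toFinset.filter (fun z => w z = γ)
  have hsum2 : (S.map e).sum = (p + t : ℤ) * T.card - t * (p + t) := by
    have h1 : (S.map e).sum = ∑ z ∈ S.toFinset, e z := by
      rw [Finset.sum_eq_multiset_sum, Multiset.toFinset_val, hSn.dedup]
    have h2 : ∀ z, e z = (p + t : ℤ) * (if w z = γ then 1 else 0) - t := by
      intro z; simp only [e]; split_ifs <;> ring
    have h3 : (S.toFinset.card : ℤ) = p + t := by
      rw [Multiset.toFinset_card_of_nodup hSn, hScard]; push_cast; rfl
    rw [h1, Finset.sum_congr rfl (fun z _ => h2 z), Finset.sum_sub_distrib, ← Finset.mul_sum,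
      Finset.sum_boole, Finset.sum_const, nsmul_eq_mul, h3]
    simp only [T]
    ring
  have hT : T.card = t := by
    rw [hsum] at hsum2
    have : (p + t : ℤ) * (T.card - t) = 0 := by linear_combination -hsum2
    rcases mul_eq_zero.1 this with h | h <;> omega
  have hHT : H = T := by
    apply Finset.eq_of_subset_of_card_le
    · intro z hz
      obtain ⟨h1, h2, h3⟩ := hHr z hz
      simp only [T, Finset.mem_filter, Multiset.mem_toFinset, hSmem]
      exact ⟨(mem_rootSet.1 h1).2, h3⟩
    · rw [hH, hT]
  obtain ⟨y, hyS, hyw⟩ : ∃ y ∈ S, w y ≠ γ := by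
    by_contra! hcon
    have : T = S.toFinset := Finset.filter_true_of_mem (fun z hz => hcon z (Multiset.mem_toFinset.1 hz))
    rw [this, Multiset.toFinset_card_of_nodup hSn, hScard] at hT
    omega
  have hyf : aeval y f = 0 := (hSmem y).1 hyS
  have hyi : IsIntegral K y := Algebra.IsIntegral.isIntegral y
  set P := minpoly K y with hP
  have hPm : P.Monic := minpoly.monic hyi
  have hPd : P ∣ f := minpoly.dvd K y hyf
  have hPs : (P.map (algebraMap K Ω)).Splits :=
    hgal.to_normal.splits y
  have hPr : ∀ z ∈ (P.map (algebraMap K Ω)).roots, aeval z P = 0 := by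
    intro z hz
    have := (mem_roots'.1 hz).2
    rwa [IsRoot, eval_map_algebraMap] at this
  have hwild : ∀ z ∈ (P.map (algebraMap K Ω)).roots, w z ^ p = γ ^ (-(t : ℤ)) := by
    intro z hz
    have hzP := hPr z hz
    have hzf : aeval z f = 0 := by
      obtain ⟨g, hg⟩ := hPd
      rw [hg, map_mul, hzP, zero_mul]
    refine (hroot z hzf).resolve_right ?_
    intro hzw
    have hzH : z ∈ H := by
      rw [hHT]
      simp only [T, Finset.mem_filter, Multiset.mem_toFinset, hSmem]
      exact ⟨hzf, hzw⟩
    obtain ⟨c, rfl⟩ := (hHr z hzH).2.1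
    have hc : P.IsRoot c := by
      rw [aeval_algebraMap_apply] at hzP
      simpa using hzP
    have hyc := minpoly.root hyi hc
    apply hyw
    rw [← hyc, hzw]
  have hPprod := aux_zpow_prod w γ hγ0 p (fun _ => -(t : ℤ)) _ hwild
  rw [Multiset.map_const', Multiset.sum_replicate, ← hPs.natDegree_eq_card_roots, natDegree_map] at hPprod
  have hPc := hPs.coeff_zero_eq_prod_roots_of_monic (hPm.map _)
  have hP0 : P.coeff 0 ≠ 0 := by
    refine minpoly.coeff_zero_ne_zero hyi ?_
    rintro rfl
    rw [← coeff_zero_eq_aeval_zero', hc0] at hyf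
    simp at hyf
  obtain ⟨m, hm⟩ := hw _ hP0
  have hPw : w (P.map (algebraMap K Ω)).roots.prod = γ ^ m := by
    rw [← hm, ← coeff_map, hPc]
    simp
  rw [hPw, ← zpow_natCast, ← zpow_mul] at hPprod
  have hk := hinj _ _ hPprod
  have hdvd : (p : ℤ) ∣ (t * P.natDegree : ℕ) := ⟨-m, by
    push_cast
    rw [nsmul_eq_mul] at hk
    linear_combination hk⟩
  have hdvd' : p ∣ P.natDegree := (hp.dvd_mul.1 (Int.natCast_dvd_natCast.1 hdvd)).resolve_left hpt
  rw [IsGalois.card_aut_eq_finrank]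
  exact hdvd'.trans (minpoly.degree_dvd hyi)

lemma aux_inj {k k' K : Type*} [Field k] [Field k'] [Field K] (j : k →+* k')
    [Algebra (PowerSeries k') K] [IsFractionRing (PowerSeries k') K] (t : ℕ) (ht : 0 < t) :
    Function.Injective (eval₂RingHom ((algebraMap (PowerSeries k') K).comp
      ((PowerSeries.C (R := k')).comp j))
      ((algebraMap (PowerSeries k') K PowerSeries.X ^ t)⁻¹)) := by
  rw [injective_iff_map_eq_zero]
  intro P hP
  have hinj : Function.Injective (algebraMap (PowerSeries k') K) := IsFractionRing.injective _ _
  have hX : algebraMap (PowerSeries k') K PowerSeries.X ≠ 0 := by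
    rw [Ne, map_eq_zero_iff _ hinj]
    exact PowerSeries.X_ne_zero
  rw [coe_eval₂RingHom] at hP
  letI : Invertible ((algebraMap (PowerSeries k') K PowerSeries.X ^ t)⁻¹) :=
    invertibleOfNonzero (inv_ne_zero (pow_ne_zero _ hX))
  rw [← eval₂_reverse_eq_zero_iff, invOf_eq_inv, inv_inv, ← map_pow, ← hom_eval₂,
    map_eq_zero_iff _ hinj] at hP
  have h2 := congrArg (PowerSeries.constantCoeff (R := k')) hP
  rw [hom_eval₂, map_pow, PowerSeries.constantCoeff_X, zero_pow ht.ne', map_zero, eval₂_at_zero,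
    coeff_zero_reverse] at h2
  have h3 : j P.leadingCoeff = 0 := by simpa using h2
  rw [map_eq_zero] at h3
  exact leadingCoeff_eq_zero.1 h3

lemma aux_e1 {K : Type*} [Field K] (p t : ℕ) (s u : K) (hs : s ≠ 0) (hu : u ≠ 0) :
    s ^ (p + t) / u ^ (p + t) - (s ^ t)⁻¹ * (s ^ t / u ^ t) + 1 =
      (u ^ (p + t) - u ^ p + s ^ (p + t)) / u ^ (p + t) := by
  rw [pow_add u]
  field_simp
  ring

lemma aux_e2 {K : Type*} [Field K] (s u v : K) (hs : s ≠ 0)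
    (h : s / u = s / v) : u = v := by
  rw [div_eq_mul_inv, div_eq_mul_inv] at h
  exact inv_injective (mul_left_cancel₀ hs h)

theorem stmt_11 (p : ℕ) (hp : p.Prime)
    (k : Type*) [Field k] [CharP k p]
    (t : ℕ) (ht : 0 < t) (hpt : ¬ p ∣ t)
    (n : ℕ) (hn : n = p + t)
    (f : Polynomial (RatFunc k))
    (hf : f = X ^ n - C RatFunc.X * X ^ t + 1) :
    haveI : Fact ((f.map (algebraMap (RatFunc k) f.SplittingField)).Splits) :=
      ⟨SplittingField.splits f⟩
    ∃ σ : f.Gal,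
      (Polynomial.Gal.galActionHom f f.SplittingField σ).IsCycle ∧
      (Polynomial.Gal.galActionHom f f.SplittingField σ).support.card = p := by
  subst hn
  have hp0 := hp.pos
  let k' := AlgebraicClosure k
  have : CharP k' p := charP_of_injective_algebraMap (algebraMap k k').injective p
  let R := PowerSeries k'
  let K := FractionRing R
  have hRinj : Function.Injective (algebraMap R K) := IsFractionRing.injective _ _
  have : CharP R p := charP_of_injective_ringHom (PowerSeries.C_injective (R := k')) p
  have : CharP K p := charP_of_injective_algebraMap hRinj p
  have hinj := aux_inj (K := K) (algebraMap k k') t ht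
  letI : Algebra (RatFunc k) K := (IsFractionRing.lift hinj).toAlgebra
  let s : K := algebraMap R K PowerSeries.X
  have hs0 : s ≠ 0 := by
    simp only [s]
    rw [Ne, map_eq_zero_iff _ hRinj]
    exact PowerSeries.X_ne_zero
  have hx : algebraMap (RatFunc k) K RatFunc.X = (s ^ t)⁻¹ := by
    rw [← RatFunc.algebraMap_X]
    change IsFractionRing.lift hinj _ = _
    rw [IsFractionRing.lift_algebraMap, coe_eval₂RingHom, eval₂_X]
  let fK := f.map (algebraMap (RatFunc k) K)
  have hfK : fK = X ^ (p + t) - C (s ^ t)⁻¹ * X ^ t + 1 := by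
    simp [fK, hf, hx]
  obtain ⟨Ω, iF, iA, hsplit⟩ : ∃ (Ω : Type _) (_ : Field Ω) (_ : Algebra K Ω), IsSplittingField K Ω fK :=
    ⟨fK.SplittingField, inferInstance, inferInstance, inferInstance⟩
  letI : Algebra (RatFunc k) Ω := ((algebraMap K Ω).comp (algebraMap (RatFunc k) K)).toAlgebra
  have : IsScalarTower (RatFunc k) K Ω := IsScalarTower.of_algebraMap_eq (fun _ => rfl)
  obtain ⟨A, hA1, hA2⟩ := aux_val ((algebraMap K Ω).comp (algebraMap R K))
    ((algebraMap K Ω).injective.comp hRinj)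
  have hXirr : Irreducible (PowerSeries.X : R) := PowerSeries.X_prime.irreducible
  have hs1 : A.valuation (algebraMap K Ω s) < 1 := hA2 _ hXirr.not_isUnit
  have hsΩ : algebraMap K Ω s ≠ 0 := by simpa using hs0
  have hγ0 : A.valuation (algebraMap K Ω s) ≠ 0 := (Valuation.ne_zero_iff _).2 hsΩ
  have hwR : ∀ a : R, a ≠ 0 → ∃ m : ℕ, A.valuation (algebraMap K Ω (algebraMap R K a)) =
      A.valuation (algebraMap K Ω s) ^ m := by
    intro a ha
    obtain ⟨m, u, hu⟩ := IsDiscreteValuationRing.eq_unit_mul_pow_irreducible ha hXirr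
    refine ⟨m, ?_⟩
    have h1 : A.valuation (algebraMap K Ω (algebraMap R K u)) = 1 := hA1 u u.isUnit
    rw [hu, map_mul, map_mul, map_mul, h1, one_mul, map_pow, map_pow, map_pow]
  have hw : ∀ c : K, c ≠ 0 → ∃ m : ℤ, A.valuation (algebraMap K Ω c) =
      A.valuation (algebraMap K Ω s) ^ m := by
    intro c hc
    obtain ⟨a, b, hb, rfl⟩ := IsFractionRing.div_surjective R c
    have hb0 : b ≠ 0 := nonZeroDivisors.ne_zero hb
    have ha0 : a ≠ 0 := by
      rintro rfl
      simp at hc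
    obtain ⟨m, hm⟩ := hwR a ha0
    obtain ⟨l, hl⟩ := hwR b hb0
    refine ⟨m - l, ?_⟩
    rw [map_div₀, map_div₀, hm, hl, zpow_sub₀ hγ0, zpow_natCast, zpow_natCast]
  have htk : (t : k') ≠ 0 := by rwa [Ne, CharP.cast_eq_zero_iff k' p]
  obtain ⟨ζs, hζc, hζs⟩ : ∃ Z : Finset k', Z.card = t ∧ ∀ ζ ∈ Z, ζ ^ t = 1 := by
    have hsep : (X ^ t - C (1 : k')).Separable := separable_X_pow_sub_C 1 htk one_ne_zero
    refine ⟨(X ^ t - C (1 : k')).roots.toFinset, ?_, ?_⟩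
    · rw [Multiset.toFinset_card_of_nodup (nodup_roots hsep),
        ← (IsAlgClosed.splits _).natDegree_eq_card_roots, natDegree_X_pow_sub_C]
    · intro ζ hζ
      have := (mem_roots'.1 (Multiset.mem_toFinset.1 hζ)).2
      simpa [IsRoot, sub_eq_zero] using this
  choose! U hU1 hU2 using fun ζ (hζ : ζ ∈ ζs) => aux_hensel p t hp ht hpt ζ (hζs ζ hζ)
  have hUu : ∀ ζ ∈ ζs, IsUnit (U ζ) := by
    intro ζ hζ
    rw [PowerSeries.isUnit_iff_constantCoeff, hU2 ζ hζ]
    exact IsUnit.of_pow_eq_one (hζs ζ hζ) ht.ne'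
  let Z : k' → K := fun ζ => s / algebraMap R K (U ζ)
  have hU0 : ∀ ζ ∈ ζs, algebraMap R K (U ζ) ≠ 0 := by
    intro ζ hζ
    rw [Ne, map_eq_zero_iff _ hRinj]
    exact (hUu ζ hζ).ne_zero
  have hZroot : ∀ ζ ∈ ζs, eval (Z ζ) fK = 0 := by
    intro ζ hζ
    have h0 := hU0 ζ hζ
    have h1 := congrArg (algebraMap R K) (hU1 ζ hζ)
    rw [map_add, map_sub, map_pow, map_pow, map_pow, map_zero] at h1
    change algebraMap R K (U ζ) ^ (p + t) - algebraMap R K (U ζ) ^ p + s ^ (p + t) = 0 at h1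
    rw [hfK]
    simp only [eval_add, eval_sub, eval_mul, eval_pow, eval_X, eval_C, eval_one, Z]
    generalize algebraMap R K (U ζ) = u at h0 h1
    rw [div_pow, div_pow]
    rw [aux_e1 p t s u hs0 h0, h1, zero_div]
  let H : Finset Ω := ζs.image (fun ζ => algebraMap K Ω (Z ζ))
  have hHc : H.card = t := by
    rw [Finset.card_image_of_injOn, hζc]
    intro a ha b hb hab
    have h1 : Z a = Z b := (algebraMap K Ω).injective hab
    have h2 : algebraMap R K (U a) = algebraMap R K (U b) := by
      simp only [Z] at h1
      exact aux_e2 s _ _ hs0 h1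
    rw [← hU2 a ha, ← hU2 b hb, hRinj h2]
  have hfK0 : fK ≠ 0 := by
    intro h
    have := congrArg (fun q => eval 0 q) h
    simp [hfK, ht.ne', hp0.ne'] at this
  have hHr : ∀ z ∈ H, z ∈ fK.rootSet Ω ∧ z ∈ Set.range (algebraMap K Ω) ∧
      A.valuation z = A.valuation (algebraMap K Ω s) := by
    intro z hz
    obtain ⟨ζ, hζ, rfl⟩ := Finset.mem_image.1 hz
    refine ⟨?_, ⟨_, rfl⟩, ?_⟩
    · rw [mem_rootSet]
      refine ⟨hfK0, ?_⟩
      rw [aeval_algebraMap_apply, coe_aeval_eq_eval, hZroot ζ hζ, map_zero]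
    · have h1 : A.valuation (algebraMap K Ω (algebraMap R K (U ζ))) = 1 := hA1 _ (hUu ζ hζ)
      simp only [Z]
      rw [map_div₀, map_div₀, h1, div_one]
  have hdiv : p ∣ Nat.card Gal(Ω/K) :=
    aux_card A.valuation p t hp ht hpt s hs0 hs1 hw fK hfK H hHc hHr
  refine aux_transfer (K := K) (Ω := Ω) f p hp hdiv H ?_ ?_
  · rw [hHc]
    have h1 : f.natDegree ≤ p + t := by
      rw [hf]
      compute_degree
      all_goals omega
    omega
  · intro z hz
    obtain ⟨h1, h2, -⟩ := hHr z hz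
    refine ⟨?_, h2⟩
    rw [mem_rootSet'] at h1 ⊢
    simpa [fK, Polynomial.map_map, ← IsScalarTower.algebraMap_eq] using h1
end

section
/- Let k be a field, let n > t > 1 be integers with gcd(n,t) = 1, and let a be a nonzero element of k. Let Y and Z be indeterminates and let P(Z) be the polynomial in Z with coefficients in the rational function field k(Y) determined by Z·P(Z) = ((Z+Y)^n - Y^n) - a·((Z+Y)^t - Y^t). Then P(Z) is irreducible in k(Y)[Z]. -/
open Polynomial

lemma irr_of_reverse {R : Type*} [CommRing R] [IsDomain R] (f : R[X]) (h0 : f.coeff 0 ≠ 0)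
    (h : Irreducible f.reverse) : Irreducible f := by
  have key : ∀ g : R[X], g.coeff 0 ≠ 0 → IsUnit g.reverse → IsUnit g := by
    intro g hg hu
    have htd : g.natTrailingDegree = 0 := by
      rw [natTrailingDegree_eq_zero]; exact Or.inr hg
    have hd : g.natDegree = 0 := by
      have := natDegree_eq_reverse_natDegree_add_natTrailingDegree g
      rw [natDegree_eq_zero_of_isUnit hu, htd] at this
      exact this
    rw [eq_C_of_natDegree_eq_zero hd] at hu ⊢
    simpa using hu
  constructor
  · intro hu
    apply h.not_isUnit
    obtain ⟨c, hc, rfl⟩ := Polynomial.isUnit_iff.1 hu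
    simpa using hc
  · intro x y hxy
    rw [hxy, mul_coeff_zero] at h0
    have := h.isUnit_or_isUnit (a := x.reverse) (b := y.reverse)
      (by rw [hxy, reverse_mul_of_domain])
    exact this.imp (key x (left_ne_zero_of_mul h0)) (key y (right_ne_zero_of_mul h0))

/-- Eisenstein for binomials. -/
lemma irr_binom {R : Type*} [CommRing R] [IsDomain R] (b c q : R) (d : ℕ)
    (hd : 0 < d) (hbc : IsCoprime b c) (hq : Prime q) (hqc : q ∣ c) (hq2 : ¬ q ^ 2 ∣ c) :
    Irreducible (C b * X ^ d + C c : R[X]) := by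
  have hqb : ¬ q ∣ b := fun h => hq.not_isUnit (hbc.isUnit_of_dvd' h hqc)
  have hb : b ≠ 0 := fun h => hqb (h ▸ dvd_zero _)
  have hdeg : (C b * X ^ d + C c : R[X]).natDegree = d := by
    rw [natDegree_add_C, natDegree_C_mul_X_pow _ _ hb]
  have hne : (C b * X ^ d + C c : R[X]) ≠ 0 := by
    intro h; rw [h] at hdeg; simp at hdeg; omega
  have hc0 : (C b * X ^ d + C c : R[X]).coeff 0 = c := by
    simp [coeff_X_pow, hd.ne]
  have hcd : (C b * X ^ d + C c : R[X]).coeff d = b := by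
    simp [coeff_C, hd.ne']
  have hprim : (C b * X ^ d + C c : R[X]).IsPrimitive := by
    intro r hr
    rw [C_dvd_iff_dvd_coeff] at hr
    exact hbc.isUnit_of_dvd' (hcd ▸ hr d) (hc0 ▸ hr 0)
  refine irreducible_of_eisenstein_criterion (P := Ideal.span {q})
    ((Ideal.span_singleton_prime hq.ne_zero).2 hq) ?_ ?_ ?_ ?_ hprim
  · rw [leadingCoeff, hdeg, hcd, Ideal.mem_span_singleton]; exact hqb
  · intro m hm
    rw [degree_eq_natDegree hne, hdeg] at hm
    have hm : m < d := by exact_mod_cast hm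
    rw [Ideal.mem_span_singleton]
    rcases Nat.eq_zero_or_pos m with rfl | h
    · rw [hc0]; exact hqc
    · simp [coeff_X_pow, hm.ne, coeff_C, h.ne']
  · rw [degree_eq_natDegree hne, hdeg]; exact_mod_cast hd
  · rw [hc0, Ideal.span_singleton_pow, Ideal.mem_span_singleton]; exact hq2

lemma irr_binom' {R : Type*} [CommRing R] [IsDomain R] (b c q : R) (d : ℕ) (hc : c ≠ 0)
    (hd : 0 < d) (hbc : IsCoprime b c) (hq : Prime q) (hqb : q ∣ b) (hq2 : ¬ q ^ 2 ∣ b) :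
    Irreducible (C b * X ^ d + C c : R[X]) := by
  have hb : b ≠ 0 := fun h => hq2 (h ▸ dvd_zero _)
  have hdeg : (C b * X ^ d + C c : R[X]).natDegree = d := by
    rw [natDegree_add_C, natDegree_C_mul_X_pow _ _ hb]
  apply irr_of_reverse
  · simpa [coeff_X_pow, hd.ne] using hc
  · have : (C b * X ^ d + C c : R[X]).reverse = C c * X ^ d + C b := by
      rw [reverse, hdeg, reflect_add, reflect_C_mul_X_pow, reflect_C, revAt_le le_rfl]
      simp [add_comm]
    rw [this]
    exact irr_binom c b q d hd hbc.symm hq hqb hq2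

/-- `B m = ((X+1)^m - 1)/X`. -/
noncomputable def BB (k : Type*) [Field k] (m : ℕ) : k[X] := ∑ i ∈ Finset.range m, (X + 1) ^ i

lemma BB_mul (k : Type*) [Field k] (m : ℕ) : X * BB k m = (X + 1) ^ m - 1 := by
  have := geom_sum_mul (X + 1 : k[X]) m
  rw [← this, BB]; ring

lemma BB_natDegree (k : Type*) [Field k] (m : ℕ) : (BB k m).natDegree = m - 1 := by
  rcases Nat.eq_zero_or_pos m with rfl | h
  · simp [BB]
  have h1 : (X * BB k m).natDegree = m := by
    rw [BB_mul, show (X + 1 : k[X]) = X + C 1 by simp, show (1 : k[X]) = C 1 by simp,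
      natDegree_sub_C, natDegree_pow, natDegree_X_add_C, mul_one]
  have hne : BB k m ≠ 0 := by rintro h'; simp [h'] at h1; omega
  rw [natDegree_X_mul hne] at h1; omega

lemma BB_coprime (k : Type*) [Field k] (n t : ℕ) (h1 : 1 < t) (hco : Nat.gcd n t = 1) :
    IsCoprime (BB k n) (BB k t) := by
  apply isCoprime_of_irreducible_dvd
  · rintro ⟨-, h⟩
    have := BB_natDegree k t
    rw [h] at this; simp at this; omega
  intro q hq hqn hqt
  have : Fact (Irreducible q) := ⟨hq⟩
  let w : AdjoinRoot q := AdjoinRoot.mk q (X + 1)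
  have hB : ∀ m, q ∣ BB k m → w ^ m = 1 ∧ ∑ i ∈ Finset.range m, w ^ i = 0 := by
    intro m hm
    have e := AdjoinRoot.mk_eq_zero.2 hm
    constructor
    · have := congrArg (AdjoinRoot.mk q) (BB_mul k m)
      rw [map_mul, e, mul_zero, map_sub, map_pow, map_one] at this
      exact (sub_eq_zero.1 this.symm)
    · rw [BB, map_sum] at e
      simpa only [map_pow] using e
  obtain ⟨a1, a2⟩ := hB n hqn
  obtain ⟨b1, b2⟩ := hB t hqt
  have hw : w = 1 := by
    have := Nat.dvd_gcd (orderOf_dvd_of_pow_eq_one a1) (orderOf_dvd_of_pow_eq_one b1)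
    rw [hco, Nat.dvd_one, orderOf_eq_one_iff] at this
    exact this
  rw [hw] at a2 b2
  simp at a2 b2
  have hc : IsCoprime (n : ℤ) (t : ℤ) := Nat.isCoprime_iff_coprime.2 hco
  obtain ⟨u, v, huv⟩ := hc
  have := congrArg (Int.cast : ℤ → AdjoinRoot q) huv
  push_cast at this
  rw [a2, b2] at this
  simp at this

lemma BB_prime (k : Type*) [Field k] (m : ℕ) (h1 : 1 < m) (hm : (m : k) ≠ 0) :
    ∃ q, Prime q ∧ q ∣ BB k m ∧ ¬ q ^ 2 ∣ BB k m := by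
  have hsep : (((X : k[X]) + 1) ^ m - 1).Separable := by
    refine ⟨-1, C (m : k)⁻¹ * (X + 1), ?_⟩
    have : C (m : k)⁻¹ * (m : k[X]) = 1 := by
      rw [← C_eq_natCast, ← C_mul, inv_mul_cancel₀ hm, C_1]
    obtain ⟨r, rfl⟩ : ∃ r, m = r + 1 := ⟨m - 1, by omega⟩
    simp only [derivative_sub, derivative_pow, derivative_add, derivative_X, derivative_one,
      Nat.add_sub_cancel]
    simp only [C_eq_natCast]
    linear_combination ((X + 1) ^ (r + 1)) * this
  have hsq : Squarefree (BB k m) :=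
    hsep.squarefree.squarefree_of_dvd ⟨X, by rw [← BB_mul]; ring⟩
  have hd : (BB k m).natDegree ≠ 0 := by rw [BB_natDegree]; omega
  obtain ⟨q, hq, hdvd⟩ := WfDvdMonoid.exists_irreducible_factor
    (a := BB k m) (fun h => hd (natDegree_eq_zero_of_isUnit h)) (fun h => hd (by simp [h]))
  exact ⟨q, hq.prime, hdvd, fun h => hq.not_isUnit (hsq q (by rwa [← sq]))⟩

lemma QQ_irr (k : Type*) [Field k] (n t : ℕ) (h1 : 1 < t) (h2 : t < n)
    (hco : Nat.gcd n t = 1) (a : k) (ha : a ≠ 0) :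
    Irreducible (C (BB k n) * X ^ (n - t) + C (C (-a) * BB k t) : k[X][X]) := by
  have hu : IsUnit (C (-a) : k[X]) := isUnit_C.2 (neg_ne_zero.2 ha).isUnit
  have hcop : IsCoprime (BB k n) (C (-a) * BB k t) :=
    (isCoprime_mul_unit_left_right hu _ _).2 (BB_coprime k n t h1 hco)
  have hne : C (-a) * BB k t ≠ 0 := by
    apply mul_ne_zero hu.ne_zero
    intro h
    have := BB_natDegree k t
    rw [h] at this; simp at this; omega
  by_cases ht : (t : k) = 0
  · have hn : (n : k) ≠ 0 := by
      intro hn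
      obtain ⟨u, v, huv⟩ := Nat.isCoprime_iff_coprime.2 hco
      have := congrArg (Int.cast : ℤ → k) huv
      push_cast at this
      rw [hn, ht] at this
      simp at this
    obtain ⟨q, hq, a1, a2⟩ := BB_prime k n (by omega) hn
    exact irr_binom' _ _ q _ hne (by omega) hcop hq a1 a2
  · obtain ⟨q, hq, a1, a2⟩ := BB_prime k t h1 ht
    refine irr_binom _ _ q _ (by omega) hcop hq (a1.mul_left _) ?_
    rwa [hu.dvd_mul_left]

lemma P0_irr (k : Type*) [Field k] (n t : ℕ) (h1 : 1 < t) (h2 : t < n)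
    (hco : Nat.gcd n t = 1) (a : k) (ha : a ≠ 0) (P : k[X][X])
    (hP : X * P = ((X + C X) ^ n - C (X ^ n)) - C (C a) * ((X + C X) ^ t - C (X ^ t))) :
    P.Monic ∧ Irreducible P := by
  have hdl : ((- C ((X : k[X]) ^ n) - C (C a) * ((X + C X) ^ t - C (X ^ t)) : k[X][X])).degree
      < ((X + C X : k[X][X]) ^ n).degree := by
    rw [degree_pow, degree_X_add_C, nsmul_one]
    have hn0 : ((0 : ℕ) : WithBot ℕ) < n := by exact_mod_cast (by omega : 0 < n)
    refine lt_of_le_of_lt (b := (t : WithBot ℕ)) ?_ (by exact_mod_cast h2)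
    have hC : ∀ r : k[X], (C r).degree ≤ (t : WithBot ℕ) := fun r =>
      degree_C_le.trans (by exact_mod_cast Nat.zero_le t)
    refine (degree_sub_le _ _).trans (max_le ?_ ?_)
    · rw [degree_neg]; exact hC _
    · rw [degree_C_mul_of_isUnit (isUnit_C.2 ha.isUnit)]
      refine (degree_sub_le _ _).trans (max_le ?_ (hC _))
      rw [degree_pow, degree_X_add_C, nsmul_one]
  have hXP : X * P = (X + C X) ^ n +
      (- C ((X : k[X]) ^ n) - C (C a) * ((X + C X) ^ t - C (X ^ t))) := by rw [hP]; ring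
  have hmon' : (X * P).Monic := by
    rw [hXP]
    exact ((monic_X_add_C X).pow n).add_of_left hdl
  have hmon : P.Monic := monic_X.of_mul_monic_left hmon'
  have hdeg : P.natDegree + 1 = n := by
    rw [← natDegree_X_mul hmon.ne_zero, hXP, natDegree_add_eq_left_of_degree_lt hdl,
      natDegree_pow, natDegree_X_add_C, mul_one]
  refine ⟨hmon, hmon.irreducible_iff_natDegree.2 ⟨?_, ?_⟩⟩
  · rintro rfl; simp at hdeg; omega
  intro G H hG hH hGH
  let φ : k[X][X] →+* k[X][X] :=
    (Bivariate.swap (R := k)).toRingEquiv.toRingHom.comp (compRingHom (C X * X))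
  have φdef : ∀ p, φ p = Bivariate.swap (p.comp (C X * X)) := fun p => rfl
  have φX : φ X = X * C X := by
    rw [φdef, X_comp, map_mul, Bivariate.swap_X, Bivariate.swap_Y]
  have φCX : φ (C X) = X := by rw [φdef, C_comp, Bivariate.swap_X]
  have φC : φ (C (C a)) = C (C a) := by rw [φdef, C_comp, Bivariate.swap_C_C]
  have hφP : φ P = X ^ (t - 1) * (C (BB k n) * X ^ (n - t) + C (C (-a) * BB k t)) := by
    have hne : (X * C X : k[X][X]) ≠ 0 := mul_ne_zero X_ne_zero (by simp)
    apply mul_left_cancel₀ hne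
    have e := congrArg φ hP
    simp only [map_mul, map_sub, map_pow, map_add, φX, φCX, φC] at e
    rw [e]
    have en := congrArg (C : k[X] → k[X][X]) (BB_mul k n)
    have et := congrArg (C : k[X] → k[X][X]) (BB_mul k t)
    simp only [map_mul, map_sub, map_pow, map_add, map_one, map_neg] at en et ⊢
    obtain ⟨s, rfl⟩ : ∃ s, t = s + 1 := ⟨t - 1, by omega⟩
    obtain ⟨d, rfl⟩ : ∃ d, n = s + 1 + d := ⟨n - (s + 1), by omega⟩
    have e1 : (X * C X + X : k[X][X]) = X * (C X + 1) := by ring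
    rw [e1, mul_pow, mul_pow, Nat.add_sub_cancel, Nat.add_sub_cancel_left]
    linear_combination (-X ^ (s + 1 + d)) * en + C (C a) * X ^ (s + 1) * et
  have hirr := QQ_irr k n t h1 h2 hco a ha
  have key : ∀ G : k[X][X], φ G ∣ X ^ (t - 1) → G.natDegree = 0 := by
    intro G hG
    obtain ⟨i, -, hi⟩ := (dvd_prime_pow prime_X _).1 hG
    obtain ⟨u, hu⟩ := hi.symm
    obtain ⟨c, hc, hcu⟩ := Polynomial.isUnit_iff.1 u.isUnit
    obtain ⟨c', -, rfl⟩ := Polynomial.isUnit_iff.1 hc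
    rw [← hcu] at hu
    have e := congrArg (Bivariate.swap (R := k)) hu
    rw [φdef, Bivariate.swap_swap_apply, map_mul, map_pow, Bivariate.swap_Y,
      Bivariate.swap_C_C, ← C_pow, ← C_mul] at e
    have e2 := congrArg natDegree e
    rw [natDegree_C, natDegree_comp, natDegree_C_mul_X _ X_ne_zero, mul_one] at e2
    exact e2.symm
  have hmul : φ G * φ H = X ^ (t - 1) * (C (BB k n) * X ^ (n - t) + C (C (-a) * BB k t)) := by
    rw [← map_mul, hGH, hφP]
  rcases hirr.prime.dvd_or_dvd (Dvd.intro_left _ hmul.symm) with ⟨r, hr⟩ | ⟨r, hr⟩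
  · right
    apply key
    refine ⟨r, ?_⟩
    apply mul_right_cancel₀ hirr.ne_zero
    rw [← hmul, hr]; ring
  · left
    apply key
    refine ⟨r, ?_⟩
    apply mul_right_cancel₀ hirr.ne_zero
    rw [← hmul, hr]; ring

/-- Third irreducibility lemma: for `n > t > 1` with `gcd(n,t) = 1` and
`a ≠ 0` in `k`, the polynomial `P(Z)` with
`Z·P(Z) = ((Z+Y)^n - Y^n) - a·((Z+Y)^t - Y^t)` is irreducible in `k(Y)[Z]`. -/
theorem stmt_16 (k : Type*) [Field k] (n t : ℕ) (h1 : 1 < t) (h2 : t < n)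
    (hco : Nat.gcd n t = 1) (a : k) (ha : a ≠ 0)
    (P : Polynomial (RatFunc k))
    (hP : (X : Polynomial (RatFunc k)) * P =
      ((X + C RatFunc.X) ^ n - C (RatFunc.X ^ n)) -
        C (algebraMap k (RatFunc k) a) * ((X + C RatFunc.X) ^ t - C (RatFunc.X ^ t))) :
    Irreducible P := by
  have hd : ∀ m : ℕ, (X : k[X][X]) ∣ (X + C X) ^ m - C (X ^ m) := by
    intro m
    have := sub_dvd_pow_sub_pow (X + C X : k[X][X]) (C X) m
    rwa [add_sub_cancel_right, ← C_pow] at this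
  obtain ⟨P0, hP0⟩ := dvd_sub (hd n) ((hd t).mul_left (C (C a)))
  obtain ⟨hmon, hirr⟩ := P0_irr k n t h1 h2 hco a ha P0 hP0.symm
  have hmap : P0.map (algebraMap k[X] (RatFunc k)) = P := by
    apply mul_left_cancel₀ (X_ne_zero (R := RatFunc k))
    rw [hP]
    have e := congrArg (Polynomial.map (algebraMap k[X] (RatFunc k))) hP0
    simp only [Polynomial.map_mul, Polynomial.map_sub, Polynomial.map_pow, Polynomial.map_add,
      map_X, map_C, map_pow, RatFunc.algebraMap_X, RatFunc.algebraMap_C] at e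
    rw [← e]
    simp [RatFunc.algebraMap_eq_C]
  rw [← hmap]
  exact (hmon.irreducible_iff_irreducible_map_fraction_map (K := RatFunc k)).1 hirr
end

section
/- Let p and π be prime numbers and let μ and u be positive integers such that p^μ + 1 = π^u. Then: (i) if p > 2, then μ = 1, π = 2, and u is a prime number (so that p is a Mersenne prime); (ii) if p = 2 and u > 1, then μ = 3, π = 3, and u = 2; (iii) if p = 2 and u = 1, then μ is a power of 2 (so that π is a Fermat prime). -/
theorem aux_odd (a u n : ℕ) (ha : 2 < a + 1) (hodd : a % 2 = 1) (hu : Odd u)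
    (h : a ^ u + 1 = 2 ^ n) : a ^ u = a := by
  obtain ⟨k, hk, hk2⟩ := (Nat.dvd_prime_pow Nat.prime_two).1
    (show a + 1 ∣ 2 ^ n by rw [← h]; simpa using hu.nat_add_dvd_pow_add_pow a 1)
  rcases Nat.lt_or_ge k n with hlt | hge
  · exfalso
    obtain ⟨j, rfl⟩ := hu
    have h1 : (a : ℤ) ^ 2 ≡ 1 [ZMOD 2 * (a + 1)] := by
      refine (Int.modEq_iff_dvd.2 ⟨((a / 2 : ℕ) : ℤ), ?_⟩).symm
      have : (a : ℤ) = 2 * ((a / 2 : ℕ) : ℤ) + 1 := by omega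
      generalize ((a / 2 : ℕ) : ℤ) = c at *
      rw [this]; ring
    have h2 : (a : ℤ) ^ (2 * j + 1) + 1 ≡ a + 1 [ZMOD 2 * (a + 1)] := by
      have := ((h1.pow j).mul_right (a : ℤ)).add_right 1
      simpa [pow_succ, pow_mul] using this
    have h3 : (2 * (a + 1) : ℤ) ∣ (a : ℤ) ^ (2 * j + 1) + 1 := by
      have : 2 * (a + 1) ∣ a ^ (2 * j + 1) + 1 := by
        rw [h, hk2, ← pow_succ']; exact pow_dvd_pow 2 hlt
      exact_mod_cast this
    have h4 : (2 * (a + 1) : ℤ) ∣ (a : ℤ) + 1 := (Int.ModEq.dvd_iff h2).1 h3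
    have := Int.le_of_dvd (by omega) h4
    omega
  · have : k = n := le_antisymm hk hge
    subst this; omega

theorem aux_odd2 (a u n : ℕ) (ha : 2 < a) (hodd : a % 2 = 1) (hu : Odd u)
    (h : 2 ^ n + 1 = a ^ u) : a ^ u = a := by
  have hz : (2 : ℤ) ^ n = (a : ℤ) ^ u - 1 := by
    have : (2 : ℤ) ^ n + 1 = (a : ℤ) ^ u := by exact_mod_cast h
    omega
  obtain ⟨b, rfl⟩ : ∃ b, a = b + 1 := ⟨a - 1, by omega⟩
  obtain ⟨k, hk, hk2⟩ := (Nat.dvd_prime_pow Nat.prime_two).1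
    (show b ∣ 2 ^ n by
      have : (b : ℤ) ∣ 2 ^ n := by
        rw [hz]; simpa using sub_one_dvd_pow_sub_one ((b + 1 : ℕ) : ℤ) u
      exact_mod_cast this)
  rcases Nat.lt_or_ge k n with hlt | hge
  · exfalso
    obtain ⟨j, rfl⟩ := hu
    have h1 : ((b + 1 : ℕ) : ℤ) ^ 2 ≡ 1 [ZMOD 2 * b] := by
      refine (Int.modEq_iff_dvd.2 ⟨((b / 2 : ℕ) : ℤ) + 1, ?_⟩).symm
      have : (b : ℤ) = 2 * ((b / 2 : ℕ) : ℤ) := by omega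
      generalize ((b / 2 : ℕ) : ℤ) = c at *
      push_cast
      rw [this]; ring
    have h2 : ((b + 1 : ℕ) : ℤ) ^ (2 * j + 1) - 1 ≡ b [ZMOD 2 * b] := by
      have := ((h1.pow j).mul_right ((b + 1 : ℕ) : ℤ)).sub_right 1
      simpa [pow_succ, pow_mul] using this
    have h3 : (2 * b : ℤ) ∣ ((b + 1 : ℕ) : ℤ) ^ (2 * j + 1) - 1 := by
      have : 2 * b ∣ 2 ^ n := by
        rw [hk2, ← pow_succ']; exact pow_dvd_pow 2 hlt
      rw [← hz]
      exact_mod_cast this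
    have h4 : (2 * b : ℤ) ∣ (b : ℤ) := (Int.ModEq.dvd_iff h2).1 h3
    have := Int.le_of_dvd (by omega) h4
    omega
  · have : k = n := le_antisymm hk hge
    subst this; omega

/-- Abhyankar's simple numerical lemma: if `p, π` are primes and `μ, u`
positive integers with `p^μ + 1 = π^u`, then: if `p > 2` then `μ = 1`,
`π = 2` and `u` is prime (so `p` is a Mersenne prime); if `p = 2` and `u > 1`
then `μ = 3`, `π = 3` and `u = 2`; and if `p = 2` and `u = 1` then `μ` is a
power of `2` (so `π` is a Fermat prime). -/
theorem stmt_17 (p q μ u : ℕ) (hp : p.Prime) (hq : q.Prime)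
    (hμ : 0 < μ) (hu : 0 < u) (h : p ^ μ + 1 = q ^ u) :
    (2 < p → μ = 1 ∧ q = 2 ∧ u.Prime) ∧
    (p = 2 → 1 < u → μ = 3 ∧ q = 3 ∧ u = 2) ∧
    (p = 2 → u = 1 → ∃ m : ℕ, μ = 2 ^ m) := by
  refine ⟨fun h2 => ?_, ?_, ?_⟩
  · have hpo : p % 2 = 1 := hp.eq_two_or_odd.resolve_left (by omega)
    have hpow : Odd (p ^ μ) := (Nat.odd_iff.2 hpo).pow
    have hq2 : q = 2 := by
      have : 2 ∣ q ^ u := by rw [← h]; exact (hpow.add_one).two_dvd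
      exact ((Nat.prime_dvd_prime_iff_eq Nat.prime_two hq).1
        (Nat.prime_two.dvd_of_dvd_pow this)).symm
    subst hq2
    have hle : p ≤ p ^ μ := Nat.le_self_pow hμ.ne' p
    have hu1 : u ≠ 1 := by rintro rfl; omega
    have hμo : Odd μ := by
      by_contra hc
      obtain ⟨j, hj⟩ := (Nat.not_odd_iff_even.1 hc).two_dvd
      have h4 : 2 ^ 2 ∣ 2 ^ u := pow_dvd_pow 2 (by omega)
      rw [← h, hj, mul_comm, pow_mul] at h4
      obtain ⟨c, hc⟩ := (Nat.odd_iff.2 hpo).pow (n := j)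
      rw [hc] at h4
      have : (2 * c + 1) ^ 2 + 1 = 4 * (c ^ 2 + c) + 2 := by ring
      omega
    have he := aux_odd p μ u (by omega) hpo hμo h
    have hμ1 : μ = 1 := Nat.pow_right_injective hp.two_le (by simpa using he)
    refine ⟨hμ1, rfl, ?_⟩
    have : (2 ^ u - 1).Prime := by rw [← h, he]; simpa using hp
    exact (Nat.prime_of_pow_sub_one_prime hu1 this).2
  · rintro rfl hu1
    have hqo : q % 2 = 1 := by
      refine hq.eq_two_or_odd.resolve_left ?_
      rintro rfl
      have a1 : 2 ∣ 2 ^ μ := dvd_pow_self 2 hμ.ne'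
      have a2 : 2 ∣ 2 ^ u := dvd_pow_self 2 hu.ne'
      omega
    have hq2 : 2 < q := by have := hq.two_le; omega
    rcases Nat.even_or_odd u with he | ho
    · obtain ⟨v, rfl⟩ := he.two_dvd
      have hv : v ≠ 0 := by omega
      obtain ⟨y, hy⟩ : ∃ y, q ^ v = y + 1 := ⟨q ^ v - 1, by
        have := Nat.pow_pos (n := v) hq.pos; omega⟩
      have hf : 2 ^ μ = y * (y + 2) := by
        rw [mul_comm 2 v, pow_mul, hy] at h
        have : (y + 1) ^ 2 = y * (y + 2) + 1 := by ring
        omega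
      have hqy : q ≤ y + 1 := hy ▸ Nat.le_self_pow hv q
      obtain ⟨a, -, ha⟩ := (Nat.dvd_prime_pow Nat.prime_two).1 (Dvd.intro _ hf.symm)
      obtain ⟨b, -, hb⟩ := (Nat.dvd_prime_pow Nat.prime_two).1 (Dvd.intro_left _ hf.symm)
      have ha1 : a < 2 := by
        by_contra hc
        have hab : 2 < b := by
          by_contra hb'
          have : 2 ^ b ≤ 2 ^ 2 := Nat.pow_le_pow_right (by norm_num) (by omega)
          have : 2 ^ 2 ≤ 2 ^ a := Nat.pow_le_pow_right (by norm_num) (by omega)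
          omega
        have d1 : 2 ^ 2 ∣ 2 ^ a := pow_dvd_pow 2 (by omega)
        have d2 : 2 ^ 2 ∣ 2 ^ b := pow_dvd_pow 2 (by omega)
        omega
      have hy2 : y = 2 := by interval_cases a <;> omega
      subst hy2
      have hq3 : q = 3 := by omega
      subst hq3
      have hv1 : v = 1 := Nat.pow_right_injective (le_refl 2 |>.trans (by norm_num) : 2 ≤ 3)
        (by simpa using hy)
      have : μ = 3 := Nat.pow_right_injective (le_refl 2) (by simpa using hf)
      omega
    · exfalso
      have he := aux_odd2 q u μ hq2 hqo ho h
      have : u = 1 := Nat.pow_right_injective hq.two_le (by simpa using he)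
      omega
  · rintro rfl rfl
    exact Nat.pow_of_pow_add_prime (a := 2) (by norm_num) hμ.ne' (by rw [h]; simpa using hq)
end
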